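/- Let d ≥ 1 and let (q,r) be a Schrödinger-admissible pair: 2 ≤ q, r ≤ ∞, 1/q = (d/2)(1/2 − 1/r), and (q,r,d) ≠ (2,∞,2). Then there exists a constant C > 0 such that for every Schwartz function u₀ : ℝ^d → ℂ, the free Schrödinger evolution u(t,x) := (e^{itΔ}u₀)(x) satisfies the homogeneous Strichartz estimate ‖u‖_{L^q_t L^r_x(ℝ × ℝ^d)} ≤ C ‖u₀‖_{L²(ℝ^d)}, where ‖u‖_{L^q_t L^r_x} := ( ∫_ℝ ‖u(t,·)‖_{L^r(ℝ^d)}^q dt )^{1/q} (with the essential supremum when q = ∞ or r = ∞). -/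

import Mathlib

/-!
The proof is a `TT*` argument for a regularisation of `e^{itΔ}` by the heat flow. For `ε > 0`, the
value at `(t, x)` of `e^{(ε + it)Δ} u₀` is the inner product of `u₀` with an explicit vector of `L²`,
the (conjugated) heat kernel at the complex time `ε + it` centred at `x` (`heatVec`). Inner products
of two such vectors are explicit Gaussians. This gives, uniformly in `ε`, the dispersive decay
`|t - s|^{-d/2}` at distinct times and, at equal times, a convolution kernel of mass one, hence the
energy bound (`isDispersive_heatVec`). The remaining harmonic analysis uses only these two
properties, collected in `IsDispersive`.

For finite exponents, duality (`DualEstimate.strichartz_trunc`) reduces the claim to a bound for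
`‖∫∫ F(t, x) e(t, x) dx dt‖` by `‖F‖` in `L^{q'}_t L^{r'}_x`. At each time `F` is cut into dyadic
layers according to the size of `|F(t, x)|` relative to `‖F(t)‖_{r'}`. On each layer the `L¹` and
`L²` norms are comparable to powers of two times a quantity that is square summable over the layers,
which takes the place of interpolation.

* If `q > 2`, Schur's test sums the layers at fixed times and the Hardy–Littlewood–Sobolev
  inequality `hls` concludes in time (`dualEstimate_interior`).
* If `q = 2`, which forces `d ≥ 3` when `r` is finite, the bilinear form is also cut into dyadic
  shells `|t - s| ~ 2^j`. As in the work of Keel and Tao, the form between layers `k` and `l` on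
  shell `j` has exponential decay in `|k - j| + |l - j|`, by the dispersive bound and two mixed
  energy–dispersive bounds, so that all sums converge (`bform_atoms_le`, `keelTao_sum_le`,
  `dualEstimate_endpoint`).

The pair `(∞, 2)` is the energy estimate (`IsDispersive.energy_estimate`). If `r = ∞` and `q` is
finite, then `d = 1` and `q = 4`; the supremum in space is linearised by a measurable choice of a
point at each time, and `hls` applies along the resulting path (`IsDispersive.sup_estimate`).
Finally `ε → 0`: the regularised evolutions converge pointwise for `t ≠ 0` (`tendsto_heatKer`) and
Fatou's lemma passes the uniform bounds to the limit (`lintegral_eLpNorm_le_of_tendsto`).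
-/

open scoped BigOperators ENNReal
open MeasureTheory Complex

/-- The free Schrödinger propagator `e^{itΔ}u₀`, given by the oscillatory
integral against the Schrödinger kernel for `t ≠ 0` and by `u₀` for `t = 0`. -/
noncomputable def schrodingerProp {d : ℕ} (u₀ : EuclideanSpace ℝ (Fin d) → ℂ)
    (t : ℝ) (x : EuclideanSpace ℝ (Fin d)) : ℂ :=
  if t = 0 then u₀ x
  else (4 * (Real.pi : ℂ) * Complex.I * (t : ℂ)) ^ (-(d : ℂ) / 2) *
    ∫ y : EuclideanSpace ℝ (Fin d),
      Complex.exp (Complex.I * ((‖x - y‖ ^ 2 : ℝ) : ℂ) / (4 * (t : ℂ))) * u₀ y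

/-- The mixed space-time Lebesgue norm `‖u‖_{L^q_t L^r_x}`, with the essential
supremum when `q = ∞` (the inner `L^r` norm already handles `r = ∞`). -/
noncomputable def mixedLpNorm {d : ℕ} (q r : ℝ≥0∞)
    (u : ℝ → EuclideanSpace ℝ (Fin d) → ℂ) : ℝ≥0∞ :=
  if q = ∞ then essSup (fun t => eLpNorm (u t) r volume) volume
  else (∫⁻ t, (eLpNorm (u t) r volume) ^ q.toReal) ^ (1 / q.toReal)

/-! ### The Hardy–Littlewood–Sobolev inequality on the line -/

/-- The kernel `|x|^{-a}` on the line, valued in `[0, ∞]`. -/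
noncomputable def decay (a x : ℝ) : ℝ≥0∞ := ENNReal.ofReal |x| ^ (-a)

lemma measurable_decay (a : ℝ) : Measurable (decay a) := by
  unfold decay; fun_prop

lemma decay_neg (a x : ℝ) : decay a (-x) = decay a x := by simp [decay]

lemma lintegral_comp_abs_eq {g : ℝ → ℝ≥0∞} :
    ∫⁻ x, g |x| = 2 * ∫⁻ x in Set.Ioi 0, g x := by
  have h1 : ∫⁻ x, g |x| = (∫⁻ x in Set.Ioi 0, g |x|) + ∫⁻ x in (Set.Ioi 0)ᶜ, g |x| :=
    (lintegral_add_compl _ measurableSet_Ioi).symm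
  have h2 : ∫⁻ x in Set.Ioi 0, g |x| = ∫⁻ x in Set.Ioi 0, g x :=
    setLIntegral_congr_fun measurableSet_Ioi fun x hx => by
      rw [abs_of_pos hx]
  have h3 : ∫⁻ x in (Set.Ioi (0:ℝ))ᶜ, g |x| = ∫⁻ x in Set.Ioi 0, g |x| := by
    rw [Set.compl_Ioi, setLIntegral_congr (Iio_ae_eq_Iic (a := (0:ℝ))).symm]
    have := (Measure.measurePreserving_neg (volume : Measure ℝ)).setLIntegral_comp_preimage_emb
      (MeasurableEquiv.neg ℝ).measurableEmbedding (fun x => g |x|) (Set.Ioi 0)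
    rw [← this]
    simp
  rw [h1, h3, h2, two_mul]

lemma lintegral_decay_near {a : ℝ} (ha1 : a < 1) {R : ℝ} (hR : 0 < R) :
    ∫⁻ x, Set.indicator {x : ℝ | |x| ≤ R} (decay a) x
      ≤ ENNReal.ofReal (2 / (1 - a) * R ^ (1 - a)) := by
  have h : ∀ x : ℝ, Set.indicator {x : ℝ | |x| ≤ R} (decay a) x =
      (fun y => Set.indicator (Set.Iic R) (fun y => ENNReal.ofReal y ^ (-a)) y) |x| := by
    intro x
    simp [Set.indicator, decay]
  simp_rw [h]
  rw [lintegral_comp_abs_eq (g := fun y => Set.indicator (Set.Iic R) (fun y => ENNReal.ofReal y ^ (-a)) y),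
    lintegral_indicator measurableSet_Iic, Measure.restrict_restrict measurableSet_Iic]
  have hset : Set.Iic R ∩ Set.Ioi 0 = Set.Ioc 0 R := by ext; simp [and_comm]
  rw [hset]
  have h1 : ∫⁻ x in Set.Ioc 0 R, ENNReal.ofReal x ^ (-a)
      = ∫⁻ x in Set.Ioc 0 R, ENNReal.ofReal (x ^ (-a)) :=
    setLIntegral_congr_fun measurableSet_Ioc fun x hx => ENNReal.ofReal_rpow_of_pos hx.1
  have hintg : IntegrableOn (fun x : ℝ => x ^ (-a)) (Set.Ioc 0 R) :=
    (intervalIntegrable_iff_integrableOn_Ioc_of_le hR.le).1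
      (intervalIntegral.intervalIntegrable_rpow' (by linarith))
  rw [h1, ← ofReal_integral_eq_lintegral_ofReal hintg
    ((ae_restrict_iff' measurableSet_Ioc).2 (.of_forall fun x hx => Real.rpow_nonneg hx.1.le _)),
    ← intervalIntegral.integral_of_le hR.le, integral_rpow (Or.inl (by linarith)),
    show (2 : ℝ≥0∞) = ENNReal.ofReal 2 by simp, ← ENNReal.ofReal_mul (by norm_num)]
  apply ENNReal.ofReal_le_ofReal
  rw [Real.zero_rpow (by linarith)]
  apply le_of_eq
  rw [show -a + 1 = 1 - a by ring]; ring

lemma lintegral_decay_far {R : ℝ} (hR : 0 < R) :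
    ∫⁻ x, Set.indicator {x : ℝ | R < |x|} (decay 2) x ≤ ENNReal.ofReal (2 / R) := by
  have h : ∀ x : ℝ, Set.indicator {x : ℝ | R < |x|} (decay 2) x =
      (fun y => Set.indicator (Set.Ioi R) (fun y => ENNReal.ofReal y ^ (-2 : ℝ)) y) |x| := by
    intro x
    simp [Set.indicator, decay]
  simp_rw [h]
  rw [lintegral_comp_abs_eq (g := fun y => Set.indicator (Set.Ioi R) (fun y => ENNReal.ofReal y ^ (-2:ℝ)) y),
    lintegral_indicator measurableSet_Ioi, Measure.restrict_restrict measurableSet_Ioi]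
  have hset : Set.Ioi R ∩ Set.Ioi 0 = Set.Ioi R := by
    ext; simp; intro h; linarith
  rw [hset]
  have h1 : ∫⁻ x in Set.Ioi R, ENNReal.ofReal x ^ (-2:ℝ)
      = ∫⁻ x in Set.Ioi R, ENNReal.ofReal (x ^ (-2:ℝ)) :=
    setLIntegral_congr_fun measurableSet_Ioi fun x hx => ENNReal.ofReal_rpow_of_pos (hR.trans hx)
  rw [h1, ← ofReal_integral_eq_lintegral_ofReal (integrableOn_Ioi_rpow_of_lt (by norm_num) hR)
    ((ae_restrict_iff' measurableSet_Ioi).2 (.of_forall fun x hx =>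
      Real.rpow_nonneg (hR.trans hx).le _)), integral_Ioi_rpow_of_lt (by norm_num) hR,
    show (2 : ℝ≥0∞) = ENNReal.ofReal 2 by simp, ← ENNReal.ofReal_mul (by norm_num)]
  apply ENNReal.ofReal_le_ofReal
  apply le_of_eq
  norm_num
  rw [Real.rpow_neg_one]; ring

/-- The bound for the inner integral in the Hardy–Littlewood–Sobolev inequality `hls`, restricted to
`f t ≤ f s`; the integral is split at the distance `R = ‖f‖_p^p / f(s)^p`. -/
lemma hls_pointwise {p : ℝ} (hp1 : 1 < p) (hp2 : p < 2) {f : ℝ → ℝ≥0∞} (hf : Measurable f)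
    (hA0 : ∫⁻ t, f t ^ p ≠ 0) (hA : ∫⁻ t, f t ^ p ≠ ⊤) (s : ℝ) (hs : f s ≠ ⊤) :
    f s * ∫⁻ t, Set.indicator {t | f t ≤ f s} f t * decay (2 - 2 / p) (s - t)
      ≤ ENNReal.ofReal (2 / (2 / p - 1) + 2) * (∫⁻ t, f t ^ p) ^ (2 / p - 1) * f s ^ p := by
  by_cases hs0 : f s = 0
  · simp [hs0]
  have hp0 : 0 < p := by linarith
  have h2p : 1 < 2 / p := by rw [lt_div_iff₀ hp0]; linarith
  have h1p : 1 / p < 1 := by rw [div_lt_iff₀ hp0]; linarith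
  set A := ∫⁻ t, f t ^ p with hAdef
  obtain ⟨α, hα0, hα⟩ : ∃ α : ℝ, 0 < α ∧ A = ENNReal.ofReal α :=
    ⟨A.toReal, ENNReal.toReal_pos hA0 hA, (ENNReal.ofReal_toReal hA).symm⟩
  obtain ⟨y, hy0, hy⟩ : ∃ y : ℝ, 0 < y ∧ f s = ENNReal.ofReal y :=
    ⟨(f s).toReal, ENNReal.toReal_pos hs0 hs, (ENNReal.ofReal_toReal hs).symm⟩
  set R := α / y ^ p with hRdef
  have hyp : 0 < y ^ p := Real.rpow_pos_of_pos hy0 _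
  have hR : 0 < R := by positivity
  have hb : ∀ t, Set.indicator {t | f t ≤ f s} f t * decay (2 - 2 / p) (s - t) ≤
      f s * Set.indicator {x : ℝ | |x| ≤ R} (decay (2 - 2 / p)) (s - t) +
      f t * Set.indicator {x : ℝ | R < |x|} (decay (2 - 2 / p)) (s - t) := by
    intro t
    by_cases hR' : |s - t| ≤ R
    · simp only [Set.indicator, Set.mem_ofPred_eq, hR', not_lt.2 hR', if_true, if_false, mul_zero,
        add_zero]
      gcongr
      split_ifs with h <;> simp [h]
    · simp only [Set.indicator, Set.mem_ofPred_eq, hR', not_le.1 hR', if_true, if_false, mul_zero,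
        zero_add]
      gcongr
      split_ifs with h <;> simp
  have hmeas1 : Measurable (Set.indicator {x : ℝ | |x| ≤ R} (decay (2 - 2 / p))) :=
    (measurable_decay _).indicator (measurableSet_le (by fun_prop) (by fun_prop))
  have hmeas2 : Measurable (Set.indicator {x : ℝ | R < |x|} (decay (2 - 2 / p))) :=
    (measurable_decay _).indicator (measurableSet_lt (by fun_prop) (by fun_prop))
  have hsub : Measurable fun t : ℝ => s - t := by fun_prop
  have hnear : ∫⁻ t, f s * Set.indicator {x : ℝ | |x| ≤ R} (decay (2 - 2 / p)) (s - t) ≤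
      ENNReal.ofReal y * ENNReal.ofReal (2 / (2 / p - 1) * R ^ (2 / p - 1)) := by
    rw [lintegral_const_mul _ (by exact hmeas1.comp hsub), hy]
    gcongr
    rw [lintegral_sub_left_eq_self (fun t => Set.indicator {x : ℝ | |x| ≤ R} (decay (2 - 2 / p)) t) s]
    have := lintegral_decay_near (a := 2 - 2 / p) (by linarith) hR
    rwa [show 1 - (2 - 2 / p) = 2 / p - 1 by ring] at this
  have hconj : p.HolderConjugate (p / (p - 1)) := Real.HolderConjugate.conjExponent hp1
  have hfar : ∫⁻ t, f t * Set.indicator {x : ℝ | R < |x|} (decay (2 - 2 / p)) (s - t) ≤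
      ENNReal.ofReal (α ^ (1 / p)) * ENNReal.ofReal ((2 / R) ^ (1 - 1 / p)) := by
    refine (ENNReal.lintegral_mul_le_Lp_mul_Lq volume hconj hf.aemeasurable
      (hmeas2.comp hsub).aemeasurable).trans ?_
    rw [← ENNReal.ofReal_rpow_of_pos hα0, ← ENNReal.ofReal_rpow_of_pos (by positivity), ← hα]
    have e1 : 1 / (p / (p - 1)) = 1 - 1 / p := by
      have : p - 1 ≠ 0 := by linarith
      field_simp
    rw [e1]
    have h1 : 0 ≤ 1 - 1 / p := by linarith
    gcongr
    have e2 : ∀ t : ℝ, (Set.indicator {x : ℝ | R < |x|} (decay (2 - 2 / p)) (s - t)) ^ (p / (p - 1))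
        = Set.indicator {x : ℝ | R < |x|} (decay 2) (s - t) := by
      intro t
      have hp' : p - 1 ≠ 0 := by linarith
      have hpos : 0 < p / (p - 1) := div_pos hp0 (by linarith)
      simp only [Set.indicator]
      split_ifs with h
      · rw [decay, decay, ← ENNReal.rpow_mul]
        congr 1
        field_simp
      · rw [ENNReal.zero_rpow_of_pos hpos]
    simp only [Function.comp_def, e2]
    rw [lintegral_sub_left_eq_self (fun t => Set.indicator {x : ℝ | R < |x|} (decay 2) t) s]
    exact lintegral_decay_far hR
  have hreal : y * (y * (2 / (2 / p - 1) * R ^ (2 / p - 1)) + α ^ (1 / p) * (2 / R) ^ (1 - 1 / p))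
      ≤ (2 / (2 / p - 1) + 2) * α ^ (2 / p - 1) * y ^ p := by
    have E1 : y * (y * R ^ (2 / p - 1)) = α ^ (2 / p - 1) * y ^ p := by
      have h : y ^ (2 : ℝ) = y ^ p * (y ^ p) ^ (2 / p - 1) := by
        rw [← Real.rpow_mul hy0.le, ← Real.rpow_add hy0]
        congr 1
        field_simp
        ring
      rw [hRdef, Real.div_rpow hα0.le hyp.le, ← mul_assoc, ← sq, ← Real.rpow_two, h]
      have : (y ^ p) ^ (2 / p - 1) ≠ 0 := (Real.rpow_pos_of_pos hyp _).ne'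
      field_simp
    have E2 : y * (α ^ (1 / p) * (2 / R) ^ (1 - 1 / p)) =
        2 ^ (1 - 1 / p) * (α ^ (2 / p - 1) * y ^ p) := by
      have h : y ^ p = y * (y ^ p) ^ (1 - 1 / p) := by
        nth_rewrite 2 [← Real.rpow_one y]
        rw [← Real.rpow_mul hy0.le, ← Real.rpow_add hy0]
        congr 1
        field_simp
        ring
      have h' : α ^ (1 / p) = α ^ (2 / p - 1) * α ^ (1 - 1 / p) := by
        rw [← Real.rpow_add hα0]; congr 1; ring
      have h3 : (2 / R) = 2 * y ^ p / α := by rw [hRdef]; field_simp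
      rw [h3, Real.div_rpow (by positivity) hα0.le, Real.mul_rpow (by norm_num) hyp.le]
      nth_rewrite 2 [h]
      rw [h']
      have : α ^ (1 - 1 / p) ≠ 0 := (Real.rpow_pos_of_pos hα0 _).ne'
      field_simp
    have E3 : (2 : ℝ) ^ (1 - 1 / p) ≤ 2 := by
      calc (2 : ℝ) ^ (1 - 1 / p) ≤ 2 ^ (1 : ℝ) :=
            Real.rpow_le_rpow_of_exponent_le (by norm_num) (by have : 0 < 1 / p := by positivity
                                                               linarith)
        _ = 2 := by simp
    have hpos : 0 ≤ α ^ (2 / p - 1) * y ^ p := by positivity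
    calc _ = 2 / (2 / p - 1) * (y * (y * R ^ (2 / p - 1)))
          + y * (α ^ (1 / p) * (2 / R) ^ (1 - 1 / p)) := by ring
      _ = 2 / (2 / p - 1) * (α ^ (2 / p - 1) * y ^ p) +
          2 ^ (1 - 1 / p) * (α ^ (2 / p - 1) * y ^ p) := by rw [E1, E2]
      _ ≤ 2 / (2 / p - 1) * (α ^ (2 / p - 1) * y ^ p) +
          2 * (α ^ (2 / p - 1) * y ^ p) := by gcongr
      _ = _ := by ring
  have hc : 0 < 2 / p - 1 := by linarith
  calc f s * ∫⁻ t, Set.indicator {t | f t ≤ f s} f t * decay (2 - 2 / p) (s - t)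
      ≤ f s * ∫⁻ t, (f s * Set.indicator {x : ℝ | |x| ≤ R} (decay (2 - 2 / p)) (s - t) +
      f t * Set.indicator {x : ℝ | R < |x|} (decay (2 - 2 / p)) (s - t)) := by
        gcongr with t
        exact hb t
    _ ≤ ENNReal.ofReal y * (ENNReal.ofReal y * ENNReal.ofReal (2 / (2 / p - 1) * R ^ (2 / p - 1)) +
        ENNReal.ofReal (α ^ (1 / p)) * ENNReal.ofReal ((2 / R) ^ (1 - 1 / p))) := by
        rw [lintegral_add_left (by exact (hmeas1.comp hsub).const_mul _), ← hy]
        rw [← hy] at hnear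
        gcongr
    _ = ENNReal.ofReal (y * (y * (2 / (2 / p - 1) * R ^ (2 / p - 1)) +
        α ^ (1 / p) * (2 / R) ^ (1 - 1 / p))) := by
        rw [← ENNReal.ofReal_mul hy0.le, ← ENNReal.ofReal_mul (by positivity),
          ← ENNReal.ofReal_add (by positivity) (by positivity), ← ENNReal.ofReal_mul hy0.le]
    _ ≤ ENNReal.ofReal ((2 / (2 / p - 1) + 2) * α ^ (2 / p - 1) * y ^ p) :=
        ENNReal.ofReal_le_ofReal hreal
    _ = _ := by
        rw [ENNReal.ofReal_mul (by positivity), ENNReal.ofReal_mul (by positivity), hα, hy,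
          ENNReal.ofReal_rpow_of_pos hα0, ENNReal.ofReal_rpow_of_pos hy0]

/-- The diagonal Hardy–Littlewood–Sobolev inequality on the line. By symmetry it suffices to
integrate over `f t ≤ f s`; there the inner integral is split at `|s - t| = ‖f‖_p^p / f(s)^p`,
using `f t ≤ f s` below the threshold and Hölder's inequality above it. -/
lemma hls {p : ℝ} (hp1 : 1 < p) (hp2 : p < 2) {f : ℝ → ℝ≥0∞} (hf : Measurable f) :
    ∫⁻ s, ∫⁻ t, f s * f t * decay (2 - 2 / p) (s - t)
      ≤ 2 * ENNReal.ofReal (2 / (2 / p - 1) + 2) * (∫⁻ t, f t ^ p) ^ (2 / p) := by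
  have hp0 : 0 < p := by linarith
  have h2p : 1 < 2 / p := by rw [lt_div_iff₀ hp0]; linarith
  have hc : 0 < 2 / p - 1 := by linarith
  by_cases hA0 : ∫⁻ t, f t ^ p = 0
  · have h0 : f =ᵐ[volume] 0 := by
      rw [lintegral_eq_zero_iff (by fun_prop)] at hA0
      filter_upwards [hA0] with t ht
      simpa [ENNReal.rpow_eq_zero_iff, hp0, hp0.le, not_lt.2 hp0.le] using ht
    have : ∫⁻ s, ∫⁻ t, f s * f t * decay (2 - 2 / p) (s - t) = ∫⁻ s : ℝ, 0 := by
      apply lintegral_congr_ae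
      filter_upwards [h0] with s hs
      simp [hs]
    rw [this]; simp
  by_cases hA : ∫⁻ t, f t ^ p = ⊤
  · rw [hA, ENNReal.top_rpow_of_pos (by positivity), ENNReal.mul_top]
    · exact le_top
    · have : 0 < ENNReal.ofReal (2 / (2 / p - 1) + 2) := by
        rw [ENNReal.ofReal_pos]; positivity
      simp [this.ne']
  have hfin : ∀ᵐ s, f s ≠ ⊤ := by
    filter_upwards [ae_lt_top (by fun_prop) hA] with s hs h
    simp [h, hp0] at hs
  have hdm : Measurable fun z : ℝ × ℝ => decay (2 - 2 / p) (z.1 - z.2) :=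
    (measurable_decay _).comp (by fun_prop)
  have hind : Measurable fun z : ℝ × ℝ => Set.indicator {t | f t ≤ f z.1} f z.2 := by
    have : (fun z : ℝ × ℝ => Set.indicator {t | f t ≤ f z.1} f z.2) =
      Set.indicator {z : ℝ × ℝ | f z.2 ≤ f z.1} (fun z => f z.2) := by
      ext z; simp [Set.indicator]
    rw [this]
    exact (hf.comp measurable_snd).indicator
      (measurableSet_le (hf.comp measurable_snd) (hf.comp measurable_fst))
  set J : ℝ × ℝ → ℝ≥0∞ := fun z =>
    f z.1 * (Set.indicator {t | f t ≤ f z.1} f z.2 * decay (2 - 2 / p) (z.1 - z.2)) with hJ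
  have hJm : Measurable J := (hf.comp measurable_fst).mul (hind.mul hdm)
  have hsplit : ∀ s t, f s * f t * decay (2 - 2 / p) (s - t) ≤ J (s, t) + J (t, s) := by
    intro s t
    rcases le_total (f t) (f s) with h | h
    · refine le_trans ?_ le_self_add
      simp [hJ, Set.indicator, h, mul_assoc]
    · refine le_trans ?_ le_add_self
      simp only [hJ, Set.indicator, h, Set.mem_ofPred_eq, if_true]
      rw [← decay_neg _ (s - t), neg_sub, ← mul_assoc, mul_comm (f s)]
  have hbound : ∫⁻ s, ∫⁻ t, J (s, t) ≤ ENNReal.ofReal (2 / (2 / p - 1) + 2) *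
      (∫⁻ t, f t ^ p) ^ (2 / p) := by
    calc ∫⁻ s, ∫⁻ t, J (s, t)
        ≤ ∫⁻ s, ENNReal.ofReal (2 / (2 / p - 1) + 2) * (∫⁻ t, f t ^ p) ^ (2 / p - 1) * f s ^ p := by
          apply lintegral_mono_ae
          filter_upwards [hfin] with s hs
          refine le_trans (le_of_eq ?_) (hls_pointwise hp1 hp2 hf hA0 hA s hs)
          rw [← lintegral_const_mul]
          exact (hind.mul hdm).comp (measurable_const.prodMk measurable_id)
      _ = _ := by
          rw [lintegral_const_mul _ (by fun_prop), mul_assoc]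
          congr 1
          nth_rewrite 2 [← ENNReal.rpow_one (∫⁻ t, f t ^ p)]
          rw [← ENNReal.rpow_add _ _ hA0 hA]
          congr 1; ring
  have hswap : ∫⁻ s, ∫⁻ t, J (t, s) = ∫⁻ s, ∫⁻ t, J (s, t) :=
    lintegral_lintegral_swap (by exact (hJm.comp measurable_swap).aemeasurable)
  calc ∫⁻ s, ∫⁻ t, f s * f t * decay (2 - 2 / p) (s - t)
      ≤ ∫⁻ s, ∫⁻ t, (J (s, t) + J (t, s)) := by gcongr with s t; exact hsplit s t
    _ = (∫⁻ s, ∫⁻ t, J (s, t)) + ∫⁻ s, ∫⁻ t, J (t, s) := by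
        rw [← lintegral_add_left (hJm.lintegral_prod_right')]
        congr 1; ext s
        rw [lintegral_add_left (by exact hJm.comp (measurable_const.prodMk measurable_id))]
    _ ≤ _ := by rw [hswap, ← two_mul, mul_assoc]; gcongr

/-! ### Dyadic time shells and the bilinear form -/

lemma two_rpow_add (x y : ℝ) : (2 : ℝ≥0∞) ^ (x + y) = 2 ^ x * 2 ^ y :=
  ENNReal.rpow_add _ _ (by norm_num) (by norm_num)

lemma two_rpow_mono {x y : ℝ} (h : x ≤ y) : (2 : ℝ≥0∞) ^ x ≤ 2 ^ y :=
  ENNReal.rpow_le_rpow_of_exponent_le (by norm_num) h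

lemma two_rpow_ne_top (x : ℝ) : (2 : ℝ≥0∞) ^ x ≠ ⊤ :=
  ENNReal.rpow_ne_top_of_ne_zero (by norm_num) (by norm_num)

lemma two_rpow_ne_zero (x : ℝ) : (2 : ℝ≥0∞) ^ x ≠ 0 := by
  simp [ENNReal.rpow_eq_zero_iff]

lemma ofReal_two_rpow (x : ℝ) : ENNReal.ofReal ((2 : ℝ) ^ x) = 2 ^ x := by
  rw [← ENNReal.ofReal_rpow_of_pos (by norm_num)]; simp

lemma ennreal_mul_le_sq_add_sq (x y : ℝ≥0∞) : x * y ≤ x ^ 2 + y ^ 2 := by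
  rcases le_total x y with h | h
  · calc x * y ≤ y * y := by gcongr
      _ ≤ _ := by rw [← sq]; exact le_add_self
  · calc x * y ≤ x * x := by gcongr
      _ ≤ _ := by rw [← sq]; exact le_self_add

/-- The two-sided geometric series `∑_{n ∈ ℤ} 2^{-γ|n|}`. -/
noncomputable def geomSum (γ : ℝ) : ℝ≥0∞ := ∑' n : ℤ, (2 : ℝ≥0∞) ^ (-γ * |(n : ℝ)|)

lemma geomSum_ne_top {γ : ℝ} (hγ : 0 < γ) : geomSum γ ≠ ⊤ := by
  have hr1 : (2 : ℝ) ^ (-γ) < 1 := Real.rpow_lt_one_of_one_lt_of_neg (by norm_num) (by linarith)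
  have hr0 : 0 ≤ (2 : ℝ) ^ (-γ) := by positivity
  have hs : Summable fun n : ℤ => (2 : ℝ) ^ (-γ * |(n : ℝ)|) := by
    apply Summable.of_nat_of_neg
    · refine (summable_geometric_of_lt_one hr0 hr1).congr fun n => ?_
      rw [← Real.rpow_natCast, ← Real.rpow_mul (by norm_num)]
      simp
    · refine (summable_geometric_of_lt_one hr0 hr1).congr fun n => ?_
      rw [← Real.rpow_natCast, ← Real.rpow_mul (by norm_num)]
      simp
  have : geomSum γ = ∑' n : ℤ, ENNReal.ofReal ((2 : ℝ) ^ (-γ * |(n : ℝ)|)) := by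
    simp_rw [ofReal_two_rpow]; rfl
  rw [this]
  exact hs.tsum_ofReal_ne_top

/-- The series `∑_n 2^{-γ|n - x|}` for real `x`, compared with its shift by the integer `⌊x⌋`. -/
lemma geomSum_shift {γ : ℝ} (hγ : 0 < γ) (x : ℝ) :
    ∑' n : ℤ, (2 : ℝ≥0∞) ^ (-γ * |(n : ℝ) - x|) ≤ 2 ^ γ * geomSum γ := by
  rw [geomSum, ← ENNReal.tsum_mul_left,
    ← (Equiv.subRight ⌊x⌋).tsum_eq fun n : ℤ => (2 : ℝ≥0∞) ^ γ * 2 ^ (-γ * |(n : ℝ)|)]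
  refine ENNReal.tsum_le_tsum fun n => ?_
  rw [← two_rpow_add]
  apply two_rpow_mono
  have h1 : |((Equiv.subRight ⌊x⌋ n : ℤ) : ℝ)| ≤ |(n : ℝ) - x| + 1 := by
    simp only [Equiv.subRight_apply, Int.cast_sub]
    calc |(n : ℝ) - ⌊x⌋| = |((n : ℝ) - x) + (x - ⌊x⌋)| := by ring_nf
      _ ≤ |(n : ℝ) - x| + |x - ⌊x⌋| := abs_add_le _ _
      _ ≤ |(n : ℝ) - x| + 1 := by
        gcongr
        rw [abs_of_nonneg (by linarith [Int.floor_le x])]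
        linarith [Int.lt_floor_add_one x]
  nlinarith

section Hilbert

set_option linter.unusedSectionVars false

variable {V : Type*} [NormedAddCommGroup V] [InnerProductSpace ℂ V] [CompleteSpace V]

lemma enorm_inner_integral_left_le {α : Type*} [MeasurableSpace α] {μ : Measure α} {p : α → V}
    (hp : Integrable p μ) (v : V) :
    ‖inner ℂ (∫ s, p s ∂μ) v‖ₑ ≤ ∫⁻ s, ‖inner ℂ (p s) v‖ₑ ∂μ := by
  have h : ‖inner ℂ (∫ s, p s ∂μ) v‖ₑ = ‖inner ℂ v (∫ s, p s ∂μ)‖ₑ := by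
    rw [← ofReal_norm, ← ofReal_norm, norm_inner_symm]
  rw [h, ← integral_inner hp]
  refine (enorm_integral_le_lintegral_enorm _).trans (le_of_eq ?_)
  congr 1; ext s
  rw [← ofReal_norm, ← ofReal_norm, norm_inner_symm]

lemma enorm_inner_integral_integral_le {α β : Type*} [MeasurableSpace α] [MeasurableSpace β]
    {μ : Measure α} {ν : Measure β} {p : α → V} {g : β → V}
    (hp : Integrable p μ) (hg : Integrable g ν) :
    ‖inner ℂ (∫ s, p s ∂μ) (∫ t, g t ∂ν)‖ₑ ≤ ∫⁻ s, ∫⁻ t, ‖inner ℂ (p s) (g t)‖ₑ ∂ν ∂μ := by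
  refine (enorm_inner_integral_left_le hp _).trans ?_
  gcongr with s
  rw [← integral_inner hg]
  exact enorm_integral_le_lintegral_enorm _

lemma enorm_sq_eq_inner (v : V) : ‖v‖ₑ ^ 2 = ‖inner ℂ v v‖ₑ := by
  rw [← ofReal_norm, ← ofReal_norm, ← ENNReal.ofReal_pow (norm_nonneg _)]
  congr 1
  rw [inner_self_eq_norm_sq_to_K]
  simp

/-- Bilinear `TT*` bound followed by the Hardy–Littlewood–Sobolev inequality: a curve in a Hilbert
space whose Gram kernel decays like `|s - t|^{-(2 - 2/m)}` has an integral controlled in `L^m`. -/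
lemma enorm_integral_sq_le_of_decay {m : ℝ} (hm1 : 1 < m) (hm2 : m < 2) {p : ℝ → V}
    (hp : Integrable p) {φ : ℝ → ℝ≥0∞} (hφ : Measurable φ) (K : ℝ≥0∞)
    (h : ∀ s t, s ≠ t → ‖inner ℂ (p s) (p t)‖ₑ ≤ K * (φ s * φ t * decay (2 - 2 / m) (s - t))) :
    ‖∫ t, p t‖ₑ ^ 2 ≤ K * (2 * ENNReal.ofReal (2 / (2 / m - 1) + 2) *
      (∫⁻ t, φ t ^ m) ^ (2 / m)) := by
  rw [enorm_sq_eq_inner]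
  refine (enorm_inner_integral_integral_le hp hp).trans ?_
  have hd : Measurable fun z : ℝ × ℝ => decay (2 - 2 / m) (z.1 - z.2) :=
    (measurable_decay _).comp (by fun_prop)
  have hm : Measurable fun z : ℝ × ℝ => φ z.1 * φ z.2 * decay (2 - 2 / m) (z.1 - z.2) := by
    fun_prop
  calc ∫⁻ s, ∫⁻ t, ‖inner ℂ (p s) (p t)‖ₑ
      ≤ ∫⁻ s, ∫⁻ t, K * (φ s * φ t * decay (2 - 2 / m) (s - t)) := by
        refine lintegral_mono fun s => lintegral_mono_ae ?_
        have : ∀ᵐ t : ℝ, t ≠ s := by simp [ae_iff]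
        filter_upwards [this] with t ht
        exact h s t ht.symm
    _ = K * ∫⁻ s, ∫⁻ t, φ s * φ t * decay (2 - 2 / m) (s - t) := by
        rw [← lintegral_const_mul _ (hm.lintegral_prod_right')]
        congr 1; ext s
        rw [lintegral_const_mul]
        exact hm.comp (measurable_const.prodMk measurable_id)
    _ ≤ _ := by gcongr; exact hls hm1 hm2 hφ

/-- The set of reals of dyadic size `2^j`. -/
def shell (j : ℤ) : Set ℝ := {x | (2 : ℝ) ^ (j : ℝ) ≤ |x| ∧ |x| < (2 : ℝ) ^ ((j : ℝ) + 1)}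

lemma measurableSet_shell (j : ℤ) : MeasurableSet (shell j) := by
  have : shell j = {x : ℝ | (2 : ℝ) ^ (j : ℝ) ≤ |x|} ∩ {x : ℝ | |x| < (2 : ℝ) ^ ((j : ℝ) + 1)} := by
    ext; simp [shell]
  rw [this]
  exact (measurableSet_le (by fun_prop) (by fun_prop)).inter
    (measurableSet_lt (by fun_prop) (by fun_prop))

lemma shell_neg {j : ℤ} {x : ℝ} : -x ∈ shell j ↔ x ∈ shell j := by simp [shell]

lemma volume_shell_le (j : ℤ) : volume (shell j) ≤ 4 * 2 ^ (j : ℝ) := by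
  calc volume (shell j) ≤ volume (Set.Ioo (-((2 : ℝ) ^ ((j : ℝ) + 1))) (2 ^ ((j : ℝ) + 1))) := by
        apply measure_mono
        intro x hx
        exact abs_lt.1 hx.2
    _ = 4 * 2 ^ (j : ℝ) := by
        rw [Real.volume_Ioo, show (2 : ℝ) ^ ((j : ℝ) + 1) - -(2 : ℝ) ^ ((j : ℝ) + 1) = 4 * 2 ^ (j:ℝ) by
          rw [Real.rpow_add (by norm_num)]; simp; ring, ENNReal.ofReal_mul (by norm_num),
          ofReal_two_rpow]
        simp

lemma decay_shell_le {σ : ℝ} (hσ : 0 ≤ σ) {j : ℤ} {x : ℝ} (hx : x ∈ shell j) :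
    decay σ x ≤ 2 ^ (-(j * σ)) := by
  rw [decay, ENNReal.rpow_neg, ENNReal.rpow_neg, ENNReal.inv_le_inv, ENNReal.rpow_mul]
  gcongr
  rw [← ofReal_two_rpow]
  exact ENNReal.ofReal_le_ofReal hx.1

lemma iUnion_shell : ⋃ j, shell j = {0}ᶜ := by
  ext x
  simp only [Set.mem_iUnion, Set.mem_compl_iff, Set.mem_singleton_iff]
  constructor
  · rintro ⟨j, hj⟩ rfl
    have := hj.1
    simp at this
    exact absurd this (not_le.2 (by positivity))
  · intro hx
    obtain ⟨n, hn⟩ := exists_mem_Ico_zpow (abs_pos.2 hx) (one_lt_two : (1 : ℝ) < 2)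
    refine ⟨n, ?_, ?_⟩
    · simpa using hn.1
    · have := hn.2
      rwa [← Real.rpow_intCast, Int.cast_add, Int.cast_one] at this

lemma disjoint_shell : Pairwise (Function.onFun Disjoint shell) := by
  have key : ∀ i j : ℤ, i < j → Disjoint (shell i) (shell j) := by
    intro i j hij
    rw [Set.disjoint_left]
    intro x hi hj
    have h1 : (2 : ℝ) ^ ((i : ℝ) + 1) ≤ 2 ^ (j : ℝ) := by
      apply Real.rpow_le_rpow_of_exponent_le (by norm_num)
      exact_mod_cast hij
    linarith [hi.2, hj.1]
  intro i j hij
  rcases lt_or_gt_of_ne hij with h | h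
  · exact key i j h
  · exact (key j i h).symm

/-- Pairs of times whose distance has dyadic size `2^j`. -/
def shellPairs (j : ℤ) : Set (ℝ × ℝ) := {z | z.1 - z.2 ∈ shell j}

lemma measurableSet_shellPairs (j : ℤ) : MeasurableSet (shellPairs j) :=
  (measurable_fst.sub measurable_snd) (measurableSet_shell j)

/-- The part of `⟪∫ p, ∫ g⟫` coming from times at distance about `2^j`. -/
noncomputable def bform (j : ℤ) (p g : ℝ → V) : ℂ :=
  ∫ z in shellPairs j, inner ℂ (p z.1) (g z.2)

lemma integrable_inner_prod {p g : ℝ → V} (hp : Integrable p) (hg : Integrable g) :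
    Integrable (fun z : ℝ × ℝ => inner ℂ (p z.1) (g z.2)) := by
  refine Integrable.mono' (hp.norm.mul_prod hg.norm) ?_ (.of_forall fun z => ?_)
  · exact hp.aestronglyMeasurable.comp_fst.inner hg.aestronglyMeasurable.comp_snd
  · exact norm_inner_le_norm _ _

lemma inner_integral_integral {p g : ℝ → V} (hp : Integrable p) (hg : Integrable g) :
    inner ℂ (∫ s, p s) (∫ t, g t) = ∫ z : ℝ × ℝ, inner ℂ (p z.1) (g z.2) := by
  rw [Measure.volume_eq_prod, integral_prod _ (integrable_inner_prod hp hg), ← inner_conj_symm,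
    ← integral_inner hp, ← integral_conj]
  congr 1; ext s
  rw [inner_conj_symm]
  exact (integral_inner hg _).symm

lemma enorm_inner_le_tsum_bform {p g : ℝ → V} (hp : Integrable p) (hg : Integrable g) :
    ‖inner ℂ (∫ s, p s) (∫ t, g t)‖ₑ ≤ ∑' j, ‖bform j p g‖ₑ := by
  have hU : (⋃ j, shellPairs j) =ᵐ[volume] Set.univ := by
    have h1 : (⋃ j, shellPairs j) = {z : ℝ × ℝ | z.1 - z.2 = 0}ᶜ := by
      have := iUnion_shell
      ext z
      have := Set.ext_iff.1 this (z.1 - z.2)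
      simpa [shellPairs] using this
    rw [h1, ae_eq_univ, compl_compl, Measure.volume_eq_prod,
      Measure.measure_prod_null (measurableSet_eq_fun (by fun_prop) (by fun_prop))]
    refine .of_forall fun s => ?_
    have : Prod.mk s ⁻¹' {z : ℝ × ℝ | z.1 - z.2 = 0} = {s} := by
      ext t; simp [sub_eq_zero, eq_comm]
    simp [this]
  have hs := hasSum_integral_iUnion (μ := volume) (fun j => measurableSet_shellPairs j)
    (by
      intro i j hij
      have := disjoint_shell hij
      rw [Function.onFun, Set.disjoint_left] at this ⊢
      intro z hz hz'
      exact this hz hz')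
    ((integrable_inner_prod hp hg).integrableOn)
  rw [setIntegral_congr_set hU, setIntegral_univ, ← inner_integral_integral hp hg] at hs
  rw [← hs.tsum_eq]
  exact enorm_tsum_le_tsum_enorm

end Hilbert

/-! ### Bounds for one time shell -/

section Hilbert

set_option linter.unusedSectionVars false

variable {V : Type*} [NormedAddCommGroup V] [InnerProductSpace ℂ V] [CompleteSpace V]

lemma ne_of_mem_shellPairs {j : ℤ} {z : ℝ × ℝ} (hz : z ∈ shellPairs j) : z.1 ≠ z.2 := by
  intro h
  have h1 : z.1 - z.2 ∈ ⋃ j, shell j := Set.mem_iUnion.2 ⟨j, hz⟩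
  rw [iUnion_shell] at h1
  exact h1 (by simp [h])

lemma bform_symm (j : ℤ) (p g : ℝ → V) : ‖bform j p g‖ₑ = ‖bform j g p‖ₑ := by
  have h := (Measure.measurePreserving_swap (μ := (volume : Measure ℝ))
    (ν := (volume : Measure ℝ))).setIntegral_preimage_emb
    MeasurableEquiv.prodComm.measurableEmbedding (fun z => inner ℂ (p z.1) (g z.2)) (shellPairs j)
  have hpre : Prod.swap ⁻¹' (shellPairs j) = shellPairs j := by
    ext z
    change z.2 - z.1 ∈ shell j ↔ z.1 - z.2 ∈ shell j
    rw [← shell_neg, neg_sub]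
  rw [hpre, ← Measure.volume_eq_prod] at h
  have h2 : bform j p g = (starRingEnd ℂ) (bform j g p) := by
    rw [bform, bform, ← h, ← integral_conj]
    congr 1; ext z
    simp
  rw [h2, ← ofReal_norm, ← ofReal_norm, RCLike.norm_conj]

lemma lintegral_shellPairs_fst (j : ℤ) {F : ℝ → ℝ≥0∞} (hF : Measurable F) :
    ∫⁻ z in shellPairs j, F z.1 ≤ 4 * 2 ^ (j : ℝ) * ∫⁻ s, F s := by
  rw [← lintegral_indicator (measurableSet_shellPairs j), Measure.volume_eq_prod,
    lintegral_prod _ (by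
      exact ((hF.comp measurable_fst).indicator (measurableSet_shellPairs j)).aemeasurable),
    ← lintegral_const_mul _ hF]
  gcongr with s
  have h : ∀ t, (shellPairs j).indicator (fun z : ℝ × ℝ => F z.1) (s, t) =
      F s * (shell j).indicator 1 (s - t) := by
    intro t; by_cases hs : s - t ∈ shell j <;> simp [Set.indicator, shellPairs, hs]
  simp_rw [h]
  have hm : Measurable ((shell j).indicator (1 : ℝ → ℝ≥0∞)) :=
    measurable_one.indicator (measurableSet_shell j)
  rw [lintegral_const_mul _ (by fun_prop),
    lintegral_sub_left_eq_self (fun t => (shell j).indicator (1 : ℝ → ℝ≥0∞) t) s,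
    lintegral_indicator_one (measurableSet_shell j), mul_comm]
  gcongr
  exact volume_shell_le j

lemma lintegral_shellPairs_snd (j : ℤ) {F : ℝ → ℝ≥0∞} (hF : Measurable F) :
    ∫⁻ z in shellPairs j, F z.2 ≤ 4 * 2 ^ (j : ℝ) * ∫⁻ s, F s := by
  have h := (Measure.measurePreserving_swap (μ := (volume : Measure ℝ))
    (ν := (volume : Measure ℝ))).setLIntegral_comp_preimage_emb
    MeasurableEquiv.prodComm.measurableEmbedding (fun z => F z.1) (shellPairs j)
  have hpre : Prod.swap ⁻¹' (shellPairs j) = shellPairs j := by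
    ext z
    change z.2 - z.1 ∈ shell j ↔ z.1 - z.2 ∈ shell j
    rw [← shell_neg, neg_sub]
  rw [hpre, ← Measure.volume_eq_prod] at h
  simp only [Prod.fst_swap] at h
  rw [h]
  exact lintegral_shellPairs_fst j hF

/-- The `L¹ × L¹` bound for a dyadic time shell, from pure dispersion. -/
lemma bform_le_dispersive {σ : ℝ} (hσ : 0 ≤ σ) (j : ℤ) {p g : ℝ → V} {c c' : ℝ → ℝ≥0∞}
    (hc : Measurable c) (hc' : Measurable c') (K : ℝ≥0∞)
    (h : ∀ s t, s ≠ t → ‖inner ℂ (p s) (g t)‖ₑ ≤ K * (c s * c' t) * decay σ (s - t)) :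
    ‖bform j p g‖ₑ ≤ 4 * K * 2 ^ ((j : ℝ) - j * σ) * ((∫⁻ t, c t ^ 2) + ∫⁻ t, c' t ^ 2) := by
  calc ‖bform j p g‖ₑ ≤ ∫⁻ z in shellPairs j, ‖inner ℂ (p z.1) (g z.2)‖ₑ :=
        enorm_integral_le_lintegral_enorm _
    _ ≤ ∫⁻ z in shellPairs j, K * 2 ^ (-(j * σ)) * (c z.1 ^ 2 + c' z.2 ^ 2) := by
        apply setLIntegral_mono (by fun_prop)
        intro z hz
        refine (h z.1 z.2 (ne_of_mem_shellPairs hz)).trans ?_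
        rw [mul_right_comm]
        gcongr
        · exact decay_shell_le hσ hz
        · exact ennreal_mul_le_sq_add_sq _ _
    _ = K * 2 ^ (-(j * σ)) * ((∫⁻ z in shellPairs j, c z.1 ^ 2) +
          ∫⁻ z in shellPairs j, c' z.2 ^ 2) := by
        rw [lintegral_const_mul _ (by fun_prop), lintegral_add_left (by fun_prop)]
    _ ≤ K * 2 ^ (-(j * σ)) * (4 * 2 ^ (j : ℝ) * (∫⁻ s, c s ^ 2) +
          4 * 2 ^ (j : ℝ) * ∫⁻ s, c' s ^ 2) := by
        gcongr
        · exact lintegral_shellPairs_fst j (F := fun s => c s ^ 2) (by fun_prop)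
        · exact lintegral_shellPairs_snd j (F := fun s => c' s ^ 2) (by fun_prop)
    _ = _ := by
        rw [sub_eq_add_neg, two_rpow_add]
        ring

/-- The integral of `p` over the times at distance about `2^j` from `t`. The dispersive bound with
the integrable singularity `|s - s'|^{-1/2}` and Schur's test give a gain of `2^{j/2}`. -/
lemma enorm_setIntegral_shell_le (j : ℤ) {p : ℝ → V} (hp : Integrable p) {c : ℝ → ℝ≥0∞}
    (hc : Measurable c) (K : ℝ≥0∞)
    (h : ∀ s s', s ≠ s' → ‖inner ℂ (p s) (p s')‖ₑ ≤ K * (c s * c s') * decay (1 / 2) (s - s'))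
    (t : ℝ) :
    ‖∫ s in {s | s - t ∈ shell j}, p s‖ₑ ^ 2 ≤
      16 * K * 2 ^ ((j : ℝ) / 2) * ∫⁻ s in {s | s - t ∈ shell j}, c s ^ 2 := by
  set I := {s | s - t ∈ shell j} with hI
  have hIm : MeasurableSet I := (measurable_id.sub_const t) (measurableSet_shell j)
  have hdm : Measurable fun z : ℝ × ℝ => decay (1 / 2) (z.1 - z.2) :=
    (measurable_decay _).comp (by fun_prop)
  have hmF : Measurable fun z : ℝ × ℝ => c z.1 ^ 2 * decay (1 / 2) (z.1 - z.2) := by fun_prop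
  have hmG : Measurable fun z : ℝ × ℝ => c z.2 ^ 2 * decay (1 / 2) (z.1 - z.2) := by fun_prop
  have hk : ∀ s ∈ I, ∫⁻ s' in I, decay (1 / 2) (s - s') ≤ 8 * 2 ^ ((j : ℝ) / 2) := by
    intro s hs
    have hR : (0 : ℝ) < 2 ^ ((j : ℝ) + 2) := by positivity
    calc ∫⁻ s' in I, decay (1 / 2) (s - s')
        ≤ ∫⁻ s', Set.indicator {x : ℝ | |x| ≤ 2 ^ ((j : ℝ) + 2)} (decay (1 / 2)) (s - s') := by
          rw [← lintegral_indicator hIm]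
          apply lintegral_mono
          intro s'
          apply Set.indicator_apply_le
          intro hs'
          rw [Set.indicator_of_mem]
          change |s - s'| ≤ _
          have h1 := hs.2
          have h2 : |s' - t| < 2 ^ ((j : ℝ) + 1) := hs'.2
          have h3 : (2 : ℝ) ^ ((j : ℝ) + 2) = 2 ^ ((j : ℝ) + 1) + 2 ^ ((j : ℝ) + 1) := by
            rw [show (j : ℝ) + 2 = (j + 1) + 1 by ring, Real.rpow_add (by norm_num)
              ((j : ℝ) + 1) 1]; simp; ring
          calc |s - s'| = |(s - t) - (s' - t)| := by ring_nf
            _ ≤ |s - t| + |s' - t| := abs_sub _ _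
            _ ≤ _ := by rw [h3]; exact add_le_add h1.le h2.le
      _ = ∫⁻ x, Set.indicator {x : ℝ | |x| ≤ 2 ^ ((j : ℝ) + 2)} (decay (1 / 2)) x :=
          lintegral_sub_left_eq_self
            (fun x => Set.indicator {x : ℝ | |x| ≤ 2 ^ ((j : ℝ) + 2)} (decay (1 / 2)) x) s
      _ ≤ _ := lintegral_decay_near (by norm_num) hR
      _ = 8 * 2 ^ ((j : ℝ) / 2) := by
          rw [← Real.rpow_mul (by norm_num), show ((j : ℝ) + 2) * (1 - 1 / 2) = j / 2 + 1 by ring,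
            Real.rpow_add (by norm_num), show (2 : ℝ) / (1 - 1 / 2) * (2 ^ ((j : ℝ) / 2) * 2 ^ (1 : ℝ))
              = 8 * 2 ^ ((j : ℝ) / 2) by simp; ring, ENNReal.ofReal_mul (by norm_num),
            ofReal_two_rpow]
          simp
  have hA : ∫⁻ s in I, ∫⁻ s' in I, c s ^ 2 * decay (1 / 2) (s - s') ≤
      8 * 2 ^ ((j : ℝ) / 2) * ∫⁻ s in I, c s ^ 2 := by
    rw [← lintegral_const_mul _ (by fun_prop)]
    apply setLIntegral_mono (by fun_prop)
    intro s hs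
    rw [lintegral_const_mul _ (by exact hdm.comp (measurable_const.prodMk measurable_id)), mul_comm]
    gcongr
    exact hk s hs
  have hB : ∫⁻ s in I, ∫⁻ s' in I, c s' ^ 2 * decay (1 / 2) (s - s') =
      ∫⁻ s in I, ∫⁻ s' in I, c s ^ 2 * decay (1 / 2) (s - s') := by
    rw [lintegral_lintegral_swap (by exact hmG.aemeasurable)]
    congr 1; ext s; congr 1; ext s'
    rw [← decay_neg, neg_sub]
  rw [enorm_sq_eq_inner]
  calc _ ≤ ∫⁻ s in I, ∫⁻ s' in I, ‖inner ℂ (p s) (p s')‖ₑ :=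
        enorm_inner_integral_integral_le hp.integrableOn hp.integrableOn
    _ ≤ ∫⁻ s in I, ∫⁻ s' in I, K * (c s ^ 2 * decay (1 / 2) (s - s') +
          c s' ^ 2 * decay (1 / 2) (s - s')) := by
        refine lintegral_mono fun s => lintegral_mono_ae ?_
        have : ∀ᵐ t : ℝ ∂(volume.restrict I), t ≠ s := ae_restrict_of_ae (by simp [ae_iff])
        filter_upwards [this] with s' hs'
        refine (h s s' hs'.symm).trans ?_
        rw [← add_mul, mul_assoc]
        gcongr
        exact ennreal_mul_le_sq_add_sq _ _
    _ = K * ((∫⁻ s in I, ∫⁻ s' in I, c s ^ 2 * decay (1 / 2) (s - s')) +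
          ∫⁻ s in I, ∫⁻ s' in I, c s' ^ 2 * decay (1 / 2) (s - s')) := by
        rw [← lintegral_add_left (by exact hmF.lintegral_prod_right'),
          ← lintegral_const_mul _ (by
            exact hmF.lintegral_prod_right'.add hmG.lintegral_prod_right')]
        congr 1; ext s
        rw [lintegral_const_mul _ (by
          exact (hmF.add hmG).comp (measurable_const.prodMk measurable_id)),
          lintegral_add_left (by exact hmF.comp (measurable_const.prodMk measurable_id))]
    _ ≤ K * (8 * 2 ^ ((j : ℝ) / 2) * (∫⁻ s in I, c s ^ 2) +
          8 * 2 ^ ((j : ℝ) / 2) * ∫⁻ s in I, c s ^ 2) := by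
        rw [hB]; gcongr
    _ = _ := by ring

lemma bform_eq_iterated (j : ℤ) {p g : ℝ → V} (hp : Integrable p) (hg : Integrable g) :
    bform j p g = ∫ t, inner ℂ (∫ s in {s | s - t ∈ shell j}, p s) (g t) := by
  rw [bform, ← integral_indicator (measurableSet_shellPairs j), Measure.volume_eq_prod,
    integral_prod_symm _ ((integrable_inner_prod hp hg).indicator (measurableSet_shellPairs j))]
  congr 1; ext t
  have hIm : MeasurableSet {s | s - t ∈ shell j} :=
    (measurable_id.sub_const t) (measurableSet_shell j)
  rw [← inner_conj_symm, ← integral_inner hp.integrableOn, ← integral_conj,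
    ← integral_indicator hIm]
  congr 1; ext s
  by_cases hs : s - t ∈ shell j <;> simp [Set.indicator, shellPairs, hs]

/-- The off-diagonal bound for a dyadic time shell: dispersion in one argument, energy in the
other. -/
lemma bform_le_mixed (j : ℤ) {p g : ℝ → V} (hp : Integrable p) (hg : Integrable g)
    {c c' : ℝ → ℝ≥0∞} (hc : Measurable c) (hc' : Measurable c') (K B : ℝ≥0∞)
    (h : ∀ s s', s ≠ s' →
      ‖inner ℂ (p s) (p s')‖ₑ ≤ K ^ 2 * (c s * c s') * decay (1 / 2) (s - s'))
    (hgB : ∀ t, ‖g t‖ₑ ≤ B * c' t) :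
    ‖bform j p g‖ₑ ≤ 16 * (K * B) * 2 ^ (3 * (j : ℝ) / 4) *
      ((∫⁻ t, c t ^ 2) + ∫⁻ t, c' t ^ 2) := by
  have hcI : Measurable fun t => ∫⁻ s in {s | s - t ∈ shell j}, c s ^ 2 := by
    have hm : Measurable ((shellPairs j).indicator fun z : ℝ × ℝ => c z.1 ^ 2) :=
      ((hc.comp measurable_fst).pow_const 2).indicator (measurableSet_shellPairs j)
    have := hm.lintegral_prod_left' (μ := volume)
    convert! this using 2 with t
    have hIm : MeasurableSet {s | s - t ∈ shell j} :=
      (measurable_id.sub_const t) (measurableSet_shell j)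
    rw [← lintegral_indicator hIm]
    rfl
  have hcI2 : ∫⁻ t, ∫⁻ s in {s | s - t ∈ shell j}, c s ^ 2 ≤ 4 * 2 ^ (j : ℝ) * ∫⁻ s, c s ^ 2 := by
    refine le_trans (le_of_eq ?_) (lintegral_shellPairs_fst j (F := fun s => c s ^ 2) (by fun_prop))
    rw [← lintegral_indicator (measurableSet_shellPairs j), Measure.volume_eq_prod,
      lintegral_prod_symm _ (by exact (((hc.comp measurable_fst).pow_const 2).indicator
        (measurableSet_shellPairs j)).aemeasurable)]
    congr 1; ext t
    have hIm : MeasurableSet {s | s - t ∈ shell j} :=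
      (measurable_id.sub_const t) (measurableSet_shell j)
    rw [← lintegral_indicator hIm]
    rfl
  rw [bform_eq_iterated j hp hg]
  have hpt : ∀ t, ‖inner ℂ (∫ s in {s | s - t ∈ shell j}, p s) (g t)‖ₑ ≤
      4 * (K * B) * 2 ^ (3 * (j : ℝ) / 4) *
        (2 ^ (-(j : ℝ)) * (∫⁻ s in {s | s - t ∈ shell j}, c s ^ 2) + c' t ^ 2) := by
    intro t
    have h1 := enorm_setIntegral_shell_le j hp hc (K ^ 2) h t
    set X := ∫⁻ s in {s | s - t ∈ shell j}, c s ^ 2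
    have h2 : ‖∫ s in {s | s - t ∈ shell j}, p s‖ₑ ≤ 4 * K * 2 ^ ((j : ℝ) / 4) * X ^ (1 / 2 : ℝ) := by
      have h3 : ∀ y : ℝ≥0∞, (y ^ 2) ^ (1 / 2 : ℝ) = y := by
        intro y
        rw [← ENNReal.rpow_natCast, ← ENNReal.rpow_mul]; norm_num
      have h4 := ENNReal.rpow_le_rpow h1 (show (0 : ℝ) ≤ 1 / 2 by norm_num)
      rw [h3] at h4
      refine h4.trans (le_of_eq ?_)
      rw [ENNReal.mul_rpow_of_nonneg _ _ (by norm_num)]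
      congr 1
      rw [show (16 : ℝ≥0∞) * K ^ 2 * 2 ^ ((j : ℝ) / 2) = (4 * K * 2 ^ ((j : ℝ) / 4)) ^ 2 by
        rw [mul_pow, mul_pow, ← ENNReal.rpow_natCast ((2 : ℝ≥0∞) ^ ((j : ℝ) / 4)),
          ← ENNReal.rpow_mul]
        norm_num
        congr 2; ring, h3]
    calc _ ≤ ‖∫ s in {s | s - t ∈ shell j}, p s‖ₑ * ‖g t‖ₑ := by
          rw [← ofReal_norm, ← ofReal_norm, ← ofReal_norm, ← ENNReal.ofReal_mul (norm_nonneg _)]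
          exact ENNReal.ofReal_le_ofReal (norm_inner_le_norm _ _)
      _ ≤ (4 * K * 2 ^ ((j : ℝ) / 4) * X ^ (1 / 2 : ℝ)) * (B * c' t) := by
          gcongr; exact hgB t
      _ = 4 * (K * B) * 2 ^ (3 * (j : ℝ) / 4) * ((2 ^ (-(j : ℝ) / 2) * X ^ (1 / 2 : ℝ)) * c' t) := by
          rw [show (j : ℝ) / 4 = 3 * (j : ℝ) / 4 + -(j : ℝ) / 2 by ring, two_rpow_add]
          ring
      _ ≤ _ := by
          gcongr
          refine (ennreal_mul_le_sq_add_sq _ _).trans (le_of_eq ?_)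
          rw [mul_pow, ← ENNReal.rpow_natCast, ← ENNReal.rpow_mul, ← ENNReal.rpow_natCast (X ^ _),
            ← ENNReal.rpow_mul]
          norm_num
  calc _ ≤ ∫⁻ t, ‖inner ℂ (∫ s in {s | s - t ∈ shell j}, p s) (g t)‖ₑ :=
        enorm_integral_le_lintegral_enorm _
    _ ≤ ∫⁻ t, 4 * (K * B) * 2 ^ (3 * (j : ℝ) / 4) *
        (2 ^ (-(j : ℝ)) * (∫⁻ s in {s | s - t ∈ shell j}, c s ^ 2) + c' t ^ 2) :=
        lintegral_mono hpt
    _ = 4 * (K * B) * 2 ^ (3 * (j : ℝ) / 4) * (2 ^ (-(j : ℝ)) *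
        (∫⁻ t, ∫⁻ s in {s | s - t ∈ shell j}, c s ^ 2) + ∫⁻ t, c' t ^ 2) := by
        rw [lintegral_const_mul _ (by exact (hcI.const_mul _).add (by fun_prop)),
          lintegral_add_left (by exact hcI.const_mul _), lintegral_const_mul _ hcI]
    _ ≤ 4 * (K * B) * 2 ^ (3 * (j : ℝ) / 4) * (2 ^ (-(j : ℝ)) *
        (4 * 2 ^ (j : ℝ) * ∫⁻ s, c s ^ 2) + 4 * ∫⁻ t, c' t ^ 2) := by
        gcongr
        exact le_mul_of_one_le_left (by simp) (by norm_num)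
    _ = _ := by
        have : (2 : ℝ≥0∞) ^ (-(j : ℝ)) * (4 * 2 ^ (j : ℝ) * ∫⁻ s, c s ^ 2) = 4 * ∫⁻ s, c s ^ 2 := by
          rw [← mul_assoc, mul_left_comm, ← two_rpow_add]; simp
        rw [this]; ring

end Hilbert

/-! ### The abstract endpoint estimate -/

section Hilbert

set_option linter.unusedSectionVars false

variable {V : Type*} [NormedAddCommGroup V] [InnerProductSpace ℂ V] [CompleteSpace V]

lemma decay_rpow (a θ x : ℝ) : decay a x ^ θ = decay (a * θ) x := by
  rw [decay, decay, ← ENNReal.rpow_mul, neg_mul]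

lemma le_rpow_mul_rpow {x P Q : ℝ≥0∞} {θ : ℝ} (h0 : 0 ≤ θ) (h1 : θ ≤ 1) (hP : x ≤ P)
    (hQ : x ≤ Q) : x ≤ P ^ (1 - θ) * Q ^ θ := by
  calc x = x ^ (1 - θ) * x ^ θ := by
        rw [← ENNReal.rpow_add_of_nonneg _ _ (by linarith) h0]; simp
    _ ≤ _ := by gcongr

lemma enorm_inner_le (v w : V) : ‖inner ℂ v w‖ₑ ≤ ‖v‖ₑ * ‖w‖ₑ := by
  rw [← ofReal_norm, ← ofReal_norm, ← ofReal_norm, ← ENNReal.ofReal_mul (norm_nonneg _)]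
  exact ENNReal.ofReal_le_ofReal (norm_inner_le_norm _ _)

/-- Interpolation between the energy and the dispersive bound, at the point where the time
singularity becomes `|s - s'|^{-1/2}`. -/
lemma inner_le_interpolated {σ : ℝ} (hσ : 3 / 2 ≤ σ) (k : ℤ) {p : ℝ → V} {c : ℝ → ℝ≥0∞}
    (M : ℝ≥0∞) (hE : ∀ t, ‖p t‖ₑ ≤ M * 2 ^ (-(k : ℝ) / 2) * c t)
    (hD : ∀ s t, s ≠ t → ‖inner ℂ (p s) (p t)‖ₑ ≤
      M ^ 2 * 2 ^ (((k : ℝ) + k) * (σ - 1) / 2) * (c s * c t) * decay σ (s - t))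
    {s t : ℝ} (hst : s ≠ t) :
    ‖inner ℂ (p s) (p t)‖ₑ ≤
      (M * 2 ^ (-(k : ℝ) / 4)) ^ 2 * (c s * c t) * decay (1 / 2) (s - t) := by
  have hP : ‖inner ℂ (p s) (p t)‖ₑ ≤ M ^ 2 * 2 ^ (-(k : ℝ)) * (c s * c t) := by
    refine (enorm_inner_le _ _).trans ((mul_le_mul' (hE s) (hE t)).trans (le_of_eq ?_))
    rw [show -(k : ℝ) = -(k : ℝ) / 2 + -(k : ℝ) / 2 by ring, two_rpow_add]
    ring_nf
  have hσ0 : 0 < σ := by linarith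
  have hθ0 : 0 ≤ 1 / (2 * σ) := by positivity
  have hθ1 : 1 / (2 * σ) ≤ 1 := by rw [div_le_one (by linarith)]; linarith
  refine (le_rpow_mul_rpow hθ0 hθ1 hP (hD s t hst)).trans (le_of_eq ?_)
  have hθσ : σ * (1 / (2 * σ)) = 1 / 2 := by field_simp
  set θ := 1 / (2 * σ)
  have h1 : ∀ y : ℝ≥0∞, y ^ (1 - θ) * y ^ θ = y := by
    intro y
    rw [← ENNReal.rpow_add_of_nonneg _ _ (by linarith) hθ0]; simp
  have h2 : ((2 : ℝ≥0∞) ^ (-(k : ℝ))) ^ (1 - θ) * (2 ^ (((k : ℝ) + k) * (σ - 1) / 2)) ^ θ =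
      2 ^ (-(k : ℝ) / 4 + -(k : ℝ) / 4) := by
    rw [← ENNReal.rpow_mul, ← ENNReal.rpow_mul, ← two_rpow_add]
    congr 1
    linear_combination (k : ℝ) * hθσ
  rw [ENNReal.mul_rpow_of_nonneg _ _ (by linarith), ENNReal.mul_rpow_of_nonneg _ _ (by linarith),
    ENNReal.mul_rpow_of_nonneg _ _ hθ0, ENNReal.mul_rpow_of_nonneg _ _ hθ0,
    ENNReal.mul_rpow_of_nonneg _ _ hθ0, decay_rpow, hθσ]
  calc _ = ((M ^ 2) ^ (1 - θ) * (M ^ 2) ^ θ) * (((2 : ℝ≥0∞) ^ (-(k : ℝ))) ^ (1 - θ) *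
        (2 ^ (((k : ℝ) + k) * (σ - 1) / 2)) ^ θ) * ((c s * c t) ^ (1 - θ) * (c s * c t) ^ θ) *
        decay (1 / 2) (s - t) := by ring
    _ = _ := by rw [h1, h1, h2, two_rpow_add]; ring

/-- For pieces at scales `k` and `l`, the time shell at `2^j` gains decay in both `|k - j|` and
`|l - j|`. With `X = k - j` and `Y = l - j`, the dispersive bound has exponent `(X + Y)(σ - 1)/2`,
the two mixed bounds have exponents `-X/4 - Y/2` and `-X/2 - Y/4`, and for every `(X, Y)` one of the
three is at most `-(|X| + |Y|)/32`. -/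
lemma bform_atoms_le {σ : ℝ} (hσ : 3 / 2 ≤ σ) (j k l : ℤ) {p g : ℝ → V} {c c' : ℝ → ℝ≥0∞}
    (hp : Integrable p) (hg : Integrable g) (hc : Measurable c) (hc' : Measurable c')
    (M : ℝ≥0∞) (hE : ∀ t, ‖p t‖ₑ ≤ M * 2 ^ (-(k : ℝ) / 2) * c t)
    (hE' : ∀ t, ‖g t‖ₑ ≤ M * 2 ^ (-(l : ℝ) / 2) * c' t)
    (hDp : ∀ s t, s ≠ t → ‖inner ℂ (p s) (p t)‖ₑ ≤
      M ^ 2 * 2 ^ (((k : ℝ) + k) * (σ - 1) / 2) * (c s * c t) * decay σ (s - t))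
    (hDg : ∀ s t, s ≠ t → ‖inner ℂ (g s) (g t)‖ₑ ≤
      M ^ 2 * 2 ^ (((l : ℝ) + l) * (σ - 1) / 2) * (c' s * c' t) * decay σ (s - t))
    (hD : ∀ s t, s ≠ t → ‖inner ℂ (p s) (g t)‖ₑ ≤
      M ^ 2 * 2 ^ (((k : ℝ) + l) * (σ - 1) / 2) * (c s * c' t) * decay σ (s - t)) :
    ‖bform j p g‖ₑ ≤ 16 * M ^ 2 * (2 ^ (-(1 / 32 : ℝ) * |(k : ℝ) - j|) *
      2 ^ (-(1 / 32 : ℝ) * |(l : ℝ) - j|)) * ((∫⁻ t, c t ^ 2) + ∫⁻ t, c' t ^ 2) := by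
  rw [← two_rpow_add]
  have b1 : ‖bform j p g‖ₑ ≤ 16 * M ^ 2 * 2 ^ ((((k : ℝ) - j) + (l - j)) * (σ - 1) / 2) *
      ((∫⁻ t, c t ^ 2) + ∫⁻ t, c' t ^ 2) := by
    refine (bform_le_dispersive (by linarith) j hc hc' _ hD).trans ?_
    refine mul_le_mul_left ?_ _
    rw [show (((k : ℝ) - j) + (l - j)) * (σ - 1) / 2 =
      ((k : ℝ) + l) * (σ - 1) / 2 + ((j : ℝ) - j * σ) by ring, two_rpow_add]
    calc _ = 4 * (M ^ 2 * (2 ^ (((k : ℝ) + l) * (σ - 1) / 2) * 2 ^ ((j : ℝ) - j * σ))) := by ring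
      _ ≤ 16 * (M ^ 2 * (2 ^ (((k : ℝ) + l) * (σ - 1) / 2) * 2 ^ ((j : ℝ) - j * σ))) := by
        gcongr; norm_num
      _ = _ := by ring
  have b2 : ‖bform j p g‖ₑ ≤ 16 * M ^ 2 * 2 ^ (-((k : ℝ) - j) / 4 - ((l : ℝ) - j) / 2) *
      ((∫⁻ t, c t ^ 2) + ∫⁻ t, c' t ^ 2) := by
    refine (bform_le_mixed j hp hg hc hc' _ _
      (fun s t hst => inner_le_interpolated hσ k M hE hDp hst) hE').trans (le_of_eq ?_)
    rw [show -((k : ℝ) - j) / 4 - ((l : ℝ) - j) / 2 =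
      -(k : ℝ) / 4 + (-(l : ℝ) / 2 + 3 * (j : ℝ) / 4) by ring, two_rpow_add, two_rpow_add]
    ring
  have b3 : ‖bform j p g‖ₑ ≤ 16 * M ^ 2 * 2 ^ (-((l : ℝ) - j) / 4 - ((k : ℝ) - j) / 2) *
      ((∫⁻ t, c t ^ 2) + ∫⁻ t, c' t ^ 2) := by
    rw [bform_symm]
    refine (bform_le_mixed j hg hp hc' hc _ _
      (fun s t hst => inner_le_interpolated hσ l M hE' hDg hst) hE).trans (le_of_eq ?_)
    rw [show -((l : ℝ) - j) / 4 - ((k : ℝ) - j) / 2 =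
      -(l : ℝ) / 4 + (-(k : ℝ) / 2 + 3 * (j : ℝ) / 4) by ring, two_rpow_add, two_rpow_add]
    ring
  generalize (k : ℝ) - j = X at *
  generalize (l : ℝ) - j = Y at *
  have key : ∀ e : ℝ, ‖bform j p g‖ₑ ≤ 16 * M ^ 2 * 2 ^ e *
      ((∫⁻ t, c t ^ 2) + ∫⁻ t, c' t ^ 2) → e ≤ -(1 / 32) * |X| + -(1 / 32) * |Y| →
      ‖bform j p g‖ₑ ≤ 16 * M ^ 2 * 2 ^ (-(1 / 32) * |X| + -(1 / 32) * |Y|) *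
      ((∫⁻ t, c t ^ 2) + ∫⁻ t, c' t ^ 2) := by
    intro e he hle
    refine he.trans ?_
    gcongr
    norm_num
  have hs : X + Y ≤ 0 → (X + Y) * (σ - 1) / 2 ≤ (X + Y) / 4 := by intro h; nlinarith
  rcases le_total 0 X with hX | hX <;> rcases le_total 0 Y with hY | hY
  · refine key _ b2 ?_
    rw [abs_of_nonneg hX, abs_of_nonneg hY]; linarith
  · rcases le_total X (-(3 / 4 * Y)) with h | h
    · refine key _ b1 ?_
      rw [abs_of_nonneg hX, abs_of_nonpos hY]
      linarith [hs (by linarith)]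
    · refine key _ b3 ?_
      rw [abs_of_nonneg hX, abs_of_nonpos hY]; linarith
  · rcases le_total Y (-(3 / 4 * X)) with h | h
    · refine key _ b1 ?_
      rw [abs_of_nonneg hY, abs_of_nonpos hX]
      linarith [hs (by linarith)]
    · refine key _ b2 ?_
      rw [abs_of_nonneg hY, abs_of_nonpos hX]; linarith
  · refine key _ b1 ?_
    rw [abs_of_nonpos hY, abs_of_nonpos hX]
    linarith [hs (by linarith)]

lemma sum_two_rpow_le (S : Finset ℤ) (j : ℤ) :
    ∑ l ∈ S, (2 : ℝ≥0∞) ^ (-(1 / 32 : ℝ) * |(l : ℝ) - j|) ≤ 2 ^ (1 / 32 : ℝ) * geomSum (1 / 32) :=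
  (ENNReal.sum_le_tsum S).trans (geomSum_shift (by norm_num) (j : ℝ))

lemma tsum_two_rpow_le (k : ℤ) :
    ∑' j : ℤ, (2 : ℝ≥0∞) ^ (-(1 / 32 : ℝ) * |(k : ℝ) - j|) ≤
      2 ^ (1 / 32 : ℝ) * geomSum (1 / 32) := by
  simp_rw [abs_sub_comm (k : ℝ)]
  exact geomSum_shift (by norm_num) (k : ℝ)

/-- The abstract endpoint estimate of Keel and Tao, for a finite sum of pieces `p k` living at
dyadic scales: the decay in `|k - j| + |l - j|` makes the sum over time scales `2^j` converge. -/
lemma keelTao_sum_le {σ : ℝ} (hσ : 3 / 2 ≤ σ) (S : Finset ℤ) {p : ℤ → ℝ → V}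
    {c : ℤ → ℝ → ℝ≥0∞} (hp : ∀ k, Integrable (p k)) (hc : ∀ k, Measurable (c k))
    (M : ℝ≥0∞) (hE : ∀ k t, ‖p k t‖ₑ ≤ M * 2 ^ (-(k : ℝ) / 2) * c k t)
    (hD : ∀ k l s t, s ≠ t → ‖inner ℂ (p k s) (p l t)‖ₑ ≤
      M ^ 2 * 2 ^ (((k : ℝ) + l) * (σ - 1) / 2) * (c k s * c l t) * decay σ (s - t)) :
    ‖∑ k ∈ S, ∫ t, p k t‖ₑ ^ 2 ≤
      32 * M ^ 2 * (2 ^ (1 / 32 : ℝ) * geomSum (1 / 32)) ^ 2 * ∑ k ∈ S, ∫⁻ t, c k t ^ 2 := by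
  set G := (2 : ℝ≥0∞) ^ (1 / 32 : ℝ) * geomSum (1 / 32) with hG
  set A : ℤ → ℝ≥0∞ := fun k => ∫⁻ t, c k t ^ 2 with hA
  set W : ℤ → ℤ → ℝ≥0∞ := fun k j => 2 ^ (-(1 / 32 : ℝ) * |(k : ℝ) - j|) with hW
  have h1 : ∑ k ∈ S, ∑' j, ∑ l ∈ S, W k j * W l j * A k ≤ G ^ 2 * ∑ k ∈ S, A k := by
    rw [Finset.mul_sum]
    gcongr with k hk
    calc ∑' j, ∑ l ∈ S, W k j * W l j * A k = ∑' j, W k j * (∑ l ∈ S, W l j) * A k := by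
          congr 1; ext j; rw [Finset.mul_sum, Finset.sum_mul]
      _ ≤ ∑' j, W k j * G * A k := by
          gcongr with j; exact sum_two_rpow_le S j
      _ = (∑' j, W k j) * (G * A k) := by
          rw [← ENNReal.tsum_mul_right]; simp_rw [mul_assoc]
      _ ≤ G * (G * A k) := by gcongr; exact tsum_two_rpow_le k
      _ = _ := by ring
  rw [enorm_sq_eq_inner]
  calc ‖inner ℂ (∑ k ∈ S, ∫ t, p k t) (∑ k ∈ S, ∫ t, p k t)‖ₑ
      ≤ ∑ k ∈ S, ∑ l ∈ S, ‖inner ℂ (∫ t, p k t) (∫ t, p l t)‖ₑ := by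
        simp_rw [sum_inner, inner_sum]
        refine (enorm_sum_le _ _).trans ?_
        gcongr
        exact enorm_sum_le _ _
    _ ≤ ∑ k ∈ S, ∑ l ∈ S, ∑' j, 16 * M ^ 2 * (W k j * W l j) * (A k + A l) := by
        gcongr with k _ l _
        refine (enorm_inner_le_tsum_bform (hp k) (hp l)).trans ?_
        gcongr with j
        exact bform_atoms_le hσ j k l (hp k) (hp l) (hc k) (hc l) M (hE k) (hE l)
          (hD k k) (hD l l) (hD k l)
    _ = 16 * M ^ 2 * (∑ k ∈ S, ∑ l ∈ S, ∑' j, W k j * W l j * A k) +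
        16 * M ^ 2 * (∑ k ∈ S, ∑ l ∈ S, ∑' j, W k j * W l j * A l) := by
        simp_rw [Finset.mul_sum, ← Finset.sum_add_distrib, ← ENNReal.tsum_mul_left,
          ← ENNReal.tsum_add]
        refine Finset.sum_congr rfl fun k _ => Finset.sum_congr rfl fun l _ => tsum_congr fun j => ?_
        ring
    _ = 32 * M ^ 2 * (∑ k ∈ S, ∑' j, ∑ l ∈ S, W k j * W l j * A k) := by
        have e1 : ∑ k ∈ S, ∑ l ∈ S, ∑' j, W k j * W l j * A l =
            ∑ k ∈ S, ∑ l ∈ S, ∑' j, W k j * W l j * A k := by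
          rw [Finset.sum_comm]
          simp_rw [mul_comm (W _ _) (W _ _)]
        have e2 : ∑ k ∈ S, ∑ l ∈ S, ∑' j, W k j * W l j * A k =
            ∑ k ∈ S, ∑' j, ∑ l ∈ S, W k j * W l j * A k := by
          congr! 1 with k _
          rw [Summable.tsum_finsetSum (fun _ _ => ENNReal.summable)]
        rw [e1, e2]; ring
    _ ≤ 32 * M ^ 2 * (G ^ 2 * ∑ k ∈ S, A k) := by gcongr
    _ = _ := by ring

end Hilbert

/-! ### Dispersive families of vectors -/

section Dispersive

set_option linter.unusedSectionVars false

variable {V : Type*} [NormedAddCommGroup V] [InnerProductSpace ℂ V] [CompleteSpace V]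
variable {E : Type*} [NormedAddCommGroup E] [InnerProductSpace ℝ E] [FiniteDimensional ℝ E]
  [MeasurableSpace E] [BorelSpace E]

/-- A continuous bounded family `e (t, x)` of vectors representing the (regularised) evaluation
functionals `v ↦ u(t, x)` of an evolution, with dispersive decay `|t - s|^{-σ}` and with Gram
kernel at equal times dominated by an even convolution kernel of mass at most one. -/
structure IsDispersive (σ : ℝ) (e : ℝ × E → V) : Prop where
  cont : Continuous e
  bdd : ∃ K : ℝ, ∀ z, ‖e z‖ ≤ K
  disp : ∀ s t x y, s ≠ t → ‖inner ℂ (e (s, x)) (e (t, y))‖ₑ ≤ decay σ (s - t)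
  energy : ∃ h : E → ℝ≥0∞, Measurable h ∧ (∀ x, h (-x) = h x) ∧ ∫⁻ x, h x ≤ 1 ∧
    ∀ t x y, ‖inner ℂ (e (t, x)) (e (t, y))‖ₑ ≤ h (x - y)

namespace IsDispersive

variable {σ : ℝ} {e : ℝ × E → V}

lemma integrable_smul (he : IsDispersive σ e) (t : ℝ) {f : E → ℂ} (hf : Integrable f) :
    Integrable fun x => f x • e (t, x) := by
  obtain ⟨K, hK⟩ := he.bdd
  refine (hf.norm.mul_const K).mono' (hf.aestronglyMeasurable.smul ?_) (.of_forall fun x => ?_)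
  · exact (he.cont.comp (by fun_prop : Continuous fun x : E => (t, x))).aestronglyMeasurable
  · rw [norm_smul]; gcongr; exact hK _

lemma integrable_smul_prod (he : IsDispersive σ e) {F : ℝ × E → ℂ} (hF : Integrable F) :
    Integrable fun z => F z • e z := by
  obtain ⟨K, hK⟩ := he.bdd
  refine (hF.norm.mul_const K).mono' (hF.aestronglyMeasurable.smul ?_) (.of_forall fun x => ?_)
  · exact he.cont.aestronglyMeasurable
  · rw [norm_smul]; gcongr; exact hK _

lemma enorm_inner_smul_smul (a b : ℂ) (v w : V) :
    ‖inner ℂ (a • v) (b • w)‖ₑ = ‖a‖ₑ * ‖b‖ₑ * ‖inner ℂ v w‖ₑ := by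
  rw [inner_smul_left, inner_smul_right, enorm_mul, enorm_mul, ← mul_assoc]
  congr 2
  rw [← ofReal_norm, ← ofReal_norm, RCLike.norm_conj]

/-- The `L¹ × L¹` bound for the bilinear form at two distinct times. -/
lemma dispersive_bound (he : IsDispersive σ e) {s t : ℝ} (hst : s ≠ t) {f g : E → ℂ}
    (hf : Integrable f) (hg : Integrable g) :
    ‖inner ℂ (∫ x, f x • e (s, x)) (∫ y, g y • e (t, y))‖ₑ ≤
      (∫⁻ x, ‖f x‖ₑ) * (∫⁻ y, ‖g y‖ₑ) * decay σ (s - t) := by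
  refine (enorm_inner_integral_integral_le (he.integrable_smul s hf)
    (he.integrable_smul t hg)).trans ?_
  calc _ ≤ ∫⁻ x, ∫⁻ y, ‖f x‖ₑ * ‖g y‖ₑ * decay σ (s - t) := by
        gcongr with x y
        rw [enorm_inner_smul_smul]
        gcongr
        exact he.disp _ _ _ _ hst
    _ = _ := by
        have h1 : ∀ x, ∫⁻ y, ‖f x‖ₑ * ‖g y‖ₑ * decay σ (s - t) =
            ‖f x‖ₑ * ((∫⁻ y, ‖g y‖ₑ) * decay σ (s - t)) := by
          intro x
          simp_rw [mul_assoc]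
          rw [lintegral_const_mul'' _ (by exact hg.aestronglyMeasurable.enorm.mul_const _),
            lintegral_mul_const'' _ hg.aestronglyMeasurable.enorm]
        simp_rw [h1]
        rw [lintegral_mul_const'' _ hf.aestronglyMeasurable.enorm, mul_assoc]

/-- The `L²` bound at a fixed time, by Schur's test with the kernel of mass at most one. -/
lemma energy_bound (he : IsDispersive σ e) (t : ℝ) {f : E → ℂ} (hfm : Measurable f)
    (hf : Integrable f) :
    ‖∫ x, f x • e (t, x)‖ₑ ^ 2 ≤ 2 * ∫⁻ x, ‖f x‖ₑ ^ 2 := by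
  obtain ⟨h, hm, hsymm, hintg, hb⟩ := he.energy
  rw [enorm_sq_eq_inner]
  refine (enorm_inner_integral_integral_le (he.integrable_smul t hf)
    (he.integrable_smul t hf)).trans ?_
  have hm1 : Measurable fun z : E × E => ‖f z.1‖ₑ ^ 2 * h (z.1 - z.2) := by fun_prop
  have hm2 : Measurable fun z : E × E => ‖f z.2‖ₑ ^ 2 * h (z.1 - z.2) := by fun_prop
  have hA : ∫⁻ x, ∫⁻ y, ‖f x‖ₑ ^ 2 * h (x - y) ≤ ∫⁻ x, ‖f x‖ₑ ^ 2 := by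
    gcongr with x
    rw [lintegral_const_mul _ (by fun_prop), lintegral_sub_left_eq_self (fun y => h y) x]
    exact mul_le_of_le_one_right' hintg
  have hB : ∫⁻ x, ∫⁻ y, ‖f y‖ₑ ^ 2 * h (x - y) = ∫⁻ x, ∫⁻ y, ‖f x‖ₑ ^ 2 * h (x - y) := by
    rw [lintegral_lintegral_swap (by exact hm2.aemeasurable)]
    congr 1; ext s; congr 1; ext s'
    rw [← hsymm, neg_sub]
  calc _ ≤ ∫⁻ x, ∫⁻ y, (‖f x‖ₑ ^ 2 * h (x - y) + ‖f y‖ₑ ^ 2 * h (x - y)) := by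
        gcongr with x y
        rw [enorm_inner_smul_smul, ← add_mul]
        gcongr
        · exact ennreal_mul_le_sq_add_sq _ _
        · exact hb _ _ _
    _ = (∫⁻ x, ∫⁻ y, ‖f x‖ₑ ^ 2 * h (x - y)) + ∫⁻ x, ∫⁻ y, ‖f y‖ₑ ^ 2 * h (x - y) := by
        rw [← lintegral_add_left (by exact hm1.lintegral_prod_right')]
        congr 1; ext x
        rw [lintegral_add_left (by fun_prop)]
    _ ≤ _ := by rw [hB, two_mul]; gcongr

end IsDispersive

end Dispersive

/-! ### Dyadic layers of a function -/

section Layers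

set_option linter.unusedSectionVars false

variable {α : Type*} [MeasurableSpace α] {μ : Measure α}

/-- The `k`-th layer of `f` relative to the height `a`: where `f / a` lies between
`2^{-σ(k+1)/p}` and `2^{-σk/p}`. -/
def layer (σ p : ℝ) (a : ℝ≥0∞) (f : α → ℝ≥0∞) (k : ℤ) : Set α :=
  {x | 2 ^ (-(σ * (k + 1) / p)) * a < f x ∧ f x ≤ 2 ^ (-(σ * k / p)) * a}

lemma measurableSet_layer (σ p : ℝ) (a : ℝ≥0∞) {f : α → ℝ≥0∞} (hf : Measurable f) (k : ℤ) :
    MeasurableSet (layer σ p a f k) :=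
  (measurableSet_lt measurable_const hf).inter (measurableSet_le hf measurable_const)

lemma disjoint_layer {σ p : ℝ} (hσ : 0 < σ) (hp : 0 < p) (a : ℝ≥0∞) (f : α → ℝ≥0∞) :
    Pairwise (Function.onFun Disjoint (layer σ p a f)) := by
  have key : ∀ i j : ℤ, i < j → Disjoint (layer σ p a f i) (layer σ p a f j) := by
    intro i j hij
    rw [Set.disjoint_left]
    intro x hi hj
    have h1 : (2 : ℝ≥0∞) ^ (-(σ * j / p)) * a ≤ 2 ^ (-(σ * (i + 1) / p)) * a := by
      refine mul_le_mul_left (two_rpow_mono ?_) _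
      have : (i : ℝ) + 1 ≤ j := by exact_mod_cast hij
      gcongr
    exact absurd hi.1 (not_lt.2 (hj.2.trans h1))
  intro i j hij
  rcases lt_or_gt_of_ne hij with h | h
  · exact key i j h
  · exact (key j i h).symm

lemma exists_mem_layer {σ p : ℝ} (hσ : 0 < σ) (hp : 0 < p) {a : ℝ≥0∞} (ha : a ≠ 0)
    (ha' : a ≠ ⊤) {f : α → ℝ≥0∞} {x : α} (hx : f x ≠ 0) (hx' : f x ≠ ⊤) :
    ∃ k, x ∈ layer σ p a f k := by
  have hb : (1 : ℝ) < 2 ^ (σ / p) := Real.one_lt_rpow (by norm_num) (by positivity)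
  have hpos : 0 < (f x / a).toReal :=
    ENNReal.toReal_pos (ENNReal.div_ne_zero.2 ⟨hx, ha'⟩) (ENNReal.div_ne_top hx' ha)
  obtain ⟨n, hn1, hn2⟩ := exists_mem_Ioc_zpow hpos hb
  have e1 : ∀ m : ℤ, ((2 : ℝ) ^ (σ / p)) ^ m = 2 ^ (σ * m / p) := by
    intro m
    rw [← Real.rpow_intCast, ← Real.rpow_mul (by norm_num)]
    congr 1; ring
  rw [e1] at hn1 hn2
  have hfa : f x / a = ENNReal.ofReal (f x / a).toReal :=
    (ENNReal.ofReal_toReal (ENNReal.div_ne_top hx' ha)).symm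
  refine ⟨-n - 1, ?_, ?_⟩
  · rw [← ENNReal.lt_div_iff_mul_lt (.inl ha) (.inl ha'), hfa, ← ofReal_two_rpow]
    refine (ENNReal.ofReal_lt_ofReal_iff hpos).2 (lt_of_eq_of_lt ?_ hn1)
    congr 1; push_cast; ring
  · rw [← ENNReal.div_le_iff ha ha', hfa, ← ofReal_two_rpow]
    refine ENNReal.ofReal_le_ofReal (hn2.trans_eq ?_)
    congr 1; push_cast; ring

/-- The size of the `k`-th layer, normalised so that the squares of the sizes sum to at most `a²`
when `‖f‖_p ≤ a`. -/
noncomputable def layerSize (μ : Measure α) (σ p : ℝ) (a : ℝ≥0∞) (f : α → ℝ≥0∞) (k : ℤ) :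
    ℝ≥0∞ :=
  a ^ (1 - p / 2) * (∫⁻ x in layer σ p a f k, f x ^ p ∂μ) ^ (1 / 2 : ℝ)

lemma layerSize_sq (σ p : ℝ) (a : ℝ≥0∞) (f : α → ℝ≥0∞) (k : ℤ) :
    layerSize μ σ p a f k ^ 2 = a ^ (2 - p) * ∫⁻ x in layer σ p a f k, f x ^ p ∂μ := by
  rw [layerSize, mul_pow, ← ENNReal.rpow_natCast, ← ENNReal.rpow_natCast, ← ENNReal.rpow_mul,
    ← ENNReal.rpow_mul]
  norm_num
  congr 2; ring

lemma tsum_layerSize_sq_le {σ p : ℝ} (hσ : 0 < σ) (hp : 0 < p) (hp2 : p < 2) {a : ℝ≥0∞}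
    {f : α → ℝ≥0∞} (hf : Measurable f) (hfa : ∫⁻ x, f x ^ p ∂μ ≤ a ^ p) :
    ∑' k, layerSize μ σ p a f k ^ 2 ≤ a ^ 2 := by
  simp_rw [layerSize_sq]
  rw [ENNReal.tsum_mul_left, ← lintegral_iUnion (fun k => measurableSet_layer σ p a hf k)
    (disjoint_layer hσ hp a f)]
  calc _ ≤ a ^ (2 - p) * a ^ p := by
        gcongr
        exact (setLIntegral_le_lintegral _ _).trans hfa
    _ = a ^ 2 := by
        rw [← ENNReal.rpow_add_of_nonneg _ _ (by linarith) hp.le, ← ENNReal.rpow_natCast]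
        norm_num

/-- The `L¹` size of a layer: `f` is bounded below on it, so the `L^p` bound controls its measure.
-/
lemma lintegral_layer_le {σ p : ℝ} (hp : 1 < p) (hp2 : p < 2) {a : ℝ≥0∞} (ha : a ≠ ⊤)
    {f : α → ℝ≥0∞} (hf : Measurable f) (hfa : ∫⁻ x, f x ^ p ∂μ ≤ a ^ p) (k : ℤ) :
    ∫⁻ x in layer σ p a f k, f x ∂μ ≤
      2 ^ (σ * (1 - 1 / p)) * 2 ^ (k * (σ * (1 - 1 / p))) * layerSize μ σ p a f k := by
  rcases eq_or_ne a 0 with rfl | ha0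
  · have : layer σ p 0 f k = ∅ := by
      ext x
      simp only [layer, mul_zero, Set.mem_ofPred_eq, Set.mem_empty_iff_false, iff_false, not_and,
        not_le, imp_self]
    simp [this]
  set L := layer σ p a f k with hL
  set I := ∫⁻ x in L, f x ^ p ∂μ with hI
  have hIa : I ≤ a ^ p := (setLIntegral_le_lintegral _ _).trans hfa
  have h1 : ∫⁻ x in L, f x ∂μ ≤ (2 ^ (-(σ * (k + 1) / p)) * a) ^ (1 - p) * I := by
    rw [← lintegral_const_mul _ (by fun_prop)]
    apply setLIntegral_mono (by fun_prop)
    intro x hx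
    have hx0 : f x ≠ 0 := (zero_le.trans_lt hx.1).ne'
    have hxt : f x ≠ ⊤ :=
      (hx.2.trans_lt (ENNReal.mul_lt_top (two_rpow_ne_top _).lt_top ha.lt_top)).ne
    calc f x = f x ^ (1 - p) * f x ^ p := by
          rw [← ENNReal.rpow_add _ _ hx0 hxt]; simp
      _ ≤ _ := by
          gcongr ?_ * _
          rw [show 1 - p = -(p - 1) by ring, ENNReal.rpow_neg, ENNReal.rpow_neg]
          refine ENNReal.inv_le_inv.2 (ENNReal.rpow_le_rpow hx.1.le (by linarith))
  refine h1.trans ?_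
  have h2 : I ≤ a ^ (p / 2) * I ^ (1 / 2 : ℝ) := by
    calc I = I ^ (1 / 2 : ℝ) * I ^ (1 / 2 : ℝ) := by
          rw [← ENNReal.rpow_add_of_nonneg _ _ (by norm_num) (by norm_num)]; norm_num
      _ ≤ (a ^ p) ^ (1 / 2 : ℝ) * I ^ (1 / 2 : ℝ) := by gcongr
      _ = _ := by rw [← ENNReal.rpow_mul]; congr 2; ring
  calc _ ≤ (2 ^ (-(σ * (k + 1) / p)) * a) ^ (1 - p) * (a ^ (p / 2) * I ^ (1 / 2 : ℝ)) := by
        gcongr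
    _ = (2 ^ (-(σ * (k + 1) / p))) ^ (1 - p) * ((a ^ (1 - p) * a ^ (p / 2)) * I ^ (1 / 2 : ℝ)) := by
        rw [ENNReal.mul_rpow_of_ne_top (two_rpow_ne_top _) ha]; ring
    _ = _ := by
        rw [← ENNReal.rpow_add _ _ ha0 ha, ← ENNReal.rpow_mul, ← two_rpow_add, layerSize]
        congr 2
        · have : p ≠ 0 := by linarith
          field_simp; ring
        · ring_nf

/-- The `L²` size of a layer: `f` is bounded above on it. -/
lemma lintegral_layer_sq_le {σ p : ℝ} (hp : 1 < p) (hp2 : p < 2) {a : ℝ≥0∞}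
    {f : α → ℝ≥0∞} (hf : Measurable f) (k : ℤ) :
    ∫⁻ x in layer σ p a f k, f x ^ 2 ∂μ ≤
      (2 ^ (-(k * (σ * (1 / p - 1 / 2)))) * layerSize μ σ p a f k) ^ 2 := by
  set L := layer σ p a f k with hL
  have h1 : ∫⁻ x in L, f x ^ 2 ∂μ ≤
      (2 ^ (-(σ * k / p)) * a) ^ (2 - p) * ∫⁻ x in L, f x ^ p ∂μ := by
    rw [← lintegral_const_mul _ (by fun_prop)]
    apply setLIntegral_mono (by fun_prop)
    intro x hx
    calc f x ^ 2 = f x ^ (2 - p) * f x ^ p := by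
          rw [← ENNReal.rpow_add_of_nonneg _ _ (by linarith) (by linarith),
            ← ENNReal.rpow_natCast]; simp
      _ ≤ _ := by
          gcongr ?_ * _
          exact ENNReal.rpow_le_rpow hx.2 (by linarith)
  refine h1.trans (le_of_eq ?_)
  rw [mul_pow, layerSize_sq, ENNReal.mul_rpow_of_nonneg _ _ (by linarith), mul_assoc]
  congr 1
  rw [← ENNReal.rpow_natCast, ← ENNReal.rpow_mul, ← ENNReal.rpow_mul]
  congr 1
  have : p ≠ 0 := by linarith
  push_cast
  field_simp

end Layers

/-! ### Layers of a source term -/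

lemma ennreal_le_of_sq_le {x y : ℝ≥0∞} (h : x ^ 2 ≤ y ^ 2) : x ≤ y := by
  by_contra! hlt
  exact absurd h (not_le.2 (ENNReal.pow_lt_pow_left two_ne_zero hlt))

section Dispersive

set_option linter.unusedSectionVars false

variable {V : Type*} [NormedAddCommGroup V] [InnerProductSpace ℂ V] [CompleteSpace V]
variable {E : Type*} [NormedAddCommGroup E] [InnerProductSpace ℝ E] [FiniteDimensional ℝ E]
  [MeasurableSpace E] [BorelSpace E]

/-- A source term `F` with `‖F(t)‖_p ≤ φ(t)`, integrable in space-time and at each time. -/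
structure IsSource (p : ℝ) (φ : ℝ → ℝ≥0∞) (F : ℝ × E → ℂ) : Prop where
  meas : Measurable F
  meas_size : Measurable φ
  ne_top : ∀ t, φ t ≠ ⊤
  bound : ∀ t, ∫⁻ x, ‖F (t, x)‖ₑ ^ p ≤ φ t ^ p
  int : Integrable F
  int_slice : ∀ t, Integrable fun x => F (t, x)

/-- The part of `F` in its `k`-th layer at each time. -/
noncomputable def layerPart (σ p : ℝ) (φ : ℝ → ℝ≥0∞) (F : ℝ × E → ℂ) (k : ℤ) (z : ℝ × E) : ℂ :=
  (layer σ p (φ z.1) (fun x => ‖F (z.1, x)‖ₑ) k).indicator (fun x => F (z.1, x)) z.2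

/-- The size at time `t` of the `k`-th layer of `F`. -/
noncomputable def partSize (σ p : ℝ) (φ : ℝ → ℝ≥0∞) (F : ℝ × E → ℂ) (k : ℤ) (t : ℝ) : ℝ≥0∞ :=
  layerSize volume σ p (φ t) (fun x => ‖F (t, x)‖ₑ) k

/-- The vector `∫ F_k(t, x) e(t, x) dx`. -/
noncomputable def layerVec (e : ℝ × E → V) (σ p : ℝ) (φ : ℝ → ℝ≥0∞) (F : ℝ × E → ℂ) (k : ℤ)
    (t : ℝ) : V :=
  ∫ x, layerPart σ p φ F k (t, x) • e (t, x)

namespace IsSource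

variable {p σ : ℝ} {φ : ℝ → ℝ≥0∞} {F : ℝ × E → ℂ}

lemma measurableSet_layers (h : IsSource p φ F) (σ : ℝ) (k : ℤ) :
    MeasurableSet {z : ℝ × E | z.2 ∈ layer σ p (φ z.1) (fun x => ‖F (z.1, x)‖ₑ) k} := by
  have h1 := h.meas
  have h2 := h.meas_size
  exact (measurableSet_lt (f := fun z : ℝ × E => (2 : ℝ≥0∞) ^ (-(σ * (k + 1) / p)) * φ z.1)
    (g := fun z => ‖F z‖ₑ) (by fun_prop) (by fun_prop)).inter
    (measurableSet_le (f := fun z : ℝ × E => ‖F z‖ₑ)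
      (g := fun z : ℝ × E => (2 : ℝ≥0∞) ^ (-(σ * k / p)) * φ z.1) (by fun_prop) (by fun_prop))

lemma layerPart_eq (k : ℤ) : layerPart σ p φ F k =
    {z : ℝ × E | z.2 ∈ layer σ p (φ z.1) (fun x => ‖F (z.1, x)‖ₑ) k}.indicator F := by
  ext z
  by_cases hz : z.2 ∈ layer σ p (φ z.1) (fun x => ‖F (z.1, x)‖ₑ) k <;>
    simp [layerPart, Set.indicator, hz]

lemma measurable_layerPart (h : IsSource p φ F) (σ : ℝ) (k : ℤ) :
    Measurable (layerPart σ p φ F k) := by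
  rw [layerPart_eq]
  exact h.meas.indicator (h.measurableSet_layers σ k)

lemma integrable_layerPart (h : IsSource p φ F) (σ : ℝ) (k : ℤ) :
    Integrable (layerPart σ p φ F k) := by
  rw [layerPart_eq]
  exact h.int.indicator (h.measurableSet_layers σ k)

lemma measurable_slice (h : IsSource p φ F) (t : ℝ) : Measurable fun x => F (t, x) :=
  h.meas.comp (by fun_prop)

lemma integrable_layerPart_slice (h : IsSource p φ F) (σ : ℝ) (k : ℤ) (t : ℝ) :
    Integrable fun x => layerPart σ p φ F k (t, x) :=
  Integrable.indicator (h.int_slice t)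
    (s := layer σ p (φ t) (fun x => ‖F (t, x)‖ₑ) k)
    (measurableSet_layer σ p (φ t) (h.measurable_slice t).enorm k)

lemma measurable_partSize (h : IsSource p φ F) (σ : ℝ) (k : ℤ) :
    Measurable (partSize σ p φ F k) := by
  have h1 := h.meas
  have h2 := h.meas_size
  have hm : Measurable ({z : ℝ × E | z.2 ∈ layer σ p (φ z.1) (fun x => ‖F (z.1, x)‖ₑ) k}.indicator
      fun z => ‖F z‖ₑ ^ p) :=
    Measurable.indicator (by fun_prop) (h.measurableSet_layers σ k)
  have hm' : Measurable fun t => ∫⁻ x in layer σ p (φ t) (fun x => ‖F (t, x)‖ₑ) k,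
      ‖F (t, x)‖ₑ ^ p := by
    have := hm.lintegral_prod_right' (ν := volume)
    convert! this using 2 with t
    rw [← lintegral_indicator (measurableSet_layer σ p _ (h.measurable_slice t).enorm k)]
    rfl
  unfold partSize layerSize
  fun_prop

lemma tsum_partSize_sq_le (h : IsSource p φ F) (hσ : 0 < σ) (hp : 1 < p) (hp2 : p < 2) (t : ℝ) :
    ∑' k, partSize σ p φ F k t ^ 2 ≤ φ t ^ 2 :=
  tsum_layerSize_sq_le hσ (by linarith) hp2 (h.measurable_slice t).enorm (h.bound t)

lemma sum_partSize_sq_le (h : IsSource p φ F) (hσ : 0 < σ) (hp : 1 < p) (hp2 : p < 2) (t : ℝ)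
    (S : Finset ℤ) : ∑ k ∈ S, partSize σ p φ F k t ^ 2 ≤ φ t ^ 2 :=
  (ENNReal.sum_le_tsum S).trans (h.tsum_partSize_sq_le hσ hp hp2 t)

lemma lintegral_layerPart_le (h : IsSource p φ F) (hp : 1 < p) (hp2 : p < 2) (σ : ℝ) (k : ℤ)
    (t : ℝ) : ∫⁻ x, ‖layerPart σ p φ F k (t, x)‖ₑ ≤
      2 ^ (σ * (1 - 1 / p)) * 2 ^ (k * (σ * (1 - 1 / p))) * partSize σ p φ F k t := by
  refine le_trans (le_of_eq ?_) (lintegral_layer_le hp hp2 (h.ne_top t)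
    (h.measurable_slice t).enorm (h.bound t) k)
  rw [← lintegral_indicator (measurableSet_layer σ p _ (h.measurable_slice t).enorm k)]
  congr 1; ext x
  by_cases hx : x ∈ layer σ p (φ t) (fun x => ‖F (t, x)‖ₑ) k <;>
    simp [layerPart, Set.indicator, hx]

lemma lintegral_layerPart_sq_le (h : IsSource p φ F) (hp : 1 < p) (hp2 : p < 2) (σ : ℝ) (k : ℤ)
    (t : ℝ) : ∫⁻ x, ‖layerPart σ p φ F k (t, x)‖ₑ ^ 2 ≤
      (2 ^ (-(k * (σ * (1 / p - 1 / 2)))) * partSize σ p φ F k t) ^ 2 := by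
  refine le_trans (le_of_eq ?_) (lintegral_layer_sq_le hp hp2
    (h.measurable_slice t).enorm k)
  rw [← lintegral_indicator (measurableSet_layer σ p _ (h.measurable_slice t).enorm k)]
  congr 1; ext x
  by_cases hx : x ∈ layer σ p (φ t) (fun x => ‖F (t, x)‖ₑ) k <;>
    simp [layerPart, Set.indicator, hx]

variable {e : ℝ × E → V}

lemma integrable_layerVec (h : IsSource p φ F) (he : IsDispersive σ e) (k : ℤ) :
    Integrable (layerVec e σ p φ F k) :=
  (he.integrable_smul_prod (h.integrable_layerPart σ k)).integral_prod_left

/-- The energy bound for the `k`-th layer. -/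
lemma enorm_layerVec_le (h : IsSource p φ F) (he : IsDispersive σ e) (hσ : 0 < σ) (hp : 1 < p)
    (hp2 : p < 2) (k : ℤ) (t : ℝ) :
    ‖layerVec e σ p φ F k t‖ₑ ≤ (2 * 2 ^ (σ * (1 - 1 / p))) *
      2 ^ (-(k * (σ * (1 / p - 1 / 2)))) * partSize σ p φ F k t := by
  have h1 := he.energy_bound t ((h.measurable_layerPart σ k).comp
    (by fun_prop : Measurable fun x : E => (t, x))) (h.integrable_layerPart_slice σ k t)
  have h2 : ‖layerVec e σ p φ F k t‖ₑ ^ 2 ≤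
      (2 * (2 ^ (-(k * (σ * (1 / p - 1 / 2)))) * partSize σ p φ F k t)) ^ 2 := by
    refine h1.trans ?_
    rw [mul_pow]
    gcongr
    · norm_num
    · exact h.lintegral_layerPart_sq_le hp hp2 σ k t
  refine (ennreal_le_of_sq_le h2).trans ?_
  rw [mul_assoc 2, mul_assoc 2, mul_assoc]
  refine mul_le_mul_right ?_ _
  refine le_mul_of_one_le_left zero_le ?_
  rw [show (1 : ℝ≥0∞) = 2 ^ (0 : ℝ) by simp]
  apply two_rpow_mono
  have : 1 / p ≤ 1 := by rw [div_le_one (by linarith)]; exact hp.le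
  nlinarith

/-- The dispersive bound for the `k`-th layer at time `s` against the `l`-th layer at time `t`. -/
lemma enorm_inner_layerVec_le (h : IsSource p φ F) (he : IsDispersive σ e) (hp : 1 < p)
    (hp2 : p < 2) (k l : ℤ) {s t : ℝ} (hst : s ≠ t) :
    ‖inner ℂ (layerVec e σ p φ F k s) (layerVec e σ p φ F l t)‖ₑ ≤
      (2 * 2 ^ (σ * (1 - 1 / p))) ^ 2 * 2 ^ (((k : ℝ) + l) * (σ * (1 - 1 / p))) *
        (partSize σ p φ F k s * partSize σ p φ F l t) * decay σ (s - t) := by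
  refine (he.dispersive_bound hst (h.integrable_layerPart_slice σ k s)
    (h.integrable_layerPart_slice σ l t)).trans ?_
  refine mul_le_mul_left ?_ _
  refine (mul_le_mul' (h.lintegral_layerPart_le hp hp2 σ k s)
    (h.lintegral_layerPart_le hp hp2 σ l t)).trans ?_
  rw [add_mul, two_rpow_add]
  calc _ = (2 ^ (σ * (1 - 1 / p))) ^ 2 * (2 ^ ((k : ℝ) * (σ * (1 - 1 / p))) *
        2 ^ ((l : ℝ) * (σ * (1 - 1 / p)))) * (partSize σ p φ F k s * partSize σ p φ F l t) := by
        ring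
    _ ≤ _ := by
        gcongr
        exact le_mul_of_one_le_left (by simp) (by norm_num)

end IsSource

end Dispersive

/-! ### Dual Strichartz estimates -/

lemma ennreal_sqrt_mul_self (x : ℝ≥0∞) : x ^ (1 / 2 : ℝ) * x ^ (1 / 2 : ℝ) = x := by
  rw [← ENNReal.rpow_add_of_nonneg _ _ (by norm_num) (by norm_num)]; norm_num

lemma ennreal_sq_sqrt (x : ℝ≥0∞) : (x ^ 2) ^ (1 / 2 : ℝ) = x := by
  rw [← ENNReal.rpow_natCast, ← ENNReal.rpow_mul]; norm_num

/-- Schur's test for a finite bilinear form on `ℤ`. -/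
lemma schur_sum_le (S : Finset ℤ) (c c' : ℤ → ℝ≥0∞) (w : ℤ → ℤ → ℝ≥0∞) {G A B : ℝ≥0∞}
    (h1 : ∀ k, ∑ l ∈ S, w k l ≤ G) (h2 : ∀ l, ∑ k ∈ S, w k l ≤ G)
    (hA : ∑ k ∈ S, c k ^ 2 ≤ A ^ 2) (hB : ∑ k ∈ S, c' k ^ 2 ≤ B ^ 2) :
    ∑ k ∈ S, ∑ l ∈ S, w k l * (c k * c' l) ≤ G * (A * B) := by
  have hsq : ∀ x y : ℝ≥0∞, (x ^ (1 / 2 : ℝ) * y) ^ (2 : ℝ) = x * y ^ 2 := by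
    intro x y
    rw [ENNReal.mul_rpow_of_nonneg _ _ (by norm_num), ← ENNReal.rpow_mul,
      ← ENNReal.rpow_natCast y 2]
    norm_num
  have hcs := ENNReal.inner_le_Lp_mul_Lq (S ×ˢ S)
    (fun z => w z.1 z.2 ^ (1 / 2 : ℝ) * c z.1) (fun z => w z.1 z.2 ^ (1 / 2 : ℝ) * c' z.2)
    Real.HolderConjugate.two_two
  simp_rw [hsq] at hcs
  rw [Finset.sum_product] at hcs
  have e1 : ∑ z ∈ S ×ˢ S, w z.1 z.2 * c z.1 ^ 2 ≤ G * A ^ 2 := by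
    rw [Finset.sum_product]
    calc _ = ∑ k ∈ S, (∑ l ∈ S, w k l) * c k ^ 2 := by simp_rw [Finset.sum_mul]
      _ ≤ ∑ k ∈ S, G * c k ^ 2 := by gcongr with k _; exact h1 k
      _ ≤ _ := by rw [← Finset.mul_sum]; gcongr
  have e2 : ∑ z ∈ S ×ˢ S, w z.1 z.2 * c' z.2 ^ 2 ≤ G * B ^ 2 := by
    rw [Finset.sum_product, Finset.sum_comm]
    calc _ = ∑ l ∈ S, (∑ k ∈ S, w k l) * c' l ^ 2 := by simp_rw [Finset.sum_mul]
      _ ≤ ∑ k ∈ S, G * c' k ^ 2 := by gcongr with k _; exact h2 k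
      _ ≤ _ := by rw [← Finset.mul_sum]; gcongr
  calc _ = ∑ k ∈ S, ∑ l ∈ S, w k l ^ (1 / 2 : ℝ) * c k * (w k l ^ (1 / 2 : ℝ) * c' l) := by
        refine Finset.sum_congr rfl fun k _ => Finset.sum_congr rfl fun l _ => ?_
        conv_lhs => rw [← ennreal_sqrt_mul_self (w k l)]
        ring
    _ ≤ _ := hcs
    _ ≤ (G * A ^ 2) ^ (1 / 2 : ℝ) * (G * B ^ 2) ^ (1 / 2 : ℝ) := by gcongr
    _ = _ := by
        rw [ENNReal.mul_rpow_of_nonneg _ _ (by norm_num),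
          ENNReal.mul_rpow_of_nonneg _ _ (by norm_num), ennreal_sq_sqrt, ennreal_sq_sqrt]
        conv_rhs => rw [← ennreal_sqrt_mul_self G]
        ring

lemma decay_eq_two_rpow (a : ℝ) {x : ℝ} (hx : x ≠ 0) :
    decay a x = 2 ^ (-(a * Real.logb 2 |x|)) := by
  have h : |x| = 2 ^ Real.logb 2 |x| :=
    (Real.rpow_logb (by norm_num) (by norm_num) (abs_pos.2 hx)).symm
  rw [decay]
  conv_lhs => rw [h]
  rw [ofReal_two_rpow, ← ENNReal.rpow_mul]
  congr 1; ring

section Dispersive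

set_option linter.unusedSectionVars false

variable {V : Type*} [NormedAddCommGroup V] [InnerProductSpace ℂ V] [CompleteSpace V]
variable {E : Type*} [NormedAddCommGroup E] [InnerProductSpace ℝ E] [FiniteDimensional ℝ E]
  [MeasurableSpace E] [BorelSpace E]

/-- The dual Strichartz estimate `‖∫∫ F e‖ ≲ ‖F‖_{L^m_t L^p_x}` for finite sums of layers of `F`,
with a constant uniform in the family `e`. -/
def DualEstimate (V E : Type*) [NormedAddCommGroup V] [InnerProductSpace ℂ V] [CompleteSpace V]
    [NormedAddCommGroup E] [InnerProductSpace ℝ E] [FiniteDimensional ℝ E]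
    [MeasurableSpace E] [BorelSpace E] (σ p m : ℝ) : Prop :=
  ∃ C : ℝ≥0∞, C ≠ ⊤ ∧ ∀ e : ℝ × E → V, IsDispersive σ e → ∀ φ F, IsSource p φ F →
    ∀ S : Finset ℤ, ‖∑ k ∈ S, ∫ t, layerVec e σ p φ F k t‖ₑ ^ 2 ≤
      C * (∫⁻ t, φ t ^ m) ^ (2 / m)

/-- The dual estimate at the endpoint `m = 2`: the layers of `F` satisfy the hypotheses of the
abstract bound `keelTao_sum_le`. -/
lemma dualEstimate_endpoint {σ p : ℝ} (hσ : 3 / 2 ≤ σ) (hp : 1 < p) (hp2 : p < 2)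
    (hα : σ * (1 - 1 / p) = (σ - 1) / 2) (hβ : σ * (1 / p - 1 / 2) = 1 / 2) :
    DualEstimate V E σ p 2 := by
  refine ⟨32 * (2 * 2 ^ (σ * (1 - 1 / p))) ^ 2 * (2 ^ (1 / 32 : ℝ) * geomSum (1 / 32)) ^ 2, ?_, ?_⟩
  · have h1 := two_rpow_ne_top (σ * (1 - 1 / p))
    have h2 := two_rpow_ne_top (1 / 32)
    have h3 := geomSum_ne_top (γ := 1 / 32) (by norm_num)
    exact ENNReal.mul_ne_top (ENNReal.mul_ne_top (by norm_num)
      (ENNReal.pow_ne_top (ENNReal.mul_ne_top (by norm_num) h1)))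
      (ENNReal.pow_ne_top (ENNReal.mul_ne_top h2 h3))
  · intro e he φ F hF S
    refine (keelTao_sum_le hσ S (c := partSize σ p φ F) (fun k => hF.integrable_layerVec he k)
      (fun k => hF.measurable_partSize σ k) (2 * 2 ^ (σ * (1 - 1 / p))) ?_ ?_).trans ?_
    · intro k t
      refine (hF.enorm_layerVec_le he (by linarith) hp hp2 k t).trans (le_of_eq ?_)
      rw [hβ]; congr 3; ring
    · intro k l s t hst
      refine (hF.enorm_inner_layerVec_le he hp hp2 k l hst).trans (le_of_eq ?_)
      congr 3; rw [hα]; ring_nf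
    · refine mul_le_mul_right ?_ _
      rw [← lintegral_finsetSum _ (fun k _ => (hF.measurable_partSize σ k).pow_const 2)]
      norm_num
      gcongr with t
      exact hF.sum_partSize_sq_le (by linarith) hp hp2 t S

/-- The dual estimate away from the endpoint. For fixed times `s ≠ t`, taking the better of the
energy and the dispersive bound for each pair of layers `(k, l)` gives decay in
`|k + l - 2 log₂|s - t||`; Schur's test sums the layers, leaving the kernel `|s - t|^{-(2 - 2/m)}`,
to which the Hardy–Littlewood–Sobolev inequality in time applies. -/
lemma dualEstimate_interior {σ p m : ℝ} (hσ : 0 < σ) (hp : 1 < p) (hp2 : p < 2)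
    (hm1 : 1 < m) (hm2 : m < 2) (hβ : σ * (1 / p - 1 / 2) = 1 - 1 / m) :
    DualEstimate V E σ p m := by
  set α := σ * (1 - 1 / p) with hα_def
  set β := σ * (1 / p - 1 / 2) with hβ_def
  have hα0 : 0 < α := by
    have : 1 / p < 1 := by rw [div_lt_one (by linarith)]; exact hp
    exact mul_pos hσ (by linarith)
  have hβ0 : 0 < β := by
    have : 1 / m < 1 := by rw [div_lt_one (by linarith)]; exact hm1
    rw [hβ]; linarith
  set γ := min α β with hγ_def
  have hγ0 : 0 < γ := lt_min hα0 hβ0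
  set M : ℝ≥0∞ := 2 * 2 ^ α with hM
  set G : ℝ≥0∞ := 2 ^ γ * geomSum γ with hG
  refine ⟨M ^ 2 * G * (2 * ENNReal.ofReal (2 / (2 / m - 1) + 2)), ?_, ?_⟩
  · refine ENNReal.mul_ne_top (ENNReal.mul_ne_top (ENNReal.pow_ne_top (ENNReal.mul_ne_top
      (by norm_num) (two_rpow_ne_top _))) (ENNReal.mul_ne_top (two_rpow_ne_top _)
      (geomSum_ne_top hγ0))) (ENNReal.mul_ne_top (by norm_num) ENNReal.ofReal_ne_top)
  intro e he φ F hF S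
  rw [← integral_finsetSum _ (fun k _ => hF.integrable_layerVec he k), mul_assoc (M ^ 2 * G)]
  refine enorm_integral_sq_le_of_decay hm1 hm2
    (integrable_finsetSum _ fun k _ => hF.integrable_layerVec he k) hF.meas_size (M ^ 2 * G) ?_
  intro s t hst
  have hst0 : s - t ≠ 0 := sub_ne_zero.2 hst
  set y := Real.logb 2 |s - t| with hy
  set w : ℤ → ℤ → ℝ≥0∞ := fun k l => 2 ^ (-γ * |((k + l : ℤ) : ℝ) - 2 * y|) with hw
  have hwk : ∀ k, ∑ l ∈ S, w k l ≤ G := by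
    intro k
    refine (ENNReal.sum_le_tsum S).trans ?_
    exact ((Equiv.addLeft k).tsum_eq fun n : ℤ => (2 : ℝ≥0∞) ^ (-γ * |(n : ℝ) - 2 * y|)).trans_le
      (geomSum_shift hγ0 (2 * y))
  have hwl : ∀ l, ∑ k ∈ S, w k l ≤ G := by
    intro l
    refine (ENNReal.sum_le_tsum S).trans ?_
    exact ((Equiv.addRight l).tsum_eq fun n : ℤ => (2 : ℝ≥0∞) ^ (-γ * |(n : ℝ) - 2 * y|)).trans_le
      (geomSum_shift hγ0 (2 * y))
  have hterm : ∀ k l, ‖inner ℂ (layerVec e σ p φ F k s) (layerVec e σ p φ F l t)‖ₑ ≤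
      M ^ 2 * decay (2 - 2 / m) (s - t) *
        (w k l * (partSize σ p φ F k s * partSize σ p φ F l t)) := by
    intro k l
    have key : ∀ x : ℝ, x ≤ -(2 * β * y) + -γ * |((k + l : ℤ) : ℝ) - 2 * y| →
        ‖inner ℂ (layerVec e σ p φ F k s) (layerVec e σ p φ F l t)‖ₑ ≤
          M ^ 2 * (2 ^ x * (partSize σ p φ F k s * partSize σ p φ F l t)) →
        ‖inner ℂ (layerVec e σ p φ F k s) (layerVec e σ p φ F l t)‖ₑ ≤
          M ^ 2 * decay (2 - 2 / m) (s - t) *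
          (w k l * (partSize σ p φ F k s * partSize σ p φ F l t)) := by
      intro x hx h
      refine h.trans ?_
      rw [decay_eq_two_rpow _ hst0, mul_assoc, ← mul_assoc (2 ^ _) (w k l), ← two_rpow_add]
      gcongr
      · norm_num
      · rw [show 2 - 2 / m = 2 * β by rw [hβ]; ring]
        exact hx
    have hsum : σ = 2 * (α + β) := by rw [hα_def, hβ_def]; ring
    -- The energy bound is the better one when `2^{k + l} ≥ |s - t|^2`, the dispersive bound otherwise.
    rcases le_total (2 * y) ((k + l : ℤ) : ℝ) with hn | hn
    · refine key (-(((k + l : ℤ) : ℝ) * β)) ?_ ?_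
      · rw [abs_of_nonneg (by linarith)]
        have := min_le_right α β
        nlinarith
      · refine (enorm_inner_le _ _).trans ((mul_le_mul' (hF.enorm_layerVec_le he hσ hp hp2 k s)
          (hF.enorm_layerVec_le he hσ hp hp2 l t)).trans (le_of_eq ?_))
        rw [show -(((k + l : ℤ) : ℝ) * β) = -((k : ℝ) * β) + -((l : ℝ) * β) by push_cast; ring,
          two_rpow_add]
        ring
    · refine key (((k + l : ℤ) : ℝ) * α - σ * y) ?_ ?_
      · rw [abs_of_nonpos (by linarith), hsum]
        have := min_le_left α β
        nlinarith
      · refine (hF.enorm_inner_layerVec_le he hp hp2 k l hst).trans (le_of_eq ?_)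
        rw [decay_eq_two_rpow _ hst0, sub_eq_add_neg (((k + l : ℤ) : ℝ) * α), two_rpow_add,
          Int.cast_add, ← hα_def, ← hM, ← hy]
        ring
  calc _ ≤ ∑ k ∈ S, ∑ l ∈ S,
        ‖inner ℂ (layerVec e σ p φ F k s) (layerVec e σ p φ F l t)‖ₑ := by
        simp_rw [sum_inner, inner_sum]
        refine (enorm_sum_le _ _).trans ?_
        gcongr
        exact enorm_sum_le _ _
    _ ≤ ∑ k ∈ S, ∑ l ∈ S, M ^ 2 * decay (2 - 2 / m) (s - t) *
        (w k l * (partSize σ p φ F k s * partSize σ p φ F l t)) := by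
        gcongr with k _ l _; exact hterm k l
    _ = M ^ 2 * decay (2 - 2 / m) (s - t) * ∑ k ∈ S, ∑ l ∈ S,
        w k l * (partSize σ p φ F k s * partSize σ p φ F l t) := by simp_rw [Finset.mul_sum]
    _ ≤ M ^ 2 * decay (2 - 2 / m) (s - t) * (G * (φ s * φ t)) := by
        gcongr
        exact schur_sum_le S _ _ w hwk hwl (hF.sum_partSize_sq_le hσ hp hp2 s S)
          (hF.sum_partSize_sq_le hσ hp hp2 t S)
    _ = _ := by ring

end Dispersive

/-! ### The dual function of an evolution -/

/-- Closing the duality argument: `X ≤ D X^{1 - 1/q}` with `X` finite gives `X ≤ D^q`. -/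
lemma ennreal_le_rpow_of_sq_le {X C D : ℝ≥0∞} {q m : ℝ} (hq : 1 < q) (hqm : (q - 1) * m = q)
    (hX : X ≠ ⊤) (h : X ^ 2 ≤ D ^ 2 * (C * X ^ (2 / m))) : X ≤ (C ^ (1 / 2 : ℝ) * D) ^ q := by
  rcases eq_or_ne X 0 with rfl | h0
  · simp
  have hm0 : m ≠ 0 := by rintro rfl; simp at hqm; linarith
  have hm : 2 / m = 2 - 2 / q := by
    have : q ≠ 0 := by linarith
    field_simp
    linear_combination -hqm
  have h1 : X ^ (2 / q) ≤ (C ^ (1 / 2 : ℝ) * D) ^ (2 : ℝ) := by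
    have e1 : X ^ (2 / q) = X ^ 2 * (X ^ (2 / m))⁻¹ := by
      rw [← ENNReal.rpow_neg, ← ENNReal.rpow_natCast, ← ENNReal.rpow_add _ _ h0 hX, hm]
      congr 1; push_cast; ring
    rw [e1, ← div_eq_mul_inv]
    refine ENNReal.div_le_of_le_mul (h.trans (le_of_eq ?_))
    rw [ENNReal.mul_rpow_of_nonneg _ _ (by norm_num), ← ENNReal.rpow_mul,
      ← ENNReal.rpow_natCast D 2]
    norm_num
    ring
  have h2 := ENNReal.rpow_le_rpow h1 (show 0 ≤ q / 2 by linarith)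
  rw [← ENNReal.rpow_mul, ← ENNReal.rpow_mul] at h2
  have : q ≠ 0 := by linarith
  rw [show 2 / q * (q / 2) = 1 by field_simp, show 2 * (q / 2) = q by ring] at h2
  simpa using h2

lemma ennreal_le_one_add_rpow (x : ℝ≥0∞) {p : ℝ} (hp : 1 ≤ p) : x ≤ 1 + x ^ p := by
  rcases le_total x 1 with h | h
  · exact h.trans le_self_add
  · refine le_trans ?_ le_add_self
    simpa using ENNReal.rpow_le_rpow_of_exponent_le h hp

section Dispersive

set_option linter.unusedSectionVars false

variable {V : Type*} [NormedAddCommGroup V] [InnerProductSpace ℂ V] [CompleteSpace V]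
variable {E : Type*} [NormedAddCommGroup E] [InnerProductSpace ℝ E] [FiniteDimensional ℝ E]
  [MeasurableSpace E] [BorelSpace E]

/-- The evolution `(t, x) ↦ ⟪e (t, x), v⟫` truncated to `T × B`. -/
noncomputable def trunc (e : ℝ × E → V) (v : V) (T : Set ℝ) (B : Set E) : ℝ × E → ℂ :=
  (T ×ˢ B).indicator fun z => inner ℂ (e z) v

/-- The `L^r` norm in space of a function of space-time. -/
noncomputable def sliceNorm (r : ℝ) (w : ℝ × E → ℂ) (t : ℝ) : ℝ≥0∞ :=
  (∫⁻ x, ‖w (t, x)‖ₑ ^ r) ^ (1 / r)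

/-- The function dual to `w` for the pairing of `L^q_t L^r_x` with its dual space. -/
noncomputable def dualFun (q r : ℝ) (w : ℝ × E → ℂ) (z : ℝ × E) : ℂ :=
  w z * ((‖w z‖ ^ (r - 2) * (sliceNorm r w z.1).toReal ^ (q - r) : ℝ) : ℂ)

lemma measurable_sliceNorm {r : ℝ} {w : ℝ × E → ℂ} (hw : Measurable w) :
    Measurable (sliceNorm r w) := by
  have : Measurable fun z : ℝ × E => ‖w z‖ₑ ^ r := by fun_prop
  exact (this.lintegral_prod_right' (ν := volume)).pow_const _

lemma measurable_dualFun {q r : ℝ} {w : ℝ × E → ℂ} (hw : Measurable w) :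
    Measurable (dualFun q r w) := by
  have := measurable_sliceNorm (r := r) hw
  unfold dualFun
  fun_prop

lemma sliceNorm_rpow {r : ℝ} (hr : 0 < r) (w : ℝ × E → ℂ) (t : ℝ) :
    sliceNorm r w t ^ r = ∫⁻ x, ‖w (t, x)‖ₑ ^ r := by
  rw [sliceNorm, ← ENNReal.rpow_mul]
  simp [hr.ne']

lemma enorm_dualFun {q r : ℝ} (hr : 2 < r) {w : ℝ × E → ℂ} {t : ℝ}
    (h0 : sliceNorm r w t ≠ 0) (ht : sliceNorm r w t ≠ ⊤) (x : E) :
    ‖dualFun q r w (t, x)‖ₑ = ‖w (t, x)‖ₑ ^ (r - 1) * sliceNorm r w t ^ (q - r) := by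
  have hN : 0 < (sliceNorm r w t).toReal := ENNReal.toReal_pos h0 ht
  rcases eq_or_ne (w (t, x)) 0 with hw | hw
  · simp only [dualFun, hw, zero_mul, enorm_zero]
    rw [ENNReal.zero_rpow_of_pos (by linarith), zero_mul]
  · have hw' : 0 < ‖w (t, x)‖ := norm_pos_iff.2 hw
    rw [dualFun, enorm_mul, ← ofReal_norm (((_ : ℝ) : ℂ)), Complex.norm_real,
      Real.norm_of_nonneg (by positivity), ENNReal.ofReal_mul (by positivity),
      ← ENNReal.ofReal_rpow_of_pos hw', ← ENNReal.ofReal_rpow_of_pos hN, ofReal_norm,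
      ENNReal.ofReal_toReal ht, ← mul_assoc]
    congr 1
    rw [show r - 1 = 1 + (r - 2) by ring, ENNReal.rpow_add _ _ (by simpa using hw) (by simp)]
    simp

lemma dualFun_ae_eq_zero {q r : ℝ} (hr : 2 < r) {w : ℝ × E → ℂ} (hw : Measurable w) {t : ℝ}
    (h0 : sliceNorm r w t = 0) : ∀ᵐ x, dualFun q r w (t, x) = 0 := by
  have h1 : ∫⁻ x, ‖w (t, x)‖ₑ ^ r = 0 := by
    rw [← sliceNorm_rpow (by linarith), h0, ENNReal.zero_rpow_of_pos (by linarith)]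
  rw [lintegral_eq_zero_iff (by fun_prop)] at h1
  filter_upwards [h1] with x hx
  have : w (t, x) = 0 := by
    simpa [show ¬ r < 0 by linarith, show 0 < r by linarith] using hx
  simp [dualFun, this]

/-- The size of the dual function at a fixed time: `‖dualFun(t)‖_p ≤ ‖w(t)‖_r^{q - 1}`, with `p`
conjugate to `r`. -/
lemma lintegral_dualFun_rpow {q r p : ℝ} (hr : 2 < r) (hp : 1 < p)
    (hpr : (r - 1) * p = r) {w : ℝ × E → ℂ} (hw : Measurable w) {t : ℝ}
    (ht : sliceNorm r w t ≠ ⊤) :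
    ∫⁻ x, ‖dualFun q r w (t, x)‖ₑ ^ p ≤ (sliceNorm r w t ^ (q - 1)) ^ p := by
  rcases eq_or_ne (sliceNorm r w t) 0 with h0 | h0
  · refine le_trans (le_of_eq ?_) zero_le
    rw [lintegral_eq_zero_iff' ?_]
    · filter_upwards [dualFun_ae_eq_zero (q := q) hr hw h0] with x hx
      simp [hx, show 0 < p by linarith]
    · have := measurable_dualFun (q := q) (r := r) hw
      exact Measurable.aemeasurable (by fun_prop)
  · simp_rw [enorm_dualFun hr h0 ht]
    have : ∀ x, (‖w (t, x)‖ₑ ^ (r - 1) * sliceNorm r w t ^ (q - r)) ^ p =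
        ‖w (t, x)‖ₑ ^ r * sliceNorm r w t ^ ((q - r) * p) := by
      intro x
      rw [ENNReal.mul_rpow_of_nonneg _ _ (by linarith), ← ENNReal.rpow_mul, ← ENNReal.rpow_mul, hpr]
    simp_rw [this]
    rw [lintegral_mul_const _ (by fun_prop), ← sliceNorm_rpow (by linarith),
      ← ENNReal.rpow_add _ _ h0 ht, ← ENNReal.rpow_mul]
    apply le_of_eq
    congr 1
    linear_combination -hpr

/-- The dual function is norming: its pairing with `w` at time `t` is `‖w(t)‖_r^q`. -/
lemma sliceNorm_rpow_eq_lintegral {q r : ℝ} (hr : 2 < r) {w : ℝ × E → ℂ}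
    (hw : Measurable w) {t : ℝ} (h0 : sliceNorm r w t ≠ 0) (ht : sliceNorm r w t ≠ ⊤) :
    sliceNorm r w t ^ q = ∫⁻ x, ‖dualFun q r w (t, x)‖ₑ * ‖w (t, x)‖ₑ := by
  simp_rw [enorm_dualFun hr h0 ht]
  have : ∀ x, ‖w (t, x)‖ₑ ^ (r - 1) * sliceNorm r w t ^ (q - r) * ‖w (t, x)‖ₑ =
      ‖w (t, x)‖ₑ ^ r * sliceNorm r w t ^ (q - r) := by
    intro x
    rw [mul_right_comm]
    congr 1
    conv_rhs => rw [show r = (r - 1) + 1 by ring,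
      ENNReal.rpow_add_of_nonneg _ _ (by linarith) (by norm_num)]
    simp
  simp_rw [this]
  rw [lintegral_mul_const _ (by fun_prop), ← sliceNorm_rpow (by linarith),
      ← ENNReal.rpow_add _ _ h0 ht]
  congr 1; ring

lemma enorm_layerPart_le (σ p : ℝ) (φ : ℝ → ℝ≥0∞) (F : ℝ × E → ℂ) (k : ℤ) (z : ℝ × E) :
    ‖layerPart σ p φ F k z‖ₑ ≤ ‖F z‖ₑ := by
  rw [IsSource.layerPart_eq]
  exact enorm_indicator_le_enorm_self _ _

lemma enorm_le_tsum_layerPart {σ p : ℝ} (hσ : 0 < σ) (hp : 0 < p) {φ : ℝ → ℝ≥0∞} {F : ℝ × E → ℂ}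
    {z : ℝ × E} (h0 : φ z.1 ≠ 0) (ht : φ z.1 ≠ ⊤) :
    ‖F z‖ₑ ≤ ∑' k, ‖layerPart σ p φ F k z‖ₑ := by
  rcases eq_or_ne (F z) 0 with hz | hz
  · simp [hz]
  obtain ⟨k, hk⟩ := exists_mem_layer hσ hp h0 ht (f := fun x => ‖F (z.1, x)‖ₑ) (x := z.2)
    (by simpa using hz) (by simp)
  refine le_trans (le_of_eq ?_) (ENNReal.le_tsum k)
  simp [layerPart, Set.indicator, hk]

end Dispersive

/-! ### Duality for truncated evolutions -/

section Dispersive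

set_option linter.unusedSectionVars false

variable {V : Type*} [NormedAddCommGroup V] [InnerProductSpace ℂ V] [CompleteSpace V]
variable {E : Type*} [NormedAddCommGroup E] [InnerProductSpace ℝ E] [FiniteDimensional ℝ E]
  [MeasurableSpace E] [BorelSpace E]

lemma measurable_trunc {σ : ℝ} {e : ℝ × E → V} (he : IsDispersive σ e) (v : V) {T : Set ℝ}
    {B : Set E} (hT : MeasurableSet T) (hB : MeasurableSet B) : Measurable (trunc e v T B) := by
  have : Continuous fun z => inner ℂ (e z) v := he.cont.inner continuous_const
  exact this.measurable.indicator (hT.prod hB)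

lemma exists_enorm_trunc_le {σ : ℝ} {e : ℝ × E → V} (he : IsDispersive σ e) (v : V) (T : Set ℝ)
    (B : Set E) : ∃ K : ℝ≥0∞, K ≠ ⊤ ∧ ∀ z, ‖trunc e v T B z‖ₑ ≤ (T ×ˢ B).indicator (fun _ => K) z := by
  obtain ⟨K, hK⟩ := he.bdd
  refine ⟨ENNReal.ofReal K * ‖v‖ₑ, ENNReal.mul_ne_top ENNReal.ofReal_ne_top (by simp), ?_⟩
  intro z
  by_cases hz : z ∈ T ×ˢ B
  · rw [trunc, Set.indicator_of_mem hz, Set.indicator_of_mem hz]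
    refine (enorm_inner_le _ _).trans ?_
    gcongr
    rw [← ofReal_norm]
    exact ENNReal.ofReal_le_ofReal (hK z)
  · rw [trunc, Set.indicator_of_notMem hz, Set.indicator_of_notMem hz]; simp

lemma exists_sliceNorm_trunc_le {σ r : ℝ} (hr : 0 < r) {e : ℝ × E → V} (he : IsDispersive σ e)
    (v : V) (T : Set ℝ) {B : Set E} (hBm : MeasurableSet B) (hB : volume B ≠ ⊤) :
    ∃ K : ℝ≥0∞, K ≠ ⊤ ∧ ∀ t, sliceNorm r (trunc e v T B) t ≤ T.indicator (fun _ => K) t := by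
  obtain ⟨K, hK, hb⟩ := exists_enorm_trunc_le he v T B
  refine ⟨(K ^ r * volume B) ^ (1 / r), ENNReal.rpow_ne_top_of_nonneg (by positivity)
    (ENNReal.mul_ne_top (ENNReal.rpow_ne_top_of_nonneg hr.le hK) hB), ?_⟩
  intro t
  by_cases ht : t ∈ T
  · rw [Set.indicator_of_mem ht, sliceNorm]
    gcongr
    calc ∫⁻ x, ‖trunc e v T B (t, x)‖ₑ ^ r ≤ ∫⁻ x, B.indicator (fun _ => K ^ r) x := by
          gcongr with x
          by_cases hx : x ∈ B
          · rw [Set.indicator_of_mem hx]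
            have := hb (t, x)
            rw [Set.indicator_of_mem (Set.mk_mem_prod ht hx)] at this
            gcongr
          · rw [trunc, Set.indicator_of_notMem (by simp [hx])]
            simp [hr]
      _ = _ := by simp [lintegral_indicator hBm]
  · rw [Set.indicator_of_notMem ht, sliceNorm]
    have : ∀ x, trunc e v T B (t, x) = 0 := fun x => by
      rw [trunc, Set.indicator_of_notMem (by simp [ht])]
    simp [this, hr]

/-- The dual function of a truncated evolution is an admissible source. -/
lemma isSource_dualFun {σ p q r : ℝ} (hr : 2 < r) (hp : 1 < p) (hq : 1 < q)
    (hpr : (r - 1) * p = r) {e : ℝ × E → V} (he : IsDispersive σ e) (v : V) {T : Set ℝ}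
    {B : Set E} (hTm : MeasurableSet T) (hT : volume T ≠ ⊤) (hBm : MeasurableSet B)
    (hB : volume B ≠ ⊤) :
    IsSource p (fun t => sliceNorm r (trunc e v T B) t ^ (q - 1))
      (dualFun q r (trunc e v T B)) := by
  have hwm := measurable_trunc he v hTm hBm
  set w := trunc e v T B with hw
  obtain ⟨K, hK, hN⟩ := exists_sliceNorm_trunc_le (r := r) (by linarith) he v T hBm hB
  rw [← hw] at hN
  have hNt : ∀ t, sliceNorm r w t ≠ ⊤ := by
    intro t
    refine ((hN t).trans_lt ?_).ne
    refine lt_of_le_of_lt (Set.indicator_le_self' (fun _ _ => zero_le) t) hK.lt_top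
  have hFm := measurable_dualFun (q := q) (r := r) hwm
  have hbound : ∀ t, ∫⁻ x, ‖dualFun q r w (t, x)‖ₑ ^ p ≤ (sliceNorm r w t ^ (q - 1)) ^ p :=
    fun t => lintegral_dualFun_rpow hr hp hpr hwm (hNt t)
  -- Off `T × B` the dual function vanishes, and `s ≤ 1 + s ^ p` on `T × B`.
  have hslice : ∀ t, ∫⁻ x, ‖dualFun q r w (t, x)‖ₑ ≤
      T.indicator (fun _ => volume B + (K ^ (q - 1)) ^ p) t := by
    intro t
    by_cases ht : t ∈ T
    · rw [Set.indicator_of_mem ht]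
      calc ∫⁻ x, ‖dualFun q r w (t, x)‖ₑ
          ≤ ∫⁻ x, (B.indicator 1 x + ‖dualFun q r w (t, x)‖ₑ ^ p) := by
            gcongr with x
            by_cases hx : x ∈ B
            · rw [Set.indicator_of_mem hx]
              exact ennreal_le_one_add_rpow _ hp.le
            · have : w (t, x) = 0 := by
                rw [hw, trunc, Set.indicator_of_notMem (by simp [hx])]
              simp [dualFun, this]
        _ = volume B + ∫⁻ x, ‖dualFun q r w (t, x)‖ₑ ^ p := by
            rw [lintegral_add_left (measurable_one.indicator hBm), lintegral_indicator_one hBm]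
        _ ≤ _ := by
            gcongr
            refine (hbound t).trans ?_
            have := hN t
            rw [Set.indicator_of_mem ht] at this
            gcongr
    · have : ∀ x, dualFun q r w (t, x) = 0 := fun x => by
        rw [dualFun, hw, trunc, Set.indicator_of_notMem (by simp [ht]), zero_mul]
      simp [this]
  have hfin : volume B + (K ^ (q - 1)) ^ p ≠ ⊤ := by
    refine ENNReal.add_ne_top.2 ⟨hB, ?_⟩
    exact ENNReal.rpow_ne_top_of_nonneg (by linarith)
      (ENNReal.rpow_ne_top_of_nonneg (by linarith) hK)
  refine ⟨hFm, (measurable_sliceNorm hwm).pow_const _,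
    fun t => ENNReal.rpow_ne_top_of_nonneg (by linarith) (hNt t), hbound, ?_, ?_⟩
  · refine ⟨hFm.aestronglyMeasurable, ?_⟩
    rw [hasFiniteIntegral_iff_enorm, Measure.volume_eq_prod, lintegral_prod _ (by fun_prop)]
    refine (lintegral_mono hslice).trans_lt ?_
    rw [lintegral_indicator hTm, lintegral_const]
    exact (ENNReal.mul_ne_top hfin (by simpa using hT)).lt_top
  · intro t
    refine ⟨(hFm.comp (by fun_prop : Measurable fun x : E => (t, x))).aestronglyMeasurable, ?_⟩
    rw [hasFiniteIntegral_iff_enorm]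
    refine (hslice t).trans_lt ?_
    exact lt_of_le_of_lt (Set.indicator_le_self' (fun _ _ => zero_le) t) hfin.lt_top

/-- Since the dual function has the phase of the evolution, its pairing with the evolution has no
cancellation, layer by layer. -/
lemma inner_layerVec_eq {σ p q r : ℝ} {e : ℝ × E → V} (he : IsDispersive σ e) (v : V)
    {T : Set ℝ} {B : Set E} {φ : ℝ → ℝ≥0∞}
    (hF : IsSource p φ (dualFun q r (trunc e v T B))) (k : ℤ) :
    ∃ b : ℝ, 0 ≤ b ∧ inner ℂ (∫ t, layerVec e σ p φ (dualFun q r (trunc e v T B)) k t) v = (b : ℂ) ∧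
      ∫⁻ z, ‖layerPart σ p φ (dualFun q r (trunc e v T B)) k z‖ₑ * ‖trunc e v T B z‖ₑ =
        ENNReal.ofReal b := by
  set w := trunc e v T B with hw
  set F := dualFun q r w with hFdef
  have hintg := he.integrable_smul_prod (hF.integrable_layerPart σ k)
  have hpt : ∀ z, inner ℂ (layerPart σ p φ F k z • e z) v =
      ((‖layerPart σ p φ F k z‖ * ‖w z‖ : ℝ) : ℂ) := by
    intro z
    rw [IsSource.layerPart_eq]
    by_cases hz : z ∈ {z : ℝ × E | z.2 ∈ layer σ p (φ z.1) (fun x => ‖F (z.1, x)‖ₑ) k}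
    · rw [Set.indicator_of_mem hz]
      by_cases hz' : z ∈ T ×ˢ B
      · have h1 : w z = inner ℂ (e z) v := by rw [hw, trunc, Set.indicator_of_mem hz']
        rw [inner_smul_left, ← h1, hFdef, dualFun]
        have hx : 0 ≤ ‖w z‖ ^ (r - 2) * (sliceNorm r w z.1).toReal ^ (q - r) := by positivity
        generalize ‖w z‖ ^ (r - 2) * (sliceNorm r w z.1).toReal ^ (q - r) = a at hx
        rw [norm_mul, Complex.norm_real, Real.norm_of_nonneg hx, map_mul, Complex.conj_ofReal,
          mul_right_comm, Complex.conj_mul']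
        push_cast; ring
      · have h1 : w z = 0 := by rw [hw, trunc, Set.indicator_of_notMem hz']
        simp [hFdef, dualFun, h1]
    · rw [Set.indicator_of_notMem hz]; simp
  have hswap : ∫ t, layerVec e σ p φ F k t = ∫ z, layerPart σ p φ F k z • e z := by
    rw [Measure.volume_eq_prod, integral_prod _ hintg]; rfl
  have hintR : Integrable fun z => ‖layerPart σ p φ F k z‖ * ‖w z‖ := by
    have h1 : Integrable fun z => inner ℂ v (layerPart σ p φ F k z • e z) := hintg.const_inner v
    refine h1.norm.congr (.of_forall fun z => ?_)
    change ‖inner ℂ v (layerPart σ p φ F k z • e z)‖ = _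
    rw [norm_inner_symm, hpt, Complex.norm_real, Real.norm_of_nonneg (by positivity)]
  refine ⟨∫ z, ‖layerPart σ p φ F k z‖ * ‖w z‖, integral_nonneg fun z => by positivity, ?_, ?_⟩
  · rw [hswap, ← inner_conj_symm, ← integral_inner hintg, ← integral_conj, ← integral_complex_ofReal]
    congr 1; ext z
    rw [inner_conj_symm, hpt]
  · rw [ofReal_integral_eq_lintegral_ofReal hintR (.of_forall fun z => by positivity)]
    congr 1; ext z
    rw [ENNReal.ofReal_mul (norm_nonneg _), ofReal_norm, ofReal_norm]

/-- Duality: the dual estimate gives the homogeneous estimate for truncated evolutions, uniformly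
in the family `e` and in the truncation. -/
lemma DualEstimate.strichartz_trunc {σ p m q r : ℝ} (hσ : 0 < σ) (h : DualEstimate V E σ p m)
    (hp : 1 < p) (hr : 2 < r) (hq : 1 < q) (hpr : (r - 1) * p = r) (hqm : (q - 1) * m = q) :
    ∃ C : ℝ≥0∞, C ≠ ⊤ ∧ ∀ e : ℝ × E → V, IsDispersive σ e → ∀ (v : V) (T : Set ℝ) (B : Set E),
      MeasurableSet T → volume T ≠ ⊤ → MeasurableSet B → volume B ≠ ⊤ →
      ∫⁻ t, sliceNorm r (trunc e v T B) t ^ q ≤ (C * ‖v‖ₑ) ^ q := by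
  obtain ⟨C, hC, hdual⟩ := h
  refine ⟨C ^ (1 / 2 : ℝ), ENNReal.rpow_ne_top_of_nonneg (by norm_num) hC, ?_⟩
  intro e he v T B hTm hT hBm hB
  have hF := isSource_dualFun hr hp hq hpr he v hTm hT hBm hB
  have hwm := measurable_trunc he v hTm hBm
  set w := trunc e v T B with hw
  set N := sliceNorm r w with hNdef
  set φ := fun t => N t ^ (q - 1) with hφ
  obtain ⟨K, hK, hN⟩ := exists_sliceNorm_trunc_le (r := r) (by linarith) he v T hBm hB
  rw [← hw] at hN
  have hNt : ∀ t, N t ≠ ⊤ := by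
    intro t
    refine ((hN t).trans_lt ?_).ne
    refine lt_of_le_of_lt (Set.indicator_le_self' (fun _ _ => zero_le) t) hK.lt_top
  -- The truncation makes the norm finite a priori, so that it can be divided out at the end.
  have hX : ∫⁻ t, N t ^ q ≠ ⊤ := by
    have : ∀ t, N t ^ q ≤ T.indicator (fun _ => K ^ q) t := by
      intro t
      have h1 := hN t
      by_cases ht : t ∈ T
      · rw [Set.indicator_of_mem ht] at h1 ⊢
        gcongr
      · rw [Set.indicator_of_notMem ht] at h1 ⊢
        have : N t = 0 := le_antisymm h1 zero_le
        simp [this, show 0 < q by linarith]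
    refine ((lintegral_mono this).trans_lt ?_).ne
    rw [lintegral_indicator hTm, lintegral_const]
    exact (ENNReal.mul_ne_top (ENNReal.rpow_ne_top_of_nonneg (by linarith) hK)
      (by simpa using hT)).lt_top
  have hmeas : ∀ k, Measurable fun z => ‖layerPart σ p φ (dualFun q r w) k z‖ₑ * ‖w z‖ₑ := by
    intro k
    have := hF.measurable_layerPart σ k
    fun_prop
  have hpt : ∀ t, N t ^ q ≤
      ∫⁻ x, ∑' k, ‖layerPart σ p φ (dualFun q r w) k (t, x)‖ₑ * ‖w (t, x)‖ₑ := by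
    intro t
    rcases eq_or_ne (N t) 0 with h0 | h0
    · rw [h0, ENNReal.zero_rpow_of_pos (by linarith)]; exact zero_le
    · rw [hNdef, sliceNorm_rpow_eq_lintegral hr hwm h0 (hNt t)]
      gcongr with x
      rw [ENNReal.tsum_mul_right]
      gcongr
      refine enorm_le_tsum_layerPart hσ (by linarith) ?_ (hF.ne_top t)
      simp only [hφ, ne_eq, ENNReal.rpow_eq_zero_iff, not_or, not_and]
      exact ⟨fun h => absurd h h0, fun h => absurd h (hNt t)⟩
  have hsum : ∀ S : Finset ℤ, ∑ k ∈ S, ∫⁻ z, ‖layerPart σ p φ (dualFun q r w) k z‖ₑ * ‖w z‖ₑ ≤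
      ‖∑ k ∈ S, ∫ t, layerVec e σ p φ (dualFun q r w) k t‖ₑ * ‖v‖ₑ := by
    intro S
    choose b hb0 hb1 hb2 using fun k => inner_layerVec_eq he v hF k
    refine le_trans (le_of_eq ?_) (enorm_inner_le _ _)
    rw [sum_inner]
    simp_rw [hw, hb1, hb2]
    rw [← ENNReal.ofReal_sum_of_nonneg (fun k _ => hb0 k), ← Complex.ofReal_sum, ← ofReal_norm,
      Complex.norm_real, Real.norm_of_nonneg (Finset.sum_nonneg fun k _ => hb0 k)]
  have hmain : ∫⁻ t, N t ^ q ≤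
      (C * (∫⁻ t, N t ^ q) ^ (2 / m)) ^ (1 / 2 : ℝ) * ‖v‖ₑ := by
    calc ∫⁻ t, N t ^ q
        ≤ ∫⁻ t, ∫⁻ x, ∑' k, ‖layerPart σ p φ (dualFun q r w) k (t, x)‖ₑ * ‖w (t, x)‖ₑ :=
          lintegral_mono hpt
      _ = ∫⁻ z, ∑' k, ‖layerPart σ p φ (dualFun q r w) k z‖ₑ * ‖w z‖ₑ := by
          rw [Measure.volume_eq_prod,
            lintegral_prod _ (Measurable.ennreal_tsum hmeas).aemeasurable]
      _ = ∑' k, ∫⁻ z, ‖layerPart σ p φ (dualFun q r w) k z‖ₑ * ‖w z‖ₑ :=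
          lintegral_tsum fun k => (hmeas k).aemeasurable
      _ ≤ _ := by
          rw [ENNReal.tsum_eq_iSup_sum]
          refine iSup_le fun S => (hsum S).trans ?_
          gcongr
          have h1 := ENNReal.rpow_le_rpow (hdual e he φ _ hF S) (show (0 : ℝ) ≤ 1 / 2 by norm_num)
          rw [ennreal_sq_sqrt] at h1
          refine h1.trans (le_of_eq ?_)
          congr 4; ext t
          rw [hφ, ← ENNReal.rpow_mul, hqm]
  refine ennreal_le_rpow_of_sq_le hq hqm hX ?_
  calc (∫⁻ t, N t ^ q) ^ 2 ≤ ((C * (∫⁻ t, N t ^ q) ^ (2 / m)) ^ (1 / 2 : ℝ) * ‖v‖ₑ) ^ 2 := by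
        gcongr
    _ = _ := by
        rw [mul_pow, sq (_ ^ (1 / 2 : ℝ)), ennreal_sqrt_mul_self]; ring

end Dispersive

/-! ### The energy estimate and the supremum in space -/

section Dispersive

set_option linter.unusedSectionVars false

variable {V : Type*} [NormedAddCommGroup V] [InnerProductSpace ℂ V] [CompleteSpace V]
variable {E : Type*} [NormedAddCommGroup E] [InnerProductSpace ℝ E] [FiniteDimensional ℝ E]
  [MeasurableSpace E] [BorelSpace E]

lemma enorm_inner_integral_eq {α : Type*} [MeasurableSpace α] {μ : Measure α} {p : α → V} {v : V}
    {g : α → ℝ} (hp : Integrable p μ) (hg : ∀ a, 0 ≤ g a) (h : ∀ a, inner ℂ (p a) v = (g a : ℂ)) :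
    ‖inner ℂ (∫ a, p a ∂μ) v‖ₑ = ∫⁻ a, ENNReal.ofReal (g a) ∂μ := by
  have h1 : Integrable g μ := by
    have h2 : Integrable (fun a => inner ℂ v (p a)) μ := hp.const_inner v
    refine h2.norm.congr (.of_forall fun a => ?_)
    change ‖inner ℂ v (p a)‖ = _
    rw [norm_inner_symm, h, Complex.norm_real, Real.norm_of_nonneg (hg a)]
  have h2 : inner ℂ (∫ a, p a ∂μ) v = ((∫ a, g a ∂μ : ℝ) : ℂ) := by
    rw [← inner_conj_symm, ← integral_inner hp, ← integral_conj, ← integral_complex_ofReal]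
    congr 1; ext a
    rw [inner_conj_symm, h]
  rw [h2, ← ofReal_norm, Complex.norm_real, Real.norm_of_nonneg (integral_nonneg hg),
    ofReal_integral_eq_lintegral_ofReal h1 (.of_forall hg)]

/-- The energy estimate, dual to `IsDispersive.energy_bound`. -/
lemma IsDispersive.energy_estimate {σ : ℝ} {e : ℝ × E → V} (he : IsDispersive σ e) (v : V) (t : ℝ)
    {B : Set E} (hBm : MeasurableSet B) (hB : volume B ≠ ⊤) :
    ∫⁻ x in B, ‖inner ℂ (e (t, x)) v‖ₑ ^ 2 ≤ 2 * ‖v‖ₑ ^ 2 := by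
  have hw : Continuous fun x : E => inner ℂ (e (t, x)) v :=
    (he.cont.comp (by fun_prop : Continuous fun x : E => (t, x))).inner continuous_const
  obtain ⟨K, hK⟩ := he.bdd
  set f : E → ℂ := B.indicator fun x => inner ℂ (e (t, x)) v with hf
  have hfm : Measurable f := hw.measurable.indicator hBm
  have hfint : Integrable f := by
    rw [hf, integrable_indicator_iff hBm]
    refine Measure.integrableOn_of_bounded hB hw.aestronglyMeasurable (M := K * ‖v‖) ?_
    refine .of_forall fun x => (norm_inner_le_norm _ _).trans ?_
    gcongr; exact hK _
  have hN : ∫⁻ x in B, ‖inner ℂ (e (t, x)) v‖ₑ ^ 2 = ∫⁻ x, ‖f x‖ₑ ^ 2 := by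
    rw [← lintegral_indicator hBm]
    congr 1; ext x
    by_cases hx : x ∈ B <;> simp [hf, hx]
  rw [hN]
  have hfin : ∫⁻ x, ‖f x‖ₑ ^ 2 ≠ ⊤ := by
    rw [← hN]
    refine (setLIntegral_lt_top_of_le_nnreal hB ⟨(K.toNNReal * ‖v‖₊) ^ 2, fun x _ => ?_⟩).ne
    push_cast
    gcongr
    refine (enorm_inner_le _ _).trans ?_
    gcongr
    · rw [← ofReal_norm]
      exact ENNReal.ofReal_le_ofReal (hK _)
    · exact le_rfl
  have h1 := enorm_inner_integral_eq (v := v) (g := fun x => ‖f x‖ ^ 2)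
    (he.integrable_smul t hfint) (fun x => by positivity) (fun x => by
      by_cases hx : x ∈ B
      · have : f x = inner ℂ (e (t, x)) v := by rw [hf, Set.indicator_of_mem hx]
        rw [inner_smul_left, ← this, Complex.conj_mul']
        push_cast; rfl
      · simp [hf, hx])
  simp only [ENNReal.ofReal_pow (norm_nonneg _), ofReal_norm] at h1
  have h2 : (∫⁻ x, ‖f x‖ₑ ^ 2) ^ 2 ≤ (2 * ∫⁻ x, ‖f x‖ₑ ^ 2) * ‖v‖ₑ ^ 2 := by
    rw [← h1]
    refine (pow_le_pow_left' (enorm_inner_le _ _) 2).trans ?_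
    rw [mul_pow, h1]
    gcongr
    exact he.energy_bound t hfm hfint
  generalize (∫⁻ x, ‖f x‖ₑ ^ 2) = N at h2 hfin
  rcases eq_or_ne N 0 with rfl | h0
  · simp
  · have : N * N ≤ N * (2 * ‖v‖ₑ ^ 2) := by rw [← sq]; exact h2.trans (le_of_eq (by ring))
    exact (ENNReal.mul_le_mul_iff_right h0 hfin).1 this

/-- A point at which `g (t, ·)` is at least as large as at finitely many given points can be chosen
measurably in `t`. -/
lemma exists_measurable_argmax {g : ℝ × E → ℝ≥0∞} (hg : Measurable g) (a : ℕ → E) (n : ℕ) :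
    ∃ ξ : ℝ → E, Measurable ξ ∧ ∀ t, ∀ k ≤ n, g (t, a k) ≤ g (t, ξ t) := by
  induction n with
  | zero => exact ⟨fun _ => a 0, measurable_const, fun t k hk => by simp [Nat.le_zero.1 hk]⟩
  | succ n ih =>
    obtain ⟨ξ, hξ, h⟩ := ih
    classical
    refine ⟨fun t => if g (t, ξ t) ≤ g (t, a (n + 1)) then a (n + 1) else ξ t, ?_, ?_⟩
    · refine Measurable.ite (measurableSet_le (by fun_prop) (by fun_prop)) measurable_const hξ
    · intro t k hk
      rcases Nat.le_succ_iff.1 hk with hk | rfl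
      · by_cases hc : g (t, ξ t) ≤ g (t, a (n + 1))
        · simp only [hc, if_true]; exact (h t k hk).trans hc
        · simp only [hc, if_false]; exact h t k hk
      · by_cases hc : g (t, ξ t) ≤ g (t, a (n + 1))
        · simp only [hc, if_true]; exact le_rfl
        · simp only [hc, if_false]; exact (not_le.1 hc).le

/-- The linearised estimate along a measurable path, from the Hardy–Littlewood–Sobolev inequality
alone. -/
lemma IsDispersive.path_estimate {e : ℝ × E → V} (he : IsDispersive (1 / 2) e) (v : V)
    {T : Set ℝ} (hTm : MeasurableSet T) (hT : volume T ≠ ⊤) {ξ : ℝ → E} (hξ : Measurable ξ) :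
    ∫⁻ t in T, ‖inner ℂ (e (t, ξ t)) v‖ₑ ^ (4 : ℝ) ≤
      ((2 * ENNReal.ofReal (2 / (2 / (4 / 3) - 1) + 2)) ^ (1 / 2 : ℝ) * ‖v‖ₑ) ^ (4 : ℝ) := by
  obtain ⟨K, hK⟩ := he.bdd
  have hepath : StronglyMeasurable fun t => e (t, ξ t) :=
    he.cont.stronglyMeasurable.comp_measurable (by fun_prop)
  set w : ℝ → ℂ := T.indicator fun t => inner ℂ (e (t, ξ t)) v with hw
  have hwm : Measurable w :=
    (((he.cont.inner continuous_const).measurable).comp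
      (by fun_prop : Measurable fun t => (t, ξ t))).indicator hTm
  have hwb : ∀ t, ‖w t‖ ≤ T.indicator (fun _ => K * ‖v‖) t := by
    intro t
    by_cases ht : t ∈ T
    · simp only [hw, Set.indicator_of_mem ht]
      refine (norm_inner_le_norm _ _).trans ?_
      gcongr; exact hK _
    · simp [hw, ht]
  have hX : ∫⁻ t in T, ‖inner ℂ (e (t, ξ t)) v‖ₑ ^ (4 : ℝ) = ∫⁻ t, ‖w t‖ₑ ^ (4 : ℝ) := by
    rw [← lintegral_indicator hTm]
    congr 1; ext t
    by_cases ht : t ∈ T <;> simp [hw, ht]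
  rw [hX]
  have hfin : ∫⁻ t, ‖w t‖ₑ ^ (4 : ℝ) ≠ ⊤ := by
    have : ∀ t, ‖w t‖ₑ ^ (4 : ℝ) ≤ T.indicator (fun _ => ENNReal.ofReal (K * ‖v‖) ^ (4 : ℝ)) t := by
      intro t
      have := hwb t
      by_cases ht : t ∈ T
      · rw [Set.indicator_of_mem ht] at this ⊢
        gcongr
        rw [← ofReal_norm]; exact ENNReal.ofReal_le_ofReal this
      · simp [hw, ht]
    refine ((lintegral_mono this).trans_lt ?_).ne
    rw [lintegral_indicator hTm, lintegral_const]
    exact (ENNReal.mul_ne_top (by finiteness) (by simpa using hT)).lt_top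
  set p : ℝ → V := fun t => (w t * ((‖w t‖ ^ 2 : ℝ) : ℂ)) • e (t, ξ t) with hp
  have hpint : Integrable p := by
    have hpm : AEStronglyMeasurable p volume := by
      have : Measurable fun t => w t * ((‖w t‖ ^ 2 : ℝ) : ℂ) := by fun_prop
      exact this.aestronglyMeasurable.smul hepath.aestronglyMeasurable
    have hK0 : 0 ≤ K := (norm_nonneg _).trans (hK (0, 0))
    refine Integrable.mono' (g := T.indicator fun _ => (K * ‖v‖) * (K * ‖v‖) ^ 2 * K) ?_ hpm ?_
    · rw [integrable_indicator_iff hTm]; exact integrableOn_const hT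
    · refine .of_forall fun t => ?_
      have := hwb t
      by_cases ht : t ∈ T
      · rw [Set.indicator_of_mem ht] at this ⊢
        rw [hp, norm_smul, norm_mul, Complex.norm_real, norm_pow, norm_norm]
        gcongr
        exact hK _
      · simp [hp, hw, ht]
  have h1 := enorm_inner_integral_eq (v := v) (g := fun t => ‖w t‖ ^ 4) hpint
    (fun x => by positivity) (fun t => by
      by_cases ht : t ∈ T
      · have : w t = inner ℂ (e (t, ξ t)) v := by rw [hw, Set.indicator_of_mem ht]
        rw [hp, inner_smul_left, ← this, map_mul, Complex.conj_ofReal, mul_right_comm,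
          Complex.conj_mul']
        push_cast; ring
      · simp [hp, hw, ht])
  have h2 : ∫⁻ t, ENNReal.ofReal (‖w t‖ ^ 4) = ∫⁻ t, ‖w t‖ₑ ^ (4 : ℝ) := by
    congr 1; ext t
    rw [ENNReal.ofReal_pow (norm_nonneg _), ofReal_norm, ← ENNReal.rpow_natCast]
    norm_num
  rw [h2] at h1
  have h3 := enorm_integral_sq_le_of_decay (m := 4 / 3) (by norm_num) (by norm_num) hpint
    (φ := fun t => ‖w t‖ₑ ^ (3 : ℝ)) (by fun_prop) 1 (fun s t hst => by
      rw [hp, IsDispersive.enorm_inner_smul_smul, one_mul]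
      have h4 : ∀ t, ‖w t * ((‖w t‖ ^ 2 : ℝ) : ℂ)‖ₑ = ‖w t‖ₑ ^ (3 : ℝ) := by
        intro t
        rw [← ofReal_norm, norm_mul, Complex.norm_real, norm_pow, norm_norm, ← pow_succ',
          ENNReal.ofReal_pow (norm_nonneg _), ofReal_norm, ← ENNReal.rpow_natCast]
        norm_num
      rw [h4, h4]
      gcongr
      rw [show (2 - 2 / (4 / 3) : ℝ) = 1 / 2 by norm_num]
      exact he.disp _ _ _ _ hst)
  simp only [← ENNReal.rpow_mul] at h3
  rw [show (3 * (4 / 3) : ℝ) = 4 by norm_num, one_mul] at h3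
  refine ennreal_le_rpow_of_sq_le (m := 4 / 3) (by norm_num) (by norm_num) hfin ?_
  rw [← h1]
  refine (pow_le_pow_left' (enorm_inner_le _ _) 2).trans ?_
  rw [h1, mul_pow, mul_comm]
  gcongr

/-- The estimate in `L^4_t L^∞_x`: the supremum in space is linearised by a measurable choice of
points. The majorant `M` of the spatial supremum serves to have a measurable function. -/
lemma IsDispersive.sup_estimate {e : ℝ × E → V} (he : IsDispersive (1 / 2) e) (v : V)
    {T : Set ℝ} (hTm : MeasurableSet T) (hT : volume T ≠ ⊤) :
    ∃ M : ℝ → ℝ≥0∞, Measurable M ∧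
      (∀ t, eLpNorm (fun x => inner ℂ (e (t, x)) v) ∞ volume ≤ M t) ∧
      ∫⁻ t in T, M t ^ (4 : ℝ) ≤
      ((2 * ENNReal.ofReal (2 / (2 / (4 / 3) - 1) + 2)) ^ (1 / 2 : ℝ) * ‖v‖ₑ) ^ (4 : ℝ) := by
  have hcont : Continuous fun z => inner ℂ (e z) v := he.cont.inner continuous_const
  set g : ℝ × E → ℝ≥0∞ := fun z => ‖inner ℂ (e z) v‖ₑ with hg
  have hgc : Continuous g := hcont.enorm
  set a := TopologicalSpace.denseSeq E with ha
  have hsup : ∀ t, eLpNorm (fun x => inner ℂ (e (t, x)) v) ∞ volume ≤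
      ⨆ n, ⨆ k ≤ n, g (t, a k) := by
    intro t
    rw [eLpNorm_exponent_top]
    refine essSup_le_of_ae_le _ (.of_forall fun x => ?_)
    have hcl : IsClosed {x | g (t, x) ≤ ⨆ n, ⨆ k ≤ n, g (t, a k)} :=
      isClosed_le (hgc.comp (by fun_prop)) continuous_const
    have hsub : Set.range a ⊆ {x | g (t, x) ≤ ⨆ n, ⨆ k ≤ n, g (t, a k)} := by
      rintro _ ⟨k, rfl⟩
      exact (le_iSup₂ (f := fun j (_ : j ≤ k) => g (t, a j)) k le_rfl).trans
        (le_iSup (fun n => ⨆ j ≤ n, g (t, a j)) k)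
    have := hcl.closure_subset_iff.2 hsub
    rw [(TopologicalSpace.denseRange_denseSeq E).closure_range] at this
    exact this (Set.mem_univ x)
  have hmono : Monotone fun n => fun t => (⨆ k ≤ n, g (t, a k)) ^ (4 : ℝ) := by
    intro n n' hn t
    refine ENNReal.rpow_le_rpow ?_ (by norm_num)
    exact biSup_mono fun k hk => hk.trans hn
  refine ⟨fun t => ⨆ n, ⨆ k ≤ n, g (t, a k), Measurable.iSup fun n => Measurable.iSup fun k =>
    Measurable.iSup fun _ => by fun_prop, hsup, ?_⟩
  calc _ ≤ ∫⁻ t in T, ⨆ n, (⨆ k ≤ n, g (t, a k)) ^ (4 : ℝ) := by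
        gcongr with t
        exact le_of_eq ((ENNReal.orderIsoRpow 4 (by norm_num)).map_iSup _)
    _ = ⨆ n, ∫⁻ t in T, (⨆ k ≤ n, g (t, a k)) ^ (4 : ℝ) := by
        refine lintegral_iSup (fun n => ?_) hmono
        refine Measurable.pow_const ?_ _
        exact Measurable.iSup fun k => Measurable.iSup fun _ => by fun_prop
    _ ≤ _ := by
        refine iSup_le fun n => ?_
        obtain ⟨ξ, hξ, h⟩ := exists_measurable_argmax hgc.measurable a n
        refine le_trans ?_ (he.path_estimate v hTm hT hξ)
        gcongr with t
        exact iSup₂_le (h t)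

end Dispersive

/-! ### The heat kernel at complex times -/

section Kernel

open scoped ComplexConjugate

variable {d : ℕ}

/-- The complex time `ε + i t` at which the heat kernel is evaluated. -/
noncomputable def cplxTime (ε t : ℝ) : ℂ := ε + t * I

@[simp] lemma cplxTime_re (ε t : ℝ) : (cplxTime ε t).re = ε := by simp [cplxTime]
@[simp] lemma cplxTime_im (ε t : ℝ) : (cplxTime ε t).im = t := by simp [cplxTime]

lemma cplxTime_ne_zero {ε : ℝ} (hε : 0 < ε) (t : ℝ) : cplxTime ε t ≠ 0 := by
  intro h
  have := congrArg Complex.re h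
  simp at this; linarith

/-- The heat kernel in dimension `d` at the complex time `ε + i t`. -/
noncomputable def heatKer (d : ℕ) (ε t : ℝ) (x : EuclideanSpace ℝ (Fin d)) : ℂ :=
  (4 * (Real.pi : ℂ) * cplxTime ε t) ^ (-(d : ℂ) / 2) *
    cexp (-(1 / (4 * cplxTime ε t)) * ‖x‖ ^ 2)

lemma rate_re_pos {ε : ℝ} (hε : 0 < ε) (t : ℝ) : 0 < (1 / (4 * cplxTime ε t)).re := by
  rw [one_div, Complex.inv_re]
  have h : 4 * cplxTime ε t ≠ 0 := mul_ne_zero (by norm_num) (cplxTime_ne_zero hε t)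
  have : (4 * cplxTime ε t).re = 4 * ε := by simp
  rw [this]
  have := Complex.normSq_pos.2 h
  positivity

lemma continuous_heatKer (ε t : ℝ) : Continuous (heatKer d ε t) := by
  unfold heatKer; fun_prop

lemma norm_heatKer (ε t : ℝ) (x : EuclideanSpace ℝ (Fin d)) :
    ‖heatKer d ε t x‖ = ‖(4 * (Real.pi : ℂ) * cplxTime ε t) ^ (-(d : ℂ) / 2)‖ *
      Real.exp (-(1 / (4 * cplxTime ε t)).re * ‖x‖ ^ 2) := by
  rw [heatKer, norm_mul, Complex.norm_exp, ← Complex.ofReal_pow, Complex.re_mul_ofReal,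
    Complex.neg_re]

lemma integrable_gaussian {b : ℝ} (hb : 0 < b) :
    Integrable fun x : EuclideanSpace ℝ (Fin d) => Real.exp (-b * ‖x‖ ^ 2) := by
  have := (GaussianFourier.integrable_cexp_neg_mul_sq_norm_add (b := (b : ℂ)) (by simpa) 0
    (0 : EuclideanSpace ℝ (Fin d))).norm
  refine this.congr (.of_forall fun x => ?_)
  simp only [Complex.norm_exp, zero_mul, add_zero]
  norm_cast

lemma memLp_heatKer {ε : ℝ} (hε : 0 < ε) (t : ℝ) (x : EuclideanSpace ℝ (Fin d)) :
    MemLp (fun y => conj (heatKer d ε t (x - y))) 2 volume := by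
  have hc : Continuous fun y => conj (heatKer d ε t (x - y)) :=
    Complex.continuous_conj.comp ((continuous_heatKer ε t).comp (by fun_prop))
  rw [memLp_two_iff_integrable_sq_norm hc.aestronglyMeasurable]
  have h1 := (integrable_gaussian (d := d) (mul_pos two_pos (rate_re_pos hε t))).comp_sub_left x
  refine (h1.const_mul (‖(4 * (Real.pi : ℂ) * cplxTime ε t) ^ (-(d : ℂ) / 2)‖ ^ 2)).congr
    (.of_forall fun y => ?_)
  simp only [RCLike.norm_conj, norm_heatKer, mul_pow, ← Real.exp_nat_mul]
  congr 2; push_cast; ring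

/-- The vector of `L²` representing evaluation at `(t, x)` of the evolution regularised by the
heat flow at time `ε`. -/
noncomputable def heatVec (d : ℕ) {ε : ℝ} (hε : 0 < ε)
    (z : ℝ × EuclideanSpace ℝ (Fin d)) : Lp ℂ 2 (volume : Measure (EuclideanSpace ℝ (Fin d))) :=
  (memLp_heatKer hε z.1 z.2).toLp _

lemma inner_toLp {f g : EuclideanSpace ℝ (Fin d) → ℂ} (hf : MemLp f 2 volume)
    (hg : MemLp g 2 volume) : inner ℂ (hf.toLp f) (hg.toLp g) = ∫ y, conj (f y) * g y := by
  rw [L2.inner_def]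
  refine integral_congr_ae ?_
  filter_upwards [hf.coeFn_toLp, hg.coeFn_toLp] with y h1 h2
  rw [h1, h2]
  simp [RCLike.inner_apply, mul_comm]

lemma inner_heatVec {ε : ℝ} (hε : 0 < ε) (t : ℝ) (x : EuclideanSpace ℝ (Fin d))
    {u : EuclideanSpace ℝ (Fin d) → ℂ} (hu : MemLp u 2 volume) :
    inner ℂ (heatVec d hε (t, x)) (hu.toLp u) = ∫ y, heatKer d ε t (x - y) * u y := by
  rw [heatVec, inner_toLp]
  simp

/-- The product of two Gaussians centred at different points integrates to a Gaussian. -/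
lemma integral_gaussian_mul_gaussian {b b' : ℂ} (hb : 0 < b.re) (hb' : 0 < b'.re)
    (x x' : EuclideanSpace ℝ (Fin d)) :
    ∫ y, cexp (-b * ‖x - y‖ ^ 2) * cexp (-b' * ‖x' - y‖ ^ 2) =
      (Real.pi / (b + b')) ^ ((d : ℂ) / 2) * cexp (-(b * b' / (b + b')) * ‖x - x'‖ ^ 2) := by
  have hs : 0 < (b + b').re := by simp; linarith
  have hne : b + b' ≠ 0 := by intro h; rw [h] at hs; simp at hs
  rw [← integral_add_right_eq_self (μ := volume) _ x]
  have key : ∀ y : EuclideanSpace ℝ (Fin d),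
      cexp (-b * ‖x - (y + x)‖ ^ 2) * cexp (-b' * ‖x' - (y + x)‖ ^ 2) =
      cexp (-b' * ‖x - x'‖ ^ 2) *
        cexp (-(b + b') * ‖y‖ ^ 2 + (2 * b') * (inner ℝ (x' - x) y : ℝ)) := by
    intro y
    have h1 : ‖x - (y + x)‖ = ‖y‖ := by rw [show x - (y + x) = -y by abel, norm_neg]
    have h2 : ‖x' - (y + x)‖ ^ 2 = ‖x - x'‖ ^ 2 - 2 * inner ℝ (x' - x) y + ‖y‖ ^ 2 := by
      rw [show x' - (y + x) = (x' - x) - y by abel, norm_sub_sq_real, norm_sub_rev x' x]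
    have h2' : (‖x' - (y + x)‖ : ℂ) ^ 2 =
        ‖x - x'‖ ^ 2 - 2 * (inner ℝ (x' - x) y : ℝ) + ‖y‖ ^ 2 := by exact_mod_cast h2
    rw [h1, h2', ← Complex.exp_add, ← Complex.exp_add]
    congr 1; ring
  simp_rw [key]
  rw [integral_const_mul, GaussianFourier.integral_cexp_neg_mul_sq_norm_add hs, mul_left_comm,
    ← Complex.exp_add, finrank_euclideanSpace_fin, norm_sub_rev x' x]
  congr 2
  field_simp
  ring

lemma inner_heatVec_heatVec {ε : ℝ} (hε : 0 < ε) (z z' : ℝ × EuclideanSpace ℝ (Fin d)) :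
    inner ℂ (heatVec d hε z) (heatVec d hε z') =
      (4 * (Real.pi : ℂ) * cplxTime ε z.1) ^ (-(d : ℂ) / 2) *
      conj ((4 * (Real.pi : ℂ) * cplxTime ε z'.1) ^ (-(d : ℂ) / 2)) *
      (Real.pi / (1 / (4 * cplxTime ε z.1) + conj (1 / (4 * cplxTime ε z'.1)))) ^ ((d : ℂ) / 2) *
      cexp (-(1 / (4 * cplxTime (2 * ε) (z.1 - z'.1))) * ‖z.2 - z'.2‖ ^ 2) := by
  have hconj : cplxTime ε z.1 + conj (cplxTime ε z'.1) = cplxTime (2 * ε) (z.1 - z'.1) := by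
    apply Complex.ext <;> simp [two_mul, sub_eq_add_neg]
  rw [heatVec, heatVec, inner_toLp]
  have h1 : ∀ y, conj (conj (heatKer d ε z.1 (z.2 - y))) * conj (heatKer d ε z'.1 (z'.2 - y)) =
      ((4 * (Real.pi : ℂ) * cplxTime ε z.1) ^ (-(d : ℂ) / 2) *
        conj ((4 * (Real.pi : ℂ) * cplxTime ε z'.1) ^ (-(d : ℂ) / 2))) *
      (cexp (-(1 / (4 * cplxTime ε z.1)) * ‖z.2 - y‖ ^ 2) *
        cexp (-conj (1 / (4 * cplxTime ε z'.1)) * ‖z'.2 - y‖ ^ 2)) := by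
    intro y
    rw [heatKer, heatKer, Complex.conj_conj, map_mul, ← Complex.exp_conj]
    simp only [map_mul, map_neg, map_pow, Complex.conj_ofReal]
    ring
  simp_rw [h1]
  rw [integral_const_mul, integral_gaussian_mul_gaussian (rate_re_pos hε _)
    (by simpa using rate_re_pos hε z'.1), ← hconj]
  have hz := cplxTime_ne_zero hε z.1
  have hz' : conj (cplxTime ε z'.1) ≠ 0 := by simpa using cplxTime_ne_zero hε z'.1
  have hs : cplxTime ε z.1 + conj (cplxTime ε z'.1) ≠ 0 := by
    rw [hconj]; exact cplxTime_ne_zero (by linarith) _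
  have hs' : conj (cplxTime ε z'.1) + cplxTime ε z.1 ≠ 0 := by rwa [add_comm]
  have hrate : 1 / (4 * cplxTime ε z.1) * conj (1 / (4 * cplxTime ε z'.1)) /
      (1 / (4 * cplxTime ε z.1) + conj (1 / (4 * cplxTime ε z'.1))) =
      1 / (4 * (cplxTime ε z.1 + conj (cplxTime ε z'.1))) := by
    rw [map_div₀, map_one, map_mul, show conj (4 : ℂ) = 4 from by simp [Complex.conj_ofNat]]
    generalize conj (cplxTime ε z'.1) = a at *
    have h4 : 1 / (4 * cplxTime ε z.1) + 1 / (4 * a) =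
        (cplxTime ε z.1 + a) / (4 * cplxTime ε z.1 * a) := by field_simp; ring
    rw [h4]
    field_simp
  rw [hrate, ← mul_assoc]

/-- The Gram kernel has the modulus of the heat kernel at the complex time `2ε + i(t - s)`. -/
lemma norm_inner_heatVec_heatVec {ε : ℝ} (hε : 0 < ε) (z z' : ℝ × EuclideanSpace ℝ (Fin d)) :
    ‖inner ℂ (heatVec d hε z) (heatVec d hε z')‖ =
      (4 * Real.pi * ‖cplxTime (2 * ε) (z.1 - z'.1)‖) ^ (-(d : ℝ) / 2) *
      Real.exp (-(1 / (4 * cplxTime (2 * ε) (z.1 - z'.1))).re * ‖z.2 - z'.2‖ ^ 2) := by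
  have hconj : cplxTime ε z.1 + conj (cplxTime ε z'.1) = cplxTime (2 * ε) (z.1 - z'.1) := by
    apply Complex.ext <;> simp [two_mul, sub_eq_add_neg]
  have hz := cplxTime_ne_zero hε z.1
  have hz' : conj (cplxTime ε z'.1) ≠ 0 := by simpa using cplxTime_ne_zero hε z'.1
  have hs : cplxTime ε z.1 + conj (cplxTime ε z'.1) ≠ 0 := by
    rw [hconj]; exact cplxTime_ne_zero (by linarith) _
  have hpi := Real.pi_pos
  have hpos := norm_pos_iff.2 hz
  have hpos' := norm_pos_iff.2 hz'
  have hspos := norm_pos_iff.2 hs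
  have h4 : (Real.pi : ℂ) / (1 / (4 * cplxTime ε z.1) + conj (1 / (4 * cplxTime ε z'.1))) =
      4 * Real.pi * cplxTime ε z.1 * conj (cplxTime ε z'.1) /
        (cplxTime ε z.1 + conj (cplxTime ε z'.1)) := by
    rw [map_div₀, map_one, map_mul, show conj (4 : ℂ) = 4 from by simp [Complex.conj_ofNat]]
    generalize conj (cplxTime ε z'.1) = a at *
    have h4 : 1 / (4 * cplxTime ε z.1) + 1 / (4 * a) =
        (cplxTime ε z.1 + a) / (4 * cplxTime ε z.1 * a) := by field_simp; ring
    rw [h4]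
    field_simp
  have hre : (-(d : ℂ) / 2) = ((-(d : ℝ) / 2 : ℝ) : ℂ) := by push_cast; rfl
  have hre' : ((d : ℂ) / 2) = (((d : ℝ) / 2 : ℝ) : ℂ) := by push_cast; rfl
  rw [inner_heatVec_heatVec, h4, hconj]
  rw [norm_mul, norm_mul, norm_mul, RCLike.norm_conj, hre, hre', Complex.norm_cpow_real,
    Complex.norm_cpow_real, Complex.norm_cpow_real, Complex.norm_exp, ← Complex.ofReal_pow,
    Complex.re_mul_ofReal, Complex.neg_re]
  congr 1
  rw [hconj] at hspos
  rw [RCLike.norm_conj] at hpos'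
  simp only [norm_mul, norm_div, RCLike.norm_conj, Complex.norm_real, Complex.norm_ofNat,
    Real.norm_of_nonneg hpi.le]
  rw [neg_div, Real.rpow_neg (by positivity), Real.rpow_neg (by positivity),
    Real.rpow_neg (by positivity), ← Real.inv_rpow (by positivity), ← Real.inv_rpow (by positivity),
    ← Real.inv_rpow (by positivity), ← Real.mul_rpow (by positivity) (by positivity),
    ← Real.mul_rpow (by positivity) (by positivity)]
  congr 1
  field_simp

/-- The regularised evaluations have dispersive decay `|t - s|^{-d/2}`, uniformly in `ε`. At equal
times their Gram kernel is the heat kernel at time `2ε`, which has mass one. -/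
lemma isDispersive_heatVec {ε : ℝ} (hε : 0 < ε) :
    IsDispersive ((d : ℝ) / 2) (heatVec d hε) := by
  have hpi := Real.pi_pos
  have hpi3 := Real.pi_gt_three
  have h2ε : 0 < 2 * ε := by linarith
  have htime : ∀ t : ℝ, cplxTime (2 * ε) (t - t) = ((2 * ε : ℝ) : ℂ) := by
    intro t; apply Complex.ext <;> simp
  have hgram : ∀ t (x y : EuclideanSpace ℝ (Fin d)),
      ‖inner ℂ (heatVec d hε (t, x)) (heatVec d hε (t, y))‖ =
      (8 * Real.pi * ε) ^ (-(d : ℝ) / 2) * Real.exp (-(1 / (8 * ε)) * ‖x - y‖ ^ 2) := by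
    intro t x y
    rw [norm_inner_heatVec_heatVec]
    simp only [htime]
    rw [Complex.norm_real, Real.norm_of_nonneg h2ε.le]
    congr 2
    · ring
    · congr 2
      rw [show (1 / (4 * ((2 * ε : ℝ) : ℂ))) = ((1 / (8 * ε) : ℝ) : ℂ) by push_cast; ring,
        Complex.ofReal_re]
  have hnorm : ∀ z, ‖heatVec d hε z‖ ^ 2 = (8 * Real.pi * ε) ^ (-(d : ℝ) / 2) := by
    rintro ⟨t, x⟩
    have := hgram t x x
    rw [inner_self_eq_norm_sq_to_K, norm_pow] at this
    simpa using this
  refine ⟨?_, ?_, ?_, ?_⟩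
  · rw [continuous_iff_continuousAt]
    intro z₀
    have hin : ContinuousAt (fun z => inner ℂ (heatVec d hε z) (heatVec d hε z₀)) z₀ := by
      simp only [inner_heatVec_heatVec]
      have hct : ∀ a : ℝ, Continuous fun z : ℝ × EuclideanSpace ℝ (Fin d) =>
          cplxTime a z.1 := fun a => by unfold cplxTime; fun_prop
      have hct' : Continuous fun z : ℝ × EuclideanSpace ℝ (Fin d) =>
          cplxTime (2 * ε) (z.1 - z₀.1) := by unfold cplxTime; fun_prop
      have hrate : ContinuousAt (fun z : ℝ × EuclideanSpace ℝ (Fin d) =>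
          1 / (4 * cplxTime ε z.1)) z₀ :=
        continuousAt_const.div (continuousAt_const.mul (hct ε).continuousAt)
          (mul_ne_zero (by norm_num) (cplxTime_ne_zero hε _))
      have hre : 0 < (1 / (4 * cplxTime ε z₀.1) + conj (1 / (4 * cplxTime ε z₀.1))).re := by
        rw [Complex.add_re, Complex.conj_re]
        have := rate_re_pos hε z₀.1
        linarith
      have hne : 1 / (4 * cplxTime ε z₀.1) + conj (1 / (4 * cplxTime ε z₀.1)) ≠ 0 := by
        intro h; rw [h] at hre; simp at hre
      refine ContinuousAt.mul (ContinuousAt.mul (ContinuousAt.mul ?_ continuousAt_const) ?_) ?_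
      · refine (continuousAt_const.mul (hct ε).continuousAt).cpow continuousAt_const ?_
        left
        simp; positivity
      · refine (continuousAt_const.div (hrate.add continuousAt_const) hne).cpow
          continuousAt_const ?_
        left
        change 0 < ((Real.pi : ℂ) /
          (1 / (4 * cplxTime ε z₀.1) + conj (1 / (4 * cplxTime ε z₀.1)))).re
        rw [Complex.add_conj, ← Complex.ofReal_div, Complex.ofReal_re]
        have := rate_re_pos hε z₀.1
        positivity
      · refine Complex.continuous_exp.continuousAt.comp (ContinuousAt.mul ?_ (by fun_prop))
        exact (continuousAt_const.div (continuousAt_const.mul hct'.continuousAt)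
          (mul_ne_zero (by norm_num) (cplxTime_ne_zero h2ε _))).neg
    rw [ContinuousAt, tendsto_iff_norm_sub_tendsto_zero]
    have hsq : Filter.Tendsto (fun z => ‖heatVec d hε z - heatVec d hε z₀‖ ^ 2) (nhds z₀)
        (nhds 0) := by
      have h1 : ∀ z, ‖heatVec d hε z - heatVec d hε z₀‖ ^ 2 =
          (8 * Real.pi * ε) ^ (-(d : ℝ) / 2) -
            2 * (inner ℂ (heatVec d hε z) (heatVec d hε z₀)).re +
            (8 * Real.pi * ε) ^ (-(d : ℝ) / 2) := by
        intro z
        have := norm_sub_sq (𝕜 := ℂ) (heatVec d hε z) (heatVec d hε z₀)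
        rw [hnorm, hnorm] at this
        exact this
      simp only [h1]
      have h2 : ContinuousAt (fun z => (8 * Real.pi * ε) ^ (-(d : ℝ) / 2) -
            2 * (inner ℂ (heatVec d hε z) (heatVec d hε z₀)).re +
            (8 * Real.pi * ε) ^ (-(d : ℝ) / 2)) z₀ :=
        (continuousAt_const.sub (continuousAt_const.mul
          (Complex.continuous_re.continuousAt.comp hin))).add continuousAt_const
      have h3 := h2.tendsto
      rw [← h1] at h3
      simpa using h3
    have := hsq.sqrt
    simpa [Real.sqrt_sq (norm_nonneg _)] using this
  · refine ⟨Real.sqrt ((8 * Real.pi * ε) ^ (-(d : ℝ) / 2)), fun z => ?_⟩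
    exact Real.le_sqrt_of_sq_le (hnorm z).le
  · intro s t x y hst
    rw [← ofReal_norm, norm_inner_heatVec_heatVec, decay]
    have hst' : 0 < |s - t| := abs_pos.2 (sub_ne_zero.2 hst)
    rw [ENNReal.ofReal_rpow_of_pos hst']
    apply ENNReal.ofReal_le_ofReal
    have h1 : Real.exp (-(1 / (4 * cplxTime (2 * ε) (s - t))).re * ‖x - y‖ ^ 2) ≤ 1 := by
      rw [Real.exp_le_one_iff]
      have := rate_re_pos h2ε (s - t)
      nlinarith [sq_nonneg ‖x - y‖]
    have h2 : |s - t| ≤ 4 * Real.pi * ‖cplxTime (2 * ε) (s - t)‖ := by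
      have h3 := Complex.abs_im_le_norm (cplxTime (2 * ε) (s - t))
      rw [cplxTime_im] at h3
      nlinarith
    have h4 : (4 * Real.pi * ‖cplxTime (2 * ε) (s - t)‖) ^ (-(d : ℝ) / 2) ≤
        |s - t| ^ (-((d : ℝ) / 2)) := by
      rw [neg_div]
      exact Real.rpow_le_rpow_of_nonpos hst' h2 (by simp; positivity)
    calc _ ≤ |s - t| ^ (-((d : ℝ) / 2)) * 1 := by gcongr
      _ = _ := mul_one _
  · refine ⟨fun x => ENNReal.ofReal
      ((8 * Real.pi * ε) ^ (-(d : ℝ) / 2) * Real.exp (-(1 / (8 * ε)) * ‖x‖ ^ 2)), by fun_prop,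
      fun x => by simp, le_of_eq ?_, fun t x y => ?_⟩
    · have hb : 0 < 1 / (8 * ε) := by positivity
      rw [← ofReal_integral_eq_lintegral_ofReal ((integrable_gaussian hb).const_mul _)
        (.of_forall fun x => by positivity), integral_const_mul,
        GaussianFourier.integral_rexp_neg_mul_sq_norm hb, finrank_euclideanSpace_fin, neg_div,
        Real.rpow_neg (by positivity), show Real.pi / (1 / (8 * ε)) = 8 * Real.pi * ε by
          field_simp, inv_mul_cancel₀ (by positivity), ENNReal.ofReal_one]
    · rw [← ofReal_norm, hgram]

end Kernel

/-! ### Passage to the Schrödinger evolution -/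

section Approximation

/-- As `ε → 0` the regularised evolution converges to the Schrödinger evolution. -/
lemma tendsto_heatKer {d : ℕ} {u : EuclideanSpace ℝ (Fin d) → ℂ} (hu : Integrable u) {t : ℝ}
    (ht : t ≠ 0) (x : EuclideanSpace ℝ (Fin d)) {ε : ℕ → ℝ} (hε : ∀ n, 0 < ε n)
    (hlim : Filter.Tendsto ε Filter.atTop (nhds 0)) :
    Filter.Tendsto (fun n => ∫ y, heatKer d (ε n) t (x - y) * u y) Filter.atTop
      (nhds (schrodingerProp u t x)) := by
  have htc : (t : ℂ) ≠ 0 := by exact_mod_cast ht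
  have hz : cplxTime 0 t = I * t := by simp [cplxTime, mul_comm]
  have hS : schrodingerProp u t x = ∫ y, heatKer d 0 t (x - y) * u y := by
    rw [schrodingerProp, if_neg ht, ← integral_const_mul]
    congr 1; ext y
    rw [heatKer, hz, ← mul_assoc, ← mul_assoc]
    congr 3
    push_cast
    field_simp
    rw [I_sq]; ring
  rw [hS]
  have hpi := Real.pi_pos
  have ht' : 0 < |t| := abs_pos.2 ht
  refine tendsto_integral_of_dominated_convergence
    (fun y => (4 * Real.pi * |t|) ^ (-(d : ℝ) / 2) * ‖u y‖) (fun n => ?_) (hu.norm.const_mul _)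
    (fun n => .of_forall fun y => ?_) (.of_forall fun y => ?_)
  · exact ((continuous_heatKer _ _).comp (by fun_prop)).aestronglyMeasurable.mul
      hu.aestronglyMeasurable
  · rw [norm_mul, norm_heatKer]
    gcongr
    rw [show (-(d : ℂ) / 2) = ((-(d : ℝ) / 2 : ℝ) : ℂ) by push_cast; rfl, Complex.norm_cpow_real]
    have h1 : Real.exp (-(1 / (4 * cplxTime (ε n) t)).re * ‖x - y‖ ^ 2) ≤ 1 := by
      rw [Real.exp_le_one_iff]
      have := rate_re_pos (hε n) t
      nlinarith [sq_nonneg ‖x - y‖]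
    have h2 : 4 * Real.pi * |t| ≤ ‖4 * (Real.pi : ℂ) * cplxTime (ε n) t‖ := by
      have h3 := Complex.abs_im_le_norm (cplxTime (ε n) t)
      rw [cplxTime_im] at h3
      rw [norm_mul, norm_mul, Complex.norm_real, Complex.norm_ofNat, Real.norm_of_nonneg hpi.le]
      gcongr
    have h4 : ‖4 * (Real.pi : ℂ) * cplxTime (ε n) t‖ ^ (-(d : ℝ) / 2) ≤
        (4 * Real.pi * |t|) ^ (-(d : ℝ) / 2) := by
      refine Real.rpow_le_rpow_of_nonpos (by positivity) h2 ?_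
      rw [neg_div]; simp; positivity
    calc _ ≤ (4 * Real.pi * |t|) ^ (-(d : ℝ) / 2) * 1 := by gcongr
      _ = _ := mul_one _
  · refine Filter.Tendsto.mul ?_ tendsto_const_nhds
    have hct : Continuous fun a : ℝ => cplxTime a t := by unfold cplxTime; fun_prop
    have hc : ContinuousAt (fun a : ℝ => heatKer d a t (x - y)) 0 := by
      unfold heatKer
      refine ContinuousAt.mul ?_ ?_
      · refine (continuousAt_const.mul hct.continuousAt).cpow continuousAt_const ?_
        right
        simp [ht]
      · refine Complex.continuous_exp.continuousAt.comp (ContinuousAt.mul ?_ continuousAt_const)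
        refine (continuousAt_const.div (continuousAt_const.mul hct.continuousAt) ?_).neg
        change 4 * cplxTime 0 t ≠ 0
        rw [hz]
        simp [ht]
    exact hc.tendsto.comp hlim

/-- Fatou's lemma for mixed norms. -/
lemma lintegral_eLpNorm_le_of_tendsto {α : Type*} [MeasurableSpace α] {μ : Measure α} {q : ℝ}
    (hq : 0 < q) {r : ℝ≥0∞} {u : ℝ → α → ℂ} {f : ℕ → ℝ → α → ℂ} {M : ℕ → ℝ → ℝ≥0∞}
    (hM : ∀ n, Measurable (M n)) (hf : ∀ n t, AEStronglyMeasurable (f n t) μ)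
    (hfM : ∀ n t, eLpNorm (f n t) r μ ≤ M n t)
    (hlim : ∀ t, t ≠ 0 → ∀ x, Filter.Tendsto (fun n => f n t x) Filter.atTop (nhds (u t x)))
    {D : ℝ≥0∞} (hD : ∀ n, ∫⁻ t, M n t ^ q ≤ D ^ q) :
    (∫⁻ t, eLpNorm (u t) r μ ^ q) ^ (1 / q) ≤ D := by
  have h1 : ∀ᵐ t : ℝ, eLpNorm (u t) r μ ^ q ≤
      Filter.liminf (fun n => M n t ^ q) Filter.atTop := by
    filter_upwards [Measure.ae_ne volume (0 : ℝ)] with t ht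
    have h2 : eLpNorm (u t) r μ ≤ Filter.liminf (fun n => M n t) Filter.atTop :=
      (Lp.eLpNorm_lim_le_liminf_eLpNorm (hf · t) _ (.of_forall (hlim t ht))).trans
        (Filter.liminf_le_liminf (.of_forall fun n => hfM n t))
    refine (ENNReal.rpow_le_rpow h2 hq.le).trans (le_of_eq ?_)
    exact (ENNReal.orderIsoRpow q hq).liminf_apply
  have h2 : ∫⁻ t, eLpNorm (u t) r μ ^ q ≤ D ^ q := by
    refine (lintegral_mono_ae h1).trans
      ((lintegral_liminf_le fun n => (hM n).pow_const _).trans ?_)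
    refine Filter.liminf_le_of_le (by isBoundedDefault) fun b hb => ?_
    obtain ⟨n, hn⟩ := hb.exists
    exact hn.trans (hD n)
  refine (ENNReal.rpow_le_rpow h2 (by positivity)).trans (le_of_eq ?_)
  rw [← ENNReal.rpow_mul]
  simp [hq.ne']

lemma tendsto_indicator_of_eventually_mem {α : Type*} {B : ℕ → Set α} {g : ℕ → α → ℂ} {x : α}
    {c : ℂ} (hB : ∀ᶠ n in Filter.atTop, x ∈ B n)
    (h : Filter.Tendsto (fun n => g n x) Filter.atTop (nhds c)) :
    Filter.Tendsto (fun n => (B n).indicator (g n) x) Filter.atTop (nhds c) := by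
  refine h.congr' ?_
  filter_upwards [hB] with n hn
  rw [Set.indicator_of_mem hn]

lemma eventually_mem_ball {F : Type*} [SeminormedAddCommGroup F] (x : F) :
    ∀ᶠ n : ℕ in Filter.atTop, x ∈ Metric.ball (0 : F) n := by
  filter_upwards [tendsto_natCast_atTop_atTop.eventually_gt_atTop ‖x‖] with n hn
  simpa using hn

end Approximation

section Strichartz

variable {d : ℕ}

lemma tendsto_inner_heatVec (u₀ : SchwartzMap (EuclideanSpace ℝ (Fin d)) ℂ) {t : ℝ} (ht : t ≠ 0)
    (x : EuclideanSpace ℝ (Fin d)) :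
    Filter.Tendsto (fun n : ℕ => inner ℂ
      (heatVec d (Nat.one_div_pos_of_nat (α := ℝ) (n := n)) (t, x)) ((u₀.memLp 2 volume).toLp u₀))
      Filter.atTop (nhds (schrodingerProp (fun y => u₀ y) t x)) := by
  simp only [inner_heatVec]
  exact tendsto_heatKer u₀.integrable ht x (fun n => Nat.one_div_pos_of_nat)
    tendsto_one_div_add_atTop_nhds_zero_nat

lemma enorm_toLp_schwartz (u₀ : SchwartzMap (EuclideanSpace ℝ (Fin d)) ℂ) :
    ‖(u₀.memLp 2 volume).toLp u₀‖ₑ = eLpNorm (fun x => u₀ x) 2 volume := by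
  rw [Lp.enorm_def]
  exact eLpNorm_congr_ae (MemLp.coeFn_toLp _)

/-- The conservation-of-energy case `(q, r) = (∞, 2)`. -/
lemma strichartz_energy (u₀ : SchwartzMap (EuclideanSpace ℝ (Fin d)) ℂ) :
    essSup (fun t => eLpNorm (fun x => schrodingerProp (fun y => u₀ y) t x) 2 volume) volume ≤
      2 * eLpNorm (fun x => u₀ x) 2 volume := by
  refine essSup_le_of_ae_le _ ?_
  filter_upwards [Measure.ae_ne volume (0 : ℝ)] with t ht
  rw [← enorm_toLp_schwartz]
  set v := (u₀.memLp 2 volume).toLp u₀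
  set e := fun n : ℕ => heatVec d (Nat.one_div_pos_of_nat (α := ℝ) (n := n))
  have he : ∀ n, IsDispersive ((d : ℝ) / 2) (e n) := fun n => isDispersive_heatVec _
  have hc : ∀ n, Continuous fun x => inner ℂ (e n (t, x)) v := fun n =>
    ((he n).cont.comp (by fun_prop : Continuous fun x : EuclideanSpace ℝ (Fin d) => (t, x))).inner
      continuous_const
  have hB : ∀ n : ℕ, MeasurableSet (Metric.ball (0 : EuclideanSpace ℝ (Fin d)) n) :=
    fun n => measurableSet_ball
  refine (Lp.eLpNorm_lim_le_liminf_eLpNorm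
    (f := fun n => (Metric.ball 0 n).indicator fun x => inner ℂ (e n (t, x)) v)
    (fun n => ((hc n).measurable.indicator (hB n)).aestronglyMeasurable) _
    (.of_forall fun x => tendsto_indicator_of_eventually_mem (eventually_mem_ball x)
      (tendsto_inner_heatVec u₀ ht x))).trans ?_
  refine Filter.liminf_le_of_le (by isBoundedDefault) fun b hb => ?_
  obtain ⟨n, hn⟩ := hb.exists
  refine hn.trans ?_
  rw [eLpNorm_indicator_eq_eLpNorm_restrict (hB n),
    eLpNorm_eq_lintegral_rpow_enorm_toReal two_ne_zero ENNReal.ofNat_ne_top]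
  have h1 := (he n).energy_estimate v t (hB n) measure_ball_lt_top.ne
  have h2 : ∫⁻ x in Metric.ball 0 n, ‖inner ℂ (e n (t, x)) v‖ₑ ^ (2 : ℝ≥0∞).toReal ≤
      (2 * ‖v‖ₑ) ^ (2 : ℝ) := by
    simp only [ENNReal.toReal_ofNat, ENNReal.rpow_two]
    refine h1.trans ?_
    rw [mul_pow]
    gcongr
    norm_num
  refine (ENNReal.rpow_le_rpow h2 (by simp)).trans (le_of_eq ?_)
  rw [← ENNReal.rpow_mul]
  simp

/-- The case of finite exponents, from the dual estimate. -/
lemma strichartz_finite {p m q r : ℝ} (hd : 1 ≤ d)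
    (h : DualEstimate (Lp ℂ 2 (volume : Measure (EuclideanSpace ℝ (Fin d))))
      (EuclideanSpace ℝ (Fin d)) ((d : ℝ) / 2) p m)
    (hp : 1 < p) (hr : 2 < r) (hq : 1 < q) (hpr : (r - 1) * p = r) (hqm : (q - 1) * m = q) :
    ∃ C : ℝ≥0∞, C ≠ ⊤ ∧ ∀ u₀ : SchwartzMap (EuclideanSpace ℝ (Fin d)) ℂ,
      (∫⁻ t, eLpNorm (fun x => schrodingerProp (fun y => u₀ y) t x) (ENNReal.ofReal r) volume ^ q) ^
        (1 / q) ≤ C * eLpNorm (fun x => u₀ x) 2 volume := by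
  have hd' : (0 : ℝ) < (d : ℝ) / 2 := by
    have : (1 : ℝ) ≤ d := by exact_mod_cast hd
    linarith
  obtain ⟨C, hC, hest⟩ := h.strichartz_trunc hd' hp hr hq hpr hqm
  refine ⟨C, hC, fun u₀ => ?_⟩
  rw [← enorm_toLp_schwartz]
  set v := (u₀.memLp 2 volume).toLp u₀
  set e := fun n : ℕ => heatVec d (Nat.one_div_pos_of_nat (α := ℝ) (n := n))
  have he : ∀ n, IsDispersive ((d : ℝ) / 2) (e n) := fun n => isDispersive_heatVec _
  have hm : ∀ n : ℕ, Measurable (trunc (e n) v (Metric.ball 0 n) (Metric.ball 0 n)) :=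
    fun n => measurable_trunc (he n) v measurableSet_ball measurableSet_ball
  have hr0 : 0 < r := by linarith
  refine lintegral_eLpNorm_le_of_tendsto (by linarith)
    (f := fun n t x => trunc (e n) v (Metric.ball 0 n) (Metric.ball 0 n) (t, x))
    (M := fun n => sliceNorm r (trunc (e n) v (Metric.ball 0 n) (Metric.ball 0 n)))
    (fun n => measurable_sliceNorm (hm n))
    (fun n t => ((hm n).comp measurable_prodMk_left).aestronglyMeasurable) (fun n t => ?_)
    (fun t ht x => ?_)
    (fun n => hest (e n) (he n) v _ _ measurableSet_ball measure_ball_lt_top.ne measurableSet_ball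
      measure_ball_lt_top.ne)
  · rw [eLpNorm_eq_lintegral_rpow_enorm_toReal (by simpa using hr0) ENNReal.ofReal_ne_top,
      ENNReal.toReal_ofReal hr0.le, sliceNorm]
  · refine tendsto_indicator_of_eventually_mem (x := (t, x))
      (g := fun n z => inner ℂ (e n z) v) ?_ (tendsto_inner_heatVec u₀ ht x)
    filter_upwards [eventually_mem_ball t, eventually_mem_ball x] with n h1 h2
    exact ⟨h1, h2⟩

/-- The one-dimensional case `(q, r) = (4, ∞)`. -/
lemma strichartz_sup : ∃ C : ℝ≥0∞, C ≠ ⊤ ∧ ∀ u₀ : SchwartzMap (EuclideanSpace ℝ (Fin 1)) ℂ,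
      (∫⁻ t, eLpNorm (fun x => schrodingerProp (fun y => u₀ y) t x) ∞ volume ^ (4 : ℝ)) ^
        (1 / 4 : ℝ) ≤ C * eLpNorm (fun x => u₀ x) 2 volume := by
  refine ⟨(2 * ENNReal.ofReal (2 / (2 / (4 / 3) - 1) + 2)) ^ (1 / 2 : ℝ),
    ENNReal.rpow_ne_top_of_nonneg (by norm_num)
      (ENNReal.mul_ne_top (by simp) ENNReal.ofReal_ne_top), fun u₀ => ?_⟩
  rw [← enorm_toLp_schwartz]
  set v := (u₀.memLp 2 volume).toLp u₀
  set e := fun n : ℕ => heatVec 1 (Nat.one_div_pos_of_nat (α := ℝ) (n := n))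
  have he : ∀ n, IsDispersive (1 / 2) (e n) := fun n => by
    have := isDispersive_heatVec (d := 1) (Nat.one_div_pos_of_nat (α := ℝ) (n := n))
    simpa using this
  have hsup : ∀ n : ℕ, _ := fun n => (he n).sup_estimate v
    (measurableSet_ball (x := (0 : ℝ)) (ε := n)) measure_ball_lt_top.ne
  choose M hMm hM hMint using hsup
  have hw : ∀ n, Continuous fun z => inner ℂ (e n z) v := fun n =>
    (he n).cont.inner continuous_const
  refine lintegral_eLpNorm_le_of_tendsto (by norm_num)
    (f := fun n t x => trunc (e n) v (Metric.ball 0 n) Set.univ (t, x))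
    (M := fun n => (Metric.ball 0 n).indicator (M n))
    (fun n => (hMm n).indicator measurableSet_ball)
    (fun n t => ((measurable_trunc (he n) v measurableSet_ball MeasurableSet.univ).comp
      measurable_prodMk_left).aestronglyMeasurable) (fun n t => ?_)
    (fun t ht x => ?_) (fun n => ?_)
  · by_cases ht : t ∈ Metric.ball (0 : ℝ) n
    · rw [Set.indicator_of_mem ht]
      refine le_trans (le_of_eq ?_) (hM n t)
      congr 1; ext x
      rw [trunc, Set.indicator_of_mem (Set.mk_mem_prod ht (Set.mem_univ x))]
    · have : (fun x => trunc (e n) v (Metric.ball 0 n) Set.univ (t, x)) = 0 := by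
        ext x
        rw [trunc, Set.indicator_of_notMem (fun h => ht h.1)]
        rfl
      rw [this]; simp
  · refine tendsto_indicator_of_eventually_mem (x := (t, x))
      (g := fun n z => inner ℂ (e n z) v) ?_ (tendsto_inner_heatVec u₀ ht x)
    filter_upwards [eventually_mem_ball t] with n h1
    exact ⟨h1, Set.mem_univ _⟩
  · refine le_trans (le_of_eq ?_) (hMint n)
    rw [← lintegral_indicator measurableSet_ball]
    congr 1; ext t
    by_cases ht : t ∈ Metric.ball (0 : ℝ) n
    · simp only [Set.indicator_of_mem ht]
    · simp only [Set.indicator_of_notMem ht]; norm_num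

end Strichartz

/-- Homogeneous Strichartz estimate for the free Schrödinger evolution with a
Schrödinger-admissible exponent pair `(q, r)`. -/
theorem strichartz_homogeneous (d : ℕ) (hd : 1 ≤ d) (q r : ℝ≥0∞)
    (hq2 : 2 ≤ q) (hr2 : 2 ≤ r)
    (hadm : 1 / q = ((d : ℝ≥0∞) / 2) * (1 / 2 - 1 / r))
    (hexc : ¬(q = 2 ∧ r = ∞ ∧ d = 2)) :
    ∃ C : ℝ, 0 < C ∧
      ∀ u₀ : SchwartzMap (EuclideanSpace ℝ (Fin d)) ℂ,
        mixedLpNorm q r (fun t x => schrodingerProp (fun y => u₀ y) t x)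
          ≤ ENNReal.ofReal C * eLpNorm (fun x => u₀ x) 2 volume := by
  have hd1 : (1 : ℝ) ≤ d := by exact_mod_cast hd
  -- A finite constant in `ℝ≥0∞` suffices; adding one makes it positive.
  suffices H : ∃ C : ℝ≥0∞, C ≠ ⊤ ∧ ∀ u₀ : SchwartzMap (EuclideanSpace ℝ (Fin d)) ℂ,
      mixedLpNorm q r (fun t x => schrodingerProp (fun y => u₀ y) t x)
        ≤ C * eLpNorm (fun x => u₀ x) 2 volume by
    obtain ⟨C, hC, h⟩ := H
    refine ⟨C.toReal + 1, by positivity, fun u₀ => (h u₀).trans ?_⟩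
    gcongr
    rw [ENNReal.ofReal_add (by positivity) (by norm_num), ENNReal.ofReal_toReal hC]
    exact le_self_add
  have hd0 : (d : ℝ≥0∞) / 2 ≠ 0 := by
    simp only [ne_eq, ENNReal.div_eq_zero_iff, ENNReal.ofNat_ne_top, or_false, Nat.cast_eq_zero]
    omega
  rcases eq_or_ne q ∞ with rfl | hqt
  · have hr : r = 2 := by
      refine le_antisymm ?_ hr2
      have h1 : (1 / 2 - 1 / r : ℝ≥0∞) = 0 := by
        rw [ENNReal.div_top] at hadm
        exact (mul_eq_zero.1 hadm.symm).resolve_left hd0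
      rw [tsub_eq_zero_iff_le, one_div, one_div, ENNReal.inv_le_inv] at h1
      exact h1
    subst hr
    refine ⟨2, by simp, fun u₀ => ?_⟩
    rw [mixedLpNorm, if_pos rfl]
    exact strichartz_energy u₀
  have hq0 : q ≠ 0 := by rintro rfl; simp at hq2
  have hqR : 2 ≤ q.toReal := by simpa using ENNReal.toReal_mono hqt hq2
  simp only [mixedLpNorm, if_neg hqt]
  have hadmR : 1 / q.toReal = (d : ℝ) / 2 * (1 / 2 - 1 / r.toReal) := by
    have h1 := congrArg ENNReal.toReal hadm
    have h2 : (1 / r : ℝ≥0∞) ≤ 1 / 2 := by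
      rw [one_div, one_div]; exact ENNReal.inv_le_inv.2 hr2
    rw [ENNReal.toReal_mul, ENNReal.toReal_sub_of_le h2 (by simp)] at h1
    simpa using h1
  rcases eq_or_ne r ∞ with rfl | hrt
  · -- The supremum in space occurs only in dimension one with `q = 4`.
    have hq4 : q.toReal * d = 4 := by
      simp only [ENNReal.toReal_top, div_zero, sub_zero] at hadmR
      field_simp at hadmR
      linarith
    have hd2 : d ≤ 2 := by
      by_contra hcon
      have : (3 : ℝ) ≤ d := by exact_mod_cast (by omega : 3 ≤ d)
      nlinarith
    have hd1' : d = 1 := by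
      rcases (by omega : d = 1 ∨ d = 2) with h | h
      · exact h
      · exfalso
        refine hexc ⟨?_, rfl, h⟩
        subst h
        rw [← ENNReal.ofReal_toReal hqt, show q.toReal = 2 by push_cast at hq4; linarith]
        simp
    subst hd1'
    have hq4' : q.toReal = 4 := by simpa using hq4
    rw [hq4']
    exact strichartz_sup
  have hrR : 2 ≤ r.toReal := by simpa using ENNReal.toReal_mono hrt hr2
  have hrlt : 2 < r.toReal := by
    refine lt_of_le_of_ne hrR fun h => ?_
    rw [← h, sub_self, mul_zero] at hadmR
    have : 0 < 1 / q.toReal := by positivity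
    linarith
  rw [← ENNReal.ofReal_toReal hrt]
  generalize r.toReal = ρ at *
  generalize q.toReal = κ at *
  -- The dual estimate is applied with the exponents `p`, `m` conjugate to `r`, `q`.
  have hp1 : 1 < ρ / (ρ - 1) := by rw [lt_div_iff₀ (by linarith)]; linarith
  have hp2 : ρ / (ρ - 1) < 2 := by rw [div_lt_iff₀ (by linarith)]; linarith
  have hpr : (ρ - 1) * (ρ / (ρ - 1)) = ρ := by
    have : ρ - 1 ≠ 0 := by linarith
    field_simp
  have hqm : (κ - 1) * (κ / (κ - 1)) = κ := by
    have : κ - 1 ≠ 0 := by linarith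
    field_simp
  have hip : 1 / (ρ / (ρ - 1)) = 1 - 1 / ρ := by
    have : ρ ≠ 0 := by linarith
    field_simp
  have him : 1 / (κ / (κ - 1)) = 1 - 1 / κ := by
    have : κ ≠ 0 := by linarith
    field_simp
  have hβ : (d : ℝ) / 2 * (1 / (ρ / (ρ - 1)) - 1 / 2) = 1 / κ := by
    rw [hip, hadmR]; ring
  rcases eq_or_lt_of_le hqR with h | hlt
  · subst h
    have hd3 : 3 ≤ d := by
      by_contra hcon
      have h1 : (d : ℝ) ≤ 2 := by exact_mod_cast (by omega : d ≤ 2)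
      have h2 : 0 < 1 / ρ := by positivity
      nlinarith
    have hd3R : (3 : ℝ) ≤ d := by exact_mod_cast hd3
    refine strichartz_finite (m := 2 / (2 - 1)) hd ?_ hp1 hrlt (by norm_num) hpr hqm
    rw [show (2 / (2 - 1) : ℝ) = 2 by norm_num]
    refine dualEstimate_endpoint (by linarith) hp1 hp2 ?_ hβ
    rw [hip]
    linarith
  · refine strichartz_finite hd ?_ hp1 hrlt (by linarith) hpr hqm
    refine dualEstimate_interior (by positivity) hp1 hp2 ?_ ?_ ?_
    · rw [lt_div_iff₀ (by linarith)]; linarith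
    · rw [div_lt_iff₀ (by linarith)]; linarith
    · rw [hβ, him]; ring
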